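/- arXiv:2303.11996 — 3 statements merged into one kernel-verified Lean document; each statement's English description precedes it below -/
import Mathlib

section
/- For every integer t ≥ 3 there exists a finite simple graph H that is 3-regular (cubic) and 2-connected, contains G_t as an induced subgraph in such a way that every edge of H joining a vertex of G_t to a vertex outside G_t is incident to v_1 or to v_2, and in which both u_1 and u_2 are Šoltés vertices of H. -/
open SimpleGraph Finset

/-- A `Fintype` instance for the vertex set of a vertex-deleted subgraph. -/
noncomputable instance instFintypeNe {V : Type*} [Fintype V] (v : V) :
    Fintype {u : V // u ≠ v} :=
  (Set.toFinite {u : V | u ≠ v}).fintype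

/-- The graph obtained from `G` by deleting the vertex `v` (an induced subgraph). -/
def deleteVertex {V : Type*} (G : SimpleGraph V) (v : V) :
    SimpleGraph {u : V // u ≠ v} :=
  G.induce {u : V | u ≠ v}

/-- The Wiener index of a finite simple graph: the sum of distances over all
unordered pairs of vertices. -/
noncomputable def wiener {V : Type*} [Fintype V] (G : SimpleGraph V) : ℕ :=
  (∑ u : V, ∑ v : V, G.dist u v) / 2

/-- `v` is a Šoltés vertex of `G` if `G - v` is connected and has the same Wiener index. -/
def IsSoltes {V : Type*} [Fintype V] (G : SimpleGraph V) (v : V) : Prop :=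
  (deleteVertex G v).Connected ∧ wiener (deleteVertex G v) = wiener G

/-- A graph is cubic (3-regular) if every vertex has exactly 3 neighbours. -/
def IsCubic {V : Type*} (G : SimpleGraph V) : Prop :=
  ∀ v : V, (G.neighborSet v).ncard = 3

/-- A finite graph is 2-connected if it is connected, has at least 3 vertices,
and stays connected after deleting any one vertex. -/
def TwoConnected {V : Type*} [Fintype V] (G : SimpleGraph V) : Prop :=
  G.Connected ∧ 3 ≤ Fintype.card V ∧ ∀ v : V, (deleteVertex G v).Connected

/-! ### The graph `G_t`

`G_t` has `8t + 8` vertices: `2t` diamonds (copies of `K₄ − e`) arranged in a ring,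
where each diamond `j` has vertices `A_j, B_j, C_j, D_j` (encoded as
`Sum.inl (j, 0), …, Sum.inl (j, 3)`), `A_j, B_j` being its two degree-2 vertices;
consecutive diamonds are joined by the edges `B_j A_{j+1}`, and the remaining
connecting edge (between diamond `2t-1` and diamond `0`) is subdivided by the two
adjacent vertices `z₁, z₂` (encoded `Sum.inr 0, Sum.inr 1`); there is a 4-cycle
`c₁ c₁ₐ c₂ c₂ₐ` (encoded `Sum.inr 2, Sum.inr 4, Sum.inr 3, Sum.inr 5`) whose opposite
vertices `c₁, c₂` are joined to `z₁, z₂` respectively, and pendant leaves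
`v₁, v₂` (encoded `Sum.inr 6, Sum.inr 7`) are attached to `c₁ₐ, c₂ₐ`. -/

/-- The vertex type of the graph `G_t`. -/
abbrev GtV (t : ℕ) : Type := (Fin (2 * t) × Fin 4) ⊕ Fin 8

/-- The edges inside one diamond `K₄ − e`: `A–C, A–D, B–C, B–D, C–D` where
`A, B, C, D` are encoded as `0, 1, 2, 3`. -/
def diamondRel (a b : Fin 4) : Prop :=
  ((a : ℕ) = 0 ∧ (b : ℕ) = 2) ∨ ((a : ℕ) = 0 ∧ (b : ℕ) = 3) ∨
  ((a : ℕ) = 1 ∧ (b : ℕ) = 2) ∨ ((a : ℕ) = 1 ∧ (b : ℕ) = 3) ∨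
  ((a : ℕ) = 2 ∧ (b : ℕ) = 3)

/-- The base edge relation of `G_t` (symmetrized by `SimpleGraph.fromRel`). -/
def gtRel (t : ℕ) : GtV t → GtV t → Prop
  | Sum.inl (j, a), Sum.inl (k, b) =>
      -- edges inside a diamond, and the connecting edges `B_j A_{j+1}`
      (j = k ∧ diamondRel a b) ∨ ((k : ℕ) = (j : ℕ) + 1 ∧ (a : ℕ) = 1 ∧ (b : ℕ) = 0)
  | Sum.inl (j, a), Sum.inr m =>
      -- the edge `B_{2t-1} z₁` (half of the subdivided connecting edge)
      (j : ℕ) = 2 * t - 1 ∧ (a : ℕ) = 1 ∧ (m : ℕ) = 0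
  | Sum.inr m, Sum.inl (j, a) =>
      -- the edge `z₂ A_0` (the other half of the subdivided connecting edge)
      (m : ℕ) = 1 ∧ (j : ℕ) = 0 ∧ (a : ℕ) = 0
  | Sum.inr m, Sum.inr m' =>
      ((m : ℕ) = 0 ∧ (m' : ℕ) = 1) ∨    -- z₁ z₂
      ((m : ℕ) = 0 ∧ (m' : ℕ) = 2) ∨    -- z₁ c₁
      ((m : ℕ) = 1 ∧ (m' : ℕ) = 3) ∨    -- z₂ c₂
      ((m : ℕ) = 2 ∧ (m' : ℕ) = 4) ∨    -- c₁ c₁ₐ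
      ((m : ℕ) = 4 ∧ (m' : ℕ) = 3) ∨    -- c₁ₐ c₂
      ((m : ℕ) = 3 ∧ (m' : ℕ) = 5) ∨    -- c₂ c₂ₐ
      ((m : ℕ) = 5 ∧ (m' : ℕ) = 2) ∨    -- c₂ₐ c₁
      ((m : ℕ) = 4 ∧ (m' : ℕ) = 6) ∨    -- c₁ₐ v₁
      ((m : ℕ) = 5 ∧ (m' : ℕ) = 7)      -- c₂ₐ v₂

/-- The graph `G_t` on `8t + 8` vertices. -/
def GtGraph (t : ℕ) : SimpleGraph (GtV t) := SimpleGraph.fromRel (gtRel t)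

/-- The leaf `v₁` of `G_t`. -/
def gtv1 (t : ℕ) : GtV t := Sum.inr 6

/-- The leaf `v₂` of `G_t`. -/
def gtv2 (t : ℕ) : GtV t := Sum.inr 7

/-- The vertex `u₁ = B_{t-1}` of `G_t`: an endpoint of the edge joining the `t`-th and
`(t+1)`-st diamond, counting from the subdivided edge. -/
def gtu1 (t : ℕ) (ht : 1 ≤ t) : GtV t := Sum.inl (⟨t - 1, by omega⟩, 1)

/-- The vertex `u₂ = A_t` of `G_t`: the other endpoint of the edge joining the `t`-th
and `(t+1)`-st diamond, counting from the subdivided edge. -/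
def gtu2 (t : ℕ) (ht : 1 ≤ t) : GtV t := Sum.inl (⟨t, by omega⟩, 0)


/-! ### Generic lemmas -/

theorem wh_dist_le {V W : Type*} {G : SimpleGraph V} {H : SimpleGraph W} (f : V → W)
    (hG : G.Connected)
    (hf : ∀ x y, G.Adj x y → f x = f y ∨ H.Adj (f x) (f y)) (x y : V) :
    H.dist (f x) (f y) ≤ G.dist x y := by
  obtain ⟨p, hp⟩ := hG.exists_walk_length_eq_dist x y
  rw [← hp]
  clear hp
  suffices h : ∃ q : H.Walk (f x) (f y), q.length ≤ p.length by
    obtain ⟨q, hq⟩ := h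
    exact (dist_le q).trans hq
  induction p with
  | nil => exact ⟨Walk.nil, le_refl _⟩
  | cons h p ih =>
    obtain ⟨q, hq⟩ := ih
    rcases hf _ _ h with e | e
    · rw [e]
      exact ⟨q, by simp; omega⟩
    · exact ⟨Walk.cons e q, by simp; omega⟩

theorem lip_le_dist {V : Type*} {G : SimpleGraph V} (hG : G.Connected) (F : V → ℕ)
    (hF : ∀ x y, G.Adj x y → F y ≤ F x + 1) (x y : V) : F y ≤ F x + G.dist x y := by
  obtain ⟨p, hp⟩ := hG.exists_walk_length_eq_dist x y
  rw [← hp]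
  clear hp
  induction p with
  | nil => simp
  | cons h p ih =>
    have := hF _ _ h
    simp only [Walk.length_cons]
    omega

theorem pos_dist_le {V : Type*} {G : SimpleGraph V} (S : V → Prop) (pos : V → ℕ) (b : ℕ)
    (hadj : ∀ x y, S x → S y → pos y = pos x + 1 → G.Adj x y)
    (hex : ∀ x, S x → pos x < b → ∃ y, S y ∧ pos y = pos x + 1) (n : ℕ) :
    ∀ x y, S x → S y → pos y = pos x + (n + 1) → pos y ≤ b →
      ∃ q : G.Walk x y, q.length = n + 1 := by
  induction n with
  | zero =>
    intro x y hx hy h _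
    exact ⟨Walk.cons (hadj x y hx hy h) Walk.nil, by simp⟩
  | succ n ih =>
    intro x y hx hy h hb
    obtain ⟨z, hz, hz'⟩ := hex x hx (by omega)
    obtain ⟨q, hq⟩ := ih z y hz hy (by omega) hb
    exact ⟨Walk.cons (hadj x z hx hz hz') q, by simp [hq]⟩

theorem dist_eq_descent {V : Type*} {G : SimpleGraph V} (hG : G.Connected) (u : V) (F : V → ℕ)
    (h0 : F u = 0) (hF : ∀ x y, G.Adj x y → F y ≤ F x + 1)
    (hd : ∀ x, x ≠ u → ∃ y, G.Adj x y ∧ F y + 1 = F x) (x : V) : G.dist u x = F x := by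
  apply le_antisymm
  · suffices h : ∀ n x, F x = n → ∃ q : G.Walk x u, q.length = n by
      obtain ⟨q, hq⟩ := h _ x rfl
      rw [dist_comm, ← hq]
      exact dist_le q
    intro n
    induction n with
    | zero =>
      intro x hx
      by_cases hxu : x = u
      · subst hxu
        exact ⟨Walk.nil, rfl⟩
      · obtain ⟨y, _, hy⟩ := hd x hxu
        omega
    | succ n ih =>
      intro x hx
      by_cases hxu : x = u
      · subst hxu
        omega
      · obtain ⟨y, hy, hy'⟩ := hd x hxu
        obtain ⟨q, hq⟩ := ih y (by omega)
        exact ⟨Walk.cons hy q, by simp [hq]⟩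
  · have := lip_le_dist hG F hF u x
    omega

theorem st_connected {V : Type*} {G : SimpleGraph V} (σ : V → ℕ) (s e : V) (hse : G.Adj s e)
    (N : ℕ) (hN : ∀ x, σ x ≤ N)
    (hlo : ∀ x, x ≠ s → ∃ y, G.Adj x y ∧ σ y < σ x)
    (hhi : ∀ x, x ≠ e → ∃ y, G.Adj x y ∧ σ x < σ y) (v : V) :
    (deleteVertex G v).Connected := by
  -- descend
  have down : ∀ n x, σ x = n → (hx : x ≠ v) → σ x ≤ σ v →
      ∃ hs : s ≠ v, (deleteVertex G v).Reachable ⟨x, hx⟩ ⟨s, hs⟩ := by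
    intro n
    induction n using Nat.strong_induction_on with
    | _ n ih =>
      intro x hxn hx hxv
      by_cases hxs : x = s
      · subst hxs
        exact ⟨hx, Reachable.refl _⟩
      · obtain ⟨y, hy, hyl⟩ := hlo x hxs
        have hyv : y ≠ v := by
          rintro rfl
          omega
        obtain ⟨hs, hr⟩ := ih (σ y) (by omega) y rfl hyv (by omega)
        refine ⟨hs, Reachable.trans (Adj.reachable ?_) hr⟩
        exact hy
  have up : ∀ n x, N - σ x = n → (hx : x ≠ v) → σ v ≤ σ x →
      ∃ hs : e ≠ v, (deleteVertex G v).Reachable ⟨x, hx⟩ ⟨e, hs⟩ := by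
    intro n
    induction n using Nat.strong_induction_on with
    | _ n ih =>
      intro x hxn hx hxv
      by_cases hxs : x = e
      · subst hxs
        exact ⟨hx, Reachable.refl _⟩
      · obtain ⟨y, hy, hyl⟩ := hhi x hxs
        have hyv : y ≠ v := by
          rintro rfl
          omega
        have := hN y
        obtain ⟨hs, hr⟩ := ih (N - σ y) (by omega) y rfl hyv (by omega)
        refine ⟨hs, Reachable.trans (Adj.reachable ?_) hr⟩
        exact hy
  have all : ∃ r, ∀ x, (deleteVertex G v).Reachable x r := by
    by_cases hs : s = v
    · have he : e ≠ v := by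
        rintro rfl
        exact hse.ne hs
      refine ⟨⟨e, he⟩, ?_⟩
      rintro ⟨x, hx⟩
      rcases le_total (σ x) (σ v) with h | h
      · obtain ⟨h1, _⟩ := down _ x rfl hx h
        exact absurd hs h1
      · exact (up _ x rfl hx h).2
    · refine ⟨⟨s, hs⟩, ?_⟩
      rintro ⟨x, hx⟩
      rcases le_total (σ x) (σ v) with h | h
      · exact (down _ x rfl hx h).2
      · obtain ⟨he, h1⟩ := up _ x rfl hx h
        refine h1.trans (Adj.reachable ?_)
        exact hse.symm
  obtain ⟨r, hr⟩ := all
  have : Nonempty {u : V // u ≠ v} := ⟨r⟩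
  exact ⟨fun x y => (hr x).trans (hr y).symm⟩

theorem st_connected' {V : Type*} {G : SimpleGraph V} (σ : V → ℕ) (s : V)
    (hlo : ∀ x, x ≠ s → ∃ y, G.Adj x y ∧ σ y < σ x) : G.Connected := by
  have down : ∀ n x, σ x = n → G.Reachable x s := by
    intro n
    induction n using Nat.strong_induction_on with
    | _ n ih =>
      intro x hxn
      by_cases hxs : x = s
      · subst hxs
        exact Reachable.refl _
      · obtain ⟨y, hy, hyl⟩ := hlo x hxs
        exact hy.reachable.trans (ih (σ y) (by omega) y rfl)
  have : Nonempty V := ⟨s⟩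
  exact ⟨fun x y => (down _ x rfl).trans (down _ y rfl).symm⟩

/-! ### Transfer along isomorphisms -/

theorem iso_dist {V W : Type*} {G : SimpleGraph V} {H : SimpleGraph W} (e : G ≃g H) (x y : V) :
    H.dist (e x) (e y) = G.dist x y := by
  rw [dist_eq_sInf, dist_eq_sInf]
  congr 1
  ext n
  constructor
  · rintro ⟨p, rfl⟩
    refine ⟨(p.map e.symm.toHom).copy (by simp) (by simp), by simp⟩
  · rintro ⟨p, rfl⟩
    exact ⟨p.map e.toHom, by simp⟩

theorem iso_wiener {V W : Type*} [Fintype V] [Fintype W] {G : SimpleGraph V}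
    {H : SimpleGraph W} (e : G ≃g H) : wiener H = wiener G := by
  unfold wiener
  congr 1
  rw [← e.toEquiv.sum_comp]
  refine Finset.sum_congr rfl fun x _ => ?_
  rw [← e.toEquiv.sum_comp]
  refine Finset.sum_congr rfl fun y _ => ?_
  exact iso_dist e x y

/-- The isomorphism induced on vertex-deleted subgraphs. -/
def isoDelete {V W : Type*} {G : SimpleGraph V} {H : SimpleGraph W} (e : G ≃g H) (v : V) :
    deleteVertex G v ≃g deleteVertex H (e v) where
  toEquiv := e.toEquiv.subtypeEquiv (fun a => by simp)
  map_rel_iff' := by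
    rintro ⟨a, ha⟩ ⟨b, hb⟩
    exact e.map_rel_iff

theorem iso_soltes {V W : Type*} [Fintype V] [Fintype W] {G : SimpleGraph V}
    {H : SimpleGraph W} (e : G ≃g H) {v : V} (h : IsSoltes G v) : IsSoltes H (e v) := by
  refine ⟨(isoDelete e v).connected_iff.1 h.1, ?_⟩
  rw [iso_wiener (isoDelete e v), iso_wiener e]
  exact h.2

theorem iso_twoConnected {V W : Type*} [Fintype V] [Fintype W] {G : SimpleGraph V}
    {H : SimpleGraph W} (e : G ≃g H) (h : TwoConnected G) : TwoConnected H := by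
  refine ⟨e.connected_iff.1 h.1, ?_, ?_⟩
  · rw [← Fintype.card_congr e.toEquiv]
    exact h.2.1
  · intro w
    obtain ⟨v, rfl⟩ := e.surjective w
    exact (isoDelete e v).connected_iff.1 (h.2.2 v)

theorem iso_cubic {V W : Type*} {G : SimpleGraph V}
    {H : SimpleGraph W} (e : G ≃g H) (h : IsCubic G) : IsCubic H := by
  intro w
  obtain ⟨v, rfl⟩ := e.surjective w
  rw [← h v, ← Set.ncard_image_of_injective _ e.injective]
  congr 1
  ext x
  obtain ⟨y, rfl⟩ := e.surjective x
  simp only [mem_neighborSet, Set.mem_image, EmbeddingLike.apply_eq_iff_eq, exists_eq_right]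
  exact e.map_rel_iff

/-- A combinatorial criterion for a vertex to be a Šoltés vertex. -/
theorem soltes_of_inc {V : Type*} [Fintype V] [DecidableEq V] (G : SimpleGraph V) (u : V)
    (hc : (deleteVertex G u).Connected) (inc : V → V → ℕ)
    (hinc : ∀ x y, (hx : x ≠ u) → (hy : y ≠ u) →
      (deleteVertex G u).dist ⟨x, hx⟩ ⟨y, hy⟩ = G.dist x y + inc x y)
    (hsum : (∑ x, ∑ y, if x ≠ u ∧ y ≠ u then inc x y else 0) = 2 * ∑ y, G.dist u y) :
    IsSoltes G u := by
  refine ⟨hc, ?_⟩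
  unfold wiener
  congr 1
  have key : ∀ f : V → ℕ, (∑ x : {x : V // x ≠ u}, f x.1) = ∑ x, if x ≠ u then f x else 0 := by
    intro f
    rw [← Finset.sum_filter]
    exact (Finset.sum_subtype (Finset.univ.filter (fun x => x ≠ u)) (by simp) f).symm
  have e1 : (∑ x : {x : V // x ≠ u}, ∑ y : {x : V // x ≠ u}, (deleteVertex G u).dist x y)
      = ∑ x : {x : V // x ≠ u}, ∑ y : {x : V // x ≠ u}, (G.dist x.1 y.1 + inc x.1 y.1) :=
    Finset.sum_congr rfl fun x _ => Finset.sum_congr rfl fun y _ => hinc x.1 y.1 x.2 y.2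
  rw [e1]
  have e2 : ∀ x : {x : V // x ≠ u}, (∑ y : {x : V // x ≠ u}, (G.dist x.1 y.1 + inc x.1 y.1))
      = ∑ y, if y ≠ u then (G.dist x.1 y + inc x.1 y) else 0 := fun x =>
    key (fun y => G.dist x.1 y + inc x.1 y)
  simp only [e2]
  rw [key (fun x => ∑ y, if y ≠ u then (G.dist x y + inc x y) else 0)]
  have e3 : (∑ x, if x ≠ u then (∑ y, if y ≠ u then (G.dist x y + inc x y) else 0) else 0)
      = (∑ x, ∑ y, if x ≠ u ∧ y ≠ u then G.dist x y else 0)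
        + ∑ x, ∑ y, if x ≠ u ∧ y ≠ u then inc x y else 0 := by
    rw [← Finset.sum_add_distrib]
    refine Finset.sum_congr rfl fun x _ => ?_
    rw [← Finset.sum_add_distrib]
    by_cases hx : x = u
    · simp [hx]
    · simp only [ne_eq, hx, not_false_eq_true, if_true, true_and]
      refine Finset.sum_congr rfl fun y _ => ?_
      split_ifs <;> simp
  rw [e3, hsum]
  have e4 : (∑ x, ∑ y, G.dist x y) = ∑ x, ∑ y, ((if x ≠ u ∧ y ≠ u then G.dist x y else 0)
      + (if x = u then G.dist u y else 0) + (if y = u then G.dist u x else 0)) := by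
    refine Finset.sum_congr rfl fun x _ => Finset.sum_congr rfl fun y _ => ?_
    by_cases hx : x = u <;> by_cases hy : y = u <;> simp [hx, hy, dist_comm]
  rw [e4]
  simp only [Finset.sum_add_distrib]
  have e5 : (∑ x : V, ∑ y : V, if x = u then G.dist u y else 0) = ∑ y, G.dist u y := by
    rw [Finset.sum_comm]
    simp
  have e6 : (∑ x : V, ∑ y : V, if y = u then G.dist u x else 0) = ∑ y, G.dist u y := by
    simp
  rw [e5, e6]
  ring

/-! ### Attaching a gadget -/

/-- A gadget on vertex set `X`, to be attached to `v₁` (`Sum.inl false`) and `v₂`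
(`Sum.inl true`), with the distance `δ` to `{v₁, v₂}` and a numbering `σ`. -/
structure Gadget (X : Type) where
  E : Bool ⊕ X → X → Prop
  symm : ∀ x y, E (Sum.inr x) y → E (Sum.inr y) x
  irrefl : ∀ x, ¬ E (Sum.inr x) x
  two : ∀ i, ∃ a b, a ≠ b ∧ ∀ y, E (Sum.inl i) y ↔ y = a ∨ y = b
  three : ∀ y, ∃ a b c, a ≠ b ∧ a ≠ c ∧ b ≠ c ∧ ∀ w, E w y ↔ w = a ∨ w = b ∨ w = c
  δ : X → ℕ
  δ_one : ∀ i y, E (Sum.inl i) y → δ y = 1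
  δ_lip : ∀ x y, E (Sum.inr x) y → δ y ≤ δ x + 1
  δ_desc : ∀ y, (δ y = 1 ∧ ∃ i, E (Sum.inl i) y) ∨ ∃ x, E (Sum.inr x) y ∧ δ x + 1 = δ y
  σ : X → ℕ
  N : ℕ
  σ_le : ∀ y, σ y ≤ N
  σ_lo : ∀ y, E (Sum.inl false) y ∨ ∃ x, E (Sum.inr x) y ∧ σ x < σ y
  σ_hi : ∀ y, E (Sum.inl true) y ∨ ∃ x, E (Sum.inr x) y ∧ σ y < σ x

/-- Adjacency of the graph obtained by attaching a gadget to `G_t`. -/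
def hAdj (t : ℕ) {X : Type} (g : Gadget X) : GtV t ⊕ X → GtV t ⊕ X → Prop
  | Sum.inl x, Sum.inl y => (GtGraph t).Adj x y
  | Sum.inl x, Sum.inr y => (x = gtv1 t ∧ g.E (Sum.inl false) y) ∨
      (x = gtv2 t ∧ g.E (Sum.inl true) y)
  | Sum.inr y, Sum.inl x => (x = gtv1 t ∧ g.E (Sum.inl false) y) ∨
      (x = gtv2 t ∧ g.E (Sum.inl true) y)
  | Sum.inr x, Sum.inr y => g.E (Sum.inr x) y

/-- The graph obtained by attaching a gadget to `G_t`. -/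
def hGraph (t : ℕ) {X : Type} (g : Gadget X) : SimpleGraph (GtV t ⊕ X) where
  Adj := hAdj t g
  symm := ⟨by
    rintro (x | x) (y | y) h
    · exact (GtGraph t).adj_symm h
    · exact h
    · exact h
    · exact g.symm x y h⟩
  loopless := ⟨by
    rintro (x | x) h
    · exact (GtGraph t).irrefl h
    · exact g.irrefl x h⟩

/-- Diamond vertices with a natural number index; out of range indices give `z₁`. -/
def rv (t : ℕ) (X : Type) (j : ℕ) (a : Fin 4) : GtV t ⊕ X :=
  if h : j < 2 * t then Sum.inl (Sum.inl (⟨j, h⟩, a)) else Sum.inl (Sum.inr 0)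

/-- The other vertices of `G_t`. -/
def ov (t : ℕ) (X : Type) (m : Fin 8) : GtV t ⊕ X := Sum.inl (Sum.inr m)

/-- Recursor for functions on the vertices. -/
def vrec {t : ℕ} {X : Type} {α : Type} (f : ℕ → Fin 4 → α) (o : Fin 8 → α) (k : X → α) :
    GtV t ⊕ X → α
  | Sum.inl (Sum.inl (j, a)) => f j a
  | Sum.inl (Sum.inr m) => o m
  | Sum.inr x => k x

section vrec
variable {t : ℕ} {X : Type} {α : Type} (f : ℕ → Fin 4 → α) (o : Fin 8 → α) (k : X → α)

theorem vrec_rv {j : ℕ} (hj : j < 2 * t) (a : Fin 4) : vrec f o k (rv t X j a) = f j a := by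
  simp [rv, hj, vrec]

theorem vrec_ov (m : Fin 8) : vrec f o k (ov t X m) = o m := rfl

theorem vrec_inr (x : X) : vrec (t := t) f o k (Sum.inr x) = k x := rfl
end vrec

/-- A list of the edges, each in one orientation. -/
inductive HE (t : ℕ) {X : Type} (g : Gadget X) : GtV t ⊕ X → GtV t ⊕ X → Prop
  | d02 (j : ℕ) (hj : j < 2 * t) : HE t g (rv t X j 0) (rv t X j 2)
  | d03 (j : ℕ) (hj : j < 2 * t) : HE t g (rv t X j 0) (rv t X j 3)
  | d12 (j : ℕ) (hj : j < 2 * t) : HE t g (rv t X j 1) (rv t X j 2)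
  | d13 (j : ℕ) (hj : j < 2 * t) : HE t g (rv t X j 1) (rv t X j 3)
  | d23 (j : ℕ) (hj : j < 2 * t) : HE t g (rv t X j 2) (rv t X j 3)
  | con (j : ℕ) (hj : j + 1 < 2 * t) : HE t g (rv t X j 1) (rv t X (j + 1) 0)
  | l1 (j : ℕ) (hj : j + 1 = 2 * t) : HE t g (rv t X j 1) (ov t X 0)
  | l2 (ht : 0 < t) : HE t g (ov t X 1) (rv t X 0 0)
  | o01 : HE t g (ov t X 0) (ov t X 1)
  | o02 : HE t g (ov t X 0) (ov t X 2)
  | o13 : HE t g (ov t X 1) (ov t X 3)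
  | o24 : HE t g (ov t X 2) (ov t X 4)
  | o43 : HE t g (ov t X 4) (ov t X 3)
  | o35 : HE t g (ov t X 3) (ov t X 5)
  | o52 : HE t g (ov t X 5) (ov t X 2)
  | o46 : HE t g (ov t X 4) (ov t X 6)
  | o57 : HE t g (ov t X 5) (ov t X 7)
  | g1 (x : X) (h : g.E (Sum.inl false) x) : HE t g (ov t X 6) (Sum.inr x)
  | g2 (x : X) (h : g.E (Sum.inl true) x) : HE t g (ov t X 7) (Sum.inr x)
  | gg (x y : X) (h : g.E (Sum.inr x) y) : HE t g (Sum.inr x) (Sum.inr y)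

theorem rel_he (t : ℕ) {X : Type} (g : Gadget X) (x y : GtV t) (h : gtRel t x y) :
    HE t g (Sum.inl x) (Sum.inl y) := by
  rcases x with ⟨j, a⟩ | m <;> rcases y with ⟨k, b⟩ | m'
  · obtain ⟨j, hj⟩ := j
    obtain ⟨k, hk⟩ := k
    have hr : ∀ a, (Sum.inl (Sum.inl (⟨j, hj⟩, a)) : GtV t ⊕ X) = rv t X j a := by
      intro a; simp [rv, hj]
    have hr' : ∀ a, (Sum.inl (Sum.inl (⟨k, hk⟩, a)) : GtV t ⊕ X) = rv t X k a := by
      intro a; simp [rv, hk]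
    rw [hr, hr']
    rcases h with ⟨h1, h2⟩ | ⟨h1, h2, h3⟩
    · simp only [Fin.mk.injEq] at h1
      subst h1
      rcases h2 with h2 | h2 | h2 | h2 | h2 <;> obtain ⟨h2, h3⟩ := h2
      · obtain rfl : a = 0 := Fin.ext h2
        obtain rfl : b = 2 := Fin.ext h3
        exact HE.d02 _ hj
      · obtain rfl : a = 0 := Fin.ext h2
        obtain rfl : b = 3 := Fin.ext h3
        exact HE.d03 _ hj
      · obtain rfl : a = 1 := Fin.ext h2
        obtain rfl : b = 2 := Fin.ext h3
        exact HE.d12 _ hj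
      · obtain rfl : a = 1 := Fin.ext h2
        obtain rfl : b = 3 := Fin.ext h3
        exact HE.d13 _ hj
      · obtain rfl : a = 2 := Fin.ext h2
        obtain rfl : b = 3 := Fin.ext h3
        exact HE.d23 _ hj
    · simp only at h1
      subst h1
      obtain rfl : a = 1 := Fin.ext h2
      obtain rfl : b = 0 := Fin.ext h3
      exact HE.con _ hk
  · obtain ⟨j, hj⟩ := j
    have hr : ∀ a, (Sum.inl (Sum.inl (⟨j, hj⟩, a)) : GtV t ⊕ X) = rv t X j a := by
      intro a; simp [rv, hj]
    obtain ⟨h1, h2, h3⟩ := h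
    simp only at h1
    obtain rfl : a = 1 := Fin.ext h2
    obtain rfl : m' = 0 := Fin.ext h3
    rw [hr]
    exact HE.l1 j (by omega)
  · obtain ⟨k, hk⟩ := k
    obtain ⟨h1, h2, h3⟩ := h
    simp only at h2
    subst h2
    obtain rfl : m = 1 := Fin.ext h1
    obtain rfl : b = 0 := Fin.ext h3
    have := HE.l2 (g := g) (t := t) (by omega)
    simpa [rv, hk, ov] using this
  · rcases h with h | h | h | h | h | h | h | h | h <;> obtain ⟨h1, h2⟩ := h
    · rw [show m = 0 from Fin.ext h1, show m' = 1 from Fin.ext h2]; exact HE.o01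
    · rw [show m = 0 from Fin.ext h1, show m' = 2 from Fin.ext h2]; exact HE.o02
    · rw [show m = 1 from Fin.ext h1, show m' = 3 from Fin.ext h2]; exact HE.o13
    · rw [show m = 2 from Fin.ext h1, show m' = 4 from Fin.ext h2]; exact HE.o24
    · rw [show m = 4 from Fin.ext h1, show m' = 3 from Fin.ext h2]; exact HE.o43
    · rw [show m = 3 from Fin.ext h1, show m' = 5 from Fin.ext h2]; exact HE.o35
    · rw [show m = 5 from Fin.ext h1, show m' = 2 from Fin.ext h2]; exact HE.o52
    · rw [show m = 4 from Fin.ext h1, show m' = 6 from Fin.ext h2]; exact HE.o46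
    · rw [show m = 5 from Fin.ext h1, show m' = 7 from Fin.ext h2]; exact HE.o57

theorem adj_he (t : ℕ) {X : Type} (g : Gadget X) (x y : GtV t ⊕ X)
    (h : (hGraph t g).Adj x y) : HE t g x y ∨ HE t g y x := by
  rcases x with x | x <;> rcases y with y | y
  · have h' : (GtGraph t).Adj x y := h
    rw [GtGraph, fromRel_adj] at h'
    exact h'.2.imp (rel_he t g x y) (rel_he t g y x)
  · rcases h with ⟨rfl, h⟩ | ⟨rfl, h⟩
    · exact Or.inl (HE.g1 y h)
    · exact Or.inl (HE.g2 y h)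
  · rcases h with ⟨rfl, h⟩ | ⟨rfl, h⟩
    · exact Or.inr (HE.g1 x h)
    · exact Or.inr (HE.g2 x h)
  · exact Or.inl (HE.gg x y h)

theorem he_adj (t : ℕ) {X : Type} (g : Gadget X) (x y : GtV t ⊕ X) (h : HE t g x y) :
    (hGraph t g).Adj x y := by
  have key : ∀ a b : GtV t, a ≠ b → gtRel t a b → (hGraph t g).Adj (Sum.inl a) (Sum.inl b) := by
    intro a b hab h
    change (GtGraph t).Adj a b
    rw [GtGraph, fromRel_adj]
    exact ⟨hab, Or.inl h⟩
  cases h with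
  | d02 j hj | d03 j hj | d12 j hj | d13 j hj | d23 j hj =>
    simp only [rv, hj, dif_pos]
    exact key _ _ (by simp) (Or.inl ⟨rfl, by simp [diamondRel]⟩)
  | con j hj =>
    simp only [rv, hj, show j < 2 * t by omega, dif_pos]
    exact key _ _ (by simp) (Or.inr ⟨rfl, rfl, rfl⟩)
  | l1 j hj =>
    simp only [rv, show j < 2 * t by omega, dif_pos]
    exact key _ _ (by simp) ⟨by simp only; omega, rfl, rfl⟩
  | l2 ht =>
    simp only [rv, show 0 < 2 * t by omega, dif_pos]
    exact key _ _ (by simp) ⟨rfl, rfl, rfl⟩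
  | o01 | o02 | o13 | o24 | o43 | o35 | o52 | o46 | o57 =>
    exact key _ _ (by simp) (by simp [gtRel])
  | g1 x h => exact Or.inl ⟨rfl, h⟩
  | g2 x h => exact Or.inr ⟨rfl, h⟩
  | gg x y h => exact h

theorem v_cases {t : ℕ} {X : Type} (P : GtV t ⊕ X → Prop)
    (h0 : ∀ j, j < 2 * t → P (rv t X j 0)) (h1 : ∀ j, j < 2 * t → P (rv t X j 1))
    (h2 : ∀ j, j < 2 * t → P (rv t X j 2)) (h3 : ∀ j, j < 2 * t → P (rv t X j 3))
    (ho : ∀ m, P (ov t X m)) (hx : ∀ x, P (Sum.inr x)) (v : GtV t ⊕ X) : P v := by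
  rcases v with (⟨⟨j, hj⟩, a⟩ | m) | x
  · have hr : (Sum.inl (Sum.inl (⟨j, hj⟩, a)) : GtV t ⊕ X) = rv t X j a := by
      simp [rv, hj]
    rw [hr]
    fin_cases a
    · exact h0 j hj
    · exact h1 j hj
    · exact h2 j hj
    · exact h3 j hj
  · exact ho m
  · exact hx x

theorem rv_inj {t : ℕ} {X : Type} {j k : ℕ} {a b : Fin 4} (hj : j < 2 * t) (hk : k < 2 * t) :
    rv t X j a = rv t X k b ↔ j = k ∧ a = b := by
  simp [rv, hj, hk]

theorem rv_ne_ov {t : ℕ} {X : Type} {j : ℕ} {a : Fin 4} {m : Fin 8} (hj : j < 2 * t) :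
    rv t X j a ≠ ov t X m := by
  simp [rv, hj, ov]

theorem rv_ne_inr {t : ℕ} {X : Type} {j : ℕ} {a : Fin 4} {x : X} :
    rv t X j a ≠ Sum.inr x := by
  unfold rv
  split_ifs <;> simp

theorem ov_ne_inr {t : ℕ} {X : Type} {m : Fin 8} {x : X} :
    ov t X m ≠ Sum.inr x := by
  simp [ov]

theorem ov_inj {t : ℕ} {X : Type} {m m' : Fin 8} : ov t X m = ov t X m' ↔ m = m' := by
  simp [ov]

section structural
variable (t : ℕ) {X : Type} (g : Gadget X)

theorem he_sym {P : GtV t ⊕ X → GtV t ⊕ X → Prop} (hs : ∀ x y, P x y → P y x)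
    (h : ∀ x y, HE t g x y → P x y) (x y : GtV t ⊕ X) (hxy : (hGraph t g).Adj x y) : P x y := by
  rcases adj_he t g x y hxy with h' | h'
  · exact h _ _ h'
  · exact hs _ _ (h _ _ h')

theorem adj_of {x y : GtV t ⊕ X} (h : HE t g x y ∨ HE t g y x) : (hGraph t g).Adj x y := by
  rcases h with h | h
  · exact he_adj t g _ _ h
  · exact (he_adj t g _ _ h).symm

/-- The swap of the two degree-two vertices of a diamond. -/
def sw4 (a : Fin 4) : Fin 4 := ![1, 0, 2, 3] a

/-- The swap induced by the reflection on the other vertices. -/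
def sw8 (a : Fin 8) : Fin 8 := ![1, 0, 3, 2, 4, 5, 6, 7] a

/-- The reflection of the graph. -/
def refl0 : GtV t ⊕ X → GtV t ⊕ X :=
  vrec (fun j a => rv t X (2 * t - 1 - j) (sw4 a)) (fun m => ov t X (sw8 m)) Sum.inr

theorem refl0_invol (v : GtV t ⊕ X) : refl0 t (refl0 t v) = v := by
  refine v_cases (P := fun v => refl0 t (refl0 t v) = v) ?_ ?_ ?_ ?_ ?_ ?_ v
  iterate 4
    intro j hj
    rw [refl0, vrec_rv _ _ _ hj, vrec_rv _ _ _ (by omega)]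
    rw [show 2 * t - 1 - (2 * t - 1 - j) = j by omega]
    rfl
  · intro m
    rw [refl0, vrec_ov, vrec_ov]
    fin_cases m <;> rfl
  · intro x
    rfl

theorem refl0_adj (x y : GtV t ⊕ X) (h : (hGraph t g).Adj x y) :
    (hGraph t g).Adj (refl0 t x) (refl0 t y) := by
  refine he_sym t g (P := fun x y => (hGraph t g).Adj (refl0 t x) (refl0 t y))
    (fun x y h => h.symm) ?_ x y h
  clear h x y
  intro x y h
  cases h with
  | d02 j hj =>
    rw [refl0, vrec_rv _ _ _ hj, vrec_rv _ _ _ hj]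
    exact adj_of t g (Or.inl (HE.d12 _ (by omega)))
  | d03 j hj =>
    rw [refl0, vrec_rv _ _ _ hj, vrec_rv _ _ _ hj]
    exact adj_of t g (Or.inl (HE.d13 _ (by omega)))
  | d12 j hj =>
    rw [refl0, vrec_rv _ _ _ hj, vrec_rv _ _ _ hj]
    exact adj_of t g (Or.inl (HE.d02 _ (by omega)))
  | d13 j hj =>
    rw [refl0, vrec_rv _ _ _ hj, vrec_rv _ _ _ hj]
    exact adj_of t g (Or.inl (HE.d03 _ (by omega)))
  | d23 j hj =>
    rw [refl0, vrec_rv _ _ _ hj, vrec_rv _ _ _ hj]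
    exact adj_of t g (Or.inl (HE.d23 _ (by omega)))
  | con j hj =>
    rw [refl0, vrec_rv _ _ _ (by omega), vrec_rv _ _ _ hj]
    rw [show 2 * t - 1 - j = (2 * t - 1 - (j + 1)) + 1 by omega]
    exact adj_of t g (Or.inr (HE.con _ (by omega)))
  | l1 j hj =>
    rw [refl0, vrec_rv _ _ _ (by omega), vrec_ov, show 2 * t - 1 - j = 0 by omega]
    exact adj_of t g (Or.inr (HE.l2 (by omega)))
  | l2 ht =>
    rw [refl0, vrec_rv _ _ _ (by omega), vrec_ov]
    exact adj_of t g (Or.inr (HE.l1 _ (by omega)))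
  | o01 => exact adj_of t g (Or.inr HE.o01)
  | o02 => exact adj_of t g (Or.inl HE.o13)
  | o13 => exact adj_of t g (Or.inl HE.o02)
  | o24 => exact adj_of t g (Or.inr HE.o43)
  | o43 => exact adj_of t g (Or.inr HE.o24)
  | o35 => exact adj_of t g (Or.inr HE.o52)
  | o52 => exact adj_of t g (Or.inr HE.o35)
  | o46 => exact adj_of t g (Or.inl HE.o46)
  | o57 => exact adj_of t g (Or.inl HE.o57)
  | g1 x h => exact adj_of t g (Or.inl (HE.g1 x h))
  | g2 x h => exact adj_of t g (Or.inl (HE.g2 x h))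
  | gg x y h => exact adj_of t g (Or.inl (HE.gg x y h))

/-- The reflection as an automorphism. -/
def reflIso : hGraph t g ≃g hGraph t g where
  toEquiv := ⟨refl0 t, refl0 t, refl0_invol t, refl0_invol t⟩
  map_rel_iff' := by
    intro a b
    constructor
    · intro h
      have := refl0_adj t g _ _ h
      simpa [refl0_invol] using this
    · exact refl0_adj t g a b

/-- Neighbourhoods. -/
def nbS : GtV t ⊕ X → Set (GtV t ⊕ X) :=
  vrec (fun j => ![{if j = 0 then ov t X 1 else rv t X (j - 1) 1, rv t X j 2, rv t X j 3},
      {rv t X j 2, rv t X j 3, if j + 1 = 2 * t then ov t X 0 else rv t X (j + 1) 0},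
      {rv t X j 0, rv t X j 1, rv t X j 3}, {rv t X j 0, rv t X j 1, rv t X j 2}])
    ![{rv t X (2 * t - 1) 1, ov t X 1, ov t X 2}, {rv t X 0 0, ov t X 0, ov t X 3},
      {ov t X 0, ov t X 4, ov t X 5}, {ov t X 1, ov t X 4, ov t X 5},
      {ov t X 2, ov t X 3, ov t X 6}, {ov t X 2, ov t X 3, ov t X 7},
      insert (ov t X 4) (Sum.inr '' {x | g.E (Sum.inl false) x}),
      insert (ov t X 5) (Sum.inr '' {x | g.E (Sum.inl true) x})]
    (fun x => {w | (w = ov t X 6 ∧ g.E (Sum.inl false) x) ∨ (w = ov t X 7 ∧ g.E (Sum.inl true) x)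
      ∨ ∃ y, w = Sum.inr y ∧ g.E (Sum.inr y) x})

theorem nbS_of_adj (x y : GtV t ⊕ X) (h : (hGraph t g).Adj x y) : y ∈ nbS t g x := by
  refine (he_sym t g (P := fun x y => y ∈ nbS t g x ∧ x ∈ nbS t g y)
    (fun x y h => h.symm) ?_ x y h).1
  clear h x y
  intro x y h
  cases h with
  | d02 j hj | d03 j hj | d12 j hj | d13 j hj | d23 j hj =>
    simp [nbS, vrec_rv _ _ _ hj]
  | con j hj =>
    simp [nbS, vrec_rv _ _ _ hj, vrec_rv _ _ _ (show j < 2 * t by omega),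
      show ¬ (j + 1 = 2 * t) by omega]
  | l1 j hj =>
    simp [nbS, vrec_rv _ _ _ (show j < 2 * t by omega), hj, vrec_ov,
      show 2 * t - 1 = j by omega]
  | l2 ht =>
    simp [nbS, vrec_rv _ _ _ (show 0 < 2 * t by omega), vrec_ov]
  | o01 | o02 | o13 | o24 | o43 | o35 | o52 | o46 | o57 => simp [nbS, vrec_ov]
  | g1 x h => simp [nbS, vrec_ov, vrec_inr, h]
  | g2 x h => simp [nbS, vrec_ov, vrec_inr, h]
  | gg x y h => simp [nbS, vrec_inr, h, g.symm x y h]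

theorem adj_of_nbS (ht : 0 < t) (x : GtV t ⊕ X) : ∀ y ∈ nbS t g x, (hGraph t g).Adj x y := by
  refine v_cases (P := fun x => ∀ y ∈ nbS t g x, (hGraph t g).Adj x y) ?_ ?_ ?_ ?_ ?_ ?_ x
  · intro j hj y hy
    simp only [nbS, vrec_rv _ _ _ hj] at hy
    rcases hy with rfl | rfl | rfl
    · split_ifs with h0
      · subst h0
        exact adj_of t g (Or.inr (HE.l2 ht))
      · have := HE.con (g := g) (j - 1) (show j - 1 + 1 < 2 * t by omega)
        rw [show j - 1 + 1 = j by omega] at this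
        exact adj_of t g (Or.inr this)
    · exact adj_of t g (Or.inl (HE.d02 _ hj))
    · exact adj_of t g (Or.inl (HE.d03 _ hj))
  · intro j hj y hy
    simp only [nbS, vrec_rv _ _ _ hj] at hy
    rcases hy with rfl | rfl | rfl
    · exact adj_of t g (Or.inl (HE.d12 _ hj))
    · exact adj_of t g (Or.inl (HE.d13 _ hj))
    · split_ifs with h0
      · exact adj_of t g (Or.inl (HE.l1 _ h0))
      · exact adj_of t g (Or.inl (HE.con _ (by omega)))
  · intro j hj y hy
    simp only [nbS, vrec_rv _ _ _ hj] at hy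
    rcases hy with rfl | rfl | rfl
    · exact adj_of t g (Or.inr (HE.d02 _ hj))
    · exact adj_of t g (Or.inr (HE.d12 _ hj))
    · exact adj_of t g (Or.inl (HE.d23 _ hj))
  · intro j hj y hy
    simp only [nbS, vrec_rv _ _ _ hj] at hy
    rcases hy with rfl | rfl | rfl
    · exact adj_of t g (Or.inr (HE.d03 _ hj))
    · exact adj_of t g (Or.inr (HE.d13 _ hj))
    · exact adj_of t g (Or.inr (HE.d23 _ hj))
  · intro m y hy
    simp only [nbS, vrec_ov] at hy
    fin_cases m
    · rcases hy with rfl | rfl | rfl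
      · exact adj_of t g (Or.inr (HE.l1 _ (by omega)))
      · exact adj_of t g (Or.inl HE.o01)
      · exact adj_of t g (Or.inl HE.o02)
    · rcases hy with rfl | rfl | rfl
      · exact adj_of t g (Or.inl (HE.l2 ht))
      · exact adj_of t g (Or.inr HE.o01)
      · exact adj_of t g (Or.inl HE.o13)
    · rcases hy with rfl | rfl | rfl
      · exact adj_of t g (Or.inr HE.o02)
      · exact adj_of t g (Or.inl HE.o24)
      · exact adj_of t g (Or.inr HE.o52)
    · rcases hy with rfl | rfl | rfl
      · exact adj_of t g (Or.inr HE.o13)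
      · exact adj_of t g (Or.inr HE.o43)
      · exact adj_of t g (Or.inl HE.o35)
    · rcases hy with rfl | rfl | rfl
      · exact adj_of t g (Or.inr HE.o24)
      · exact adj_of t g (Or.inl HE.o43)
      · exact adj_of t g (Or.inl HE.o46)
    · rcases hy with rfl | rfl | rfl
      · exact adj_of t g (Or.inl HE.o52)
      · exact adj_of t g (Or.inr HE.o35)
      · exact adj_of t g (Or.inl HE.o57)
    · rcases hy with rfl | ⟨x, hx, rfl⟩
      · exact adj_of t g (Or.inr HE.o46)
      · exact adj_of t g (Or.inl (HE.g1 x hx))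
    · rcases hy with rfl | ⟨x, hx, rfl⟩
      · exact adj_of t g (Or.inr HE.o57)
      · exact adj_of t g (Or.inl (HE.g2 x hx))
  · intro x y hy
    simp only [nbS, vrec_inr] at hy
    rcases hy with ⟨rfl, h⟩ | ⟨rfl, h⟩ | ⟨z, rfl, h⟩
    · exact adj_of t g (Or.inr (HE.g1 x h))
    · exact adj_of t g (Or.inr (HE.g2 x h))
    · exact adj_of t g (Or.inr (HE.gg z x h))

theorem ncard_three {α : Type*} {a b c : α} (h1 : a ≠ b) (h2 : a ≠ c) (h3 : b ≠ c) :
    ({a, b, c} : Set α).ncard = 3 := Set.ncard_eq_three.2 ⟨a, b, c, h1, h2, h3, rfl⟩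

theorem rv_ne1 {j k : ℕ} {a b : Fin 4} (hj : j < 2 * t) (hk : k < 2 * t) (h : j ≠ k) :
    rv t X j a ≠ rv t X k b := fun e => h ((rv_inj hj hk).1 e).1

theorem rv_ne2 {j k : ℕ} {a b : Fin 4} (hj : j < 2 * t) (hk : k < 2 * t) (h : a ≠ b) :
    rv t X j a ≠ rv t X k b := fun e => h ((rv_inj hj hk).1 e).2

theorem ov_ne {a b : Fin 8} (h : a ≠ b) : ov t X a ≠ ov t X b := fun e => h (ov_inj.1 e)

theorem hGraph_cubic (ht : 0 < t) : IsCubic (hGraph t g) := by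
  intro x
  have e : (hGraph t g).neighborSet x = nbS t g x := by
    ext y
    exact ⟨nbS_of_adj t g x y, adj_of_nbS t g ht x y⟩
  rw [e]
  clear e
  have hb : ∀ i m, (insert (ov t X m) (Sum.inr '' {x | g.E (Sum.inl i) x})).ncard = 3 := by
    intro i m
    obtain ⟨a, b, hab, h⟩ := g.two i
    have : (insert (ov t X m) (Sum.inr '' {x | g.E (Sum.inl i) x}))
        = {ov t X m, Sum.inr a, Sum.inr b} := by
      ext w
      simp only [h, Set.mem_insert_iff, Set.mem_image, Set.mem_ofPred_eq, Set.mem_singleton_iff]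
      constructor
      · rintro (h | ⟨x, (rfl | rfl), rfl⟩) <;> simp_all
      · rintro (h | rfl | rfl) <;> simp_all
    rw [this]
    exact ncard_three ov_ne_inr ov_ne_inr (by simpa using hab)
  refine v_cases (P := fun x => (nbS t g x).ncard = 3) ?_ ?_ ?_ ?_ ?_ ?_ x
  · intro j hj
    simp only [nbS, vrec_rv _ _ _ hj]
    refine ncard_three ?_ ?_ (rv_ne2 t hj hj (by decide))
    · split_ifs
      · exact (rv_ne_ov hj).symm
      · exact rv_ne1 t (by omega) hj (by omega)
    · split_ifs
      · exact (rv_ne_ov hj).symm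
      · exact rv_ne1 t (by omega) hj (by omega)
  · intro j hj
    simp only [nbS, vrec_rv _ _ _ hj]
    refine ncard_three (rv_ne2 t hj hj (by decide)) ?_ ?_
    · split_ifs
      · exact rv_ne_ov hj
      · exact rv_ne1 t hj (by omega) (by omega)
    · split_ifs
      · exact rv_ne_ov hj
      · exact rv_ne1 t hj (by omega) (by omega)
  · intro j hj
    simp only [nbS, vrec_rv _ _ _ hj]
    exact ncard_three (rv_ne2 t hj hj (by decide)) (rv_ne2 t hj hj (by decide))
      (rv_ne2 t hj hj (by decide))
  · intro j hj
    simp only [nbS, vrec_rv _ _ _ hj]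
    exact ncard_three (rv_ne2 t hj hj (by decide)) (rv_ne2 t hj hj (by decide))
      (rv_ne2 t hj hj (by decide))
  · intro m
    simp only [nbS, vrec_ov]
    fin_cases m
    · exact ncard_three (rv_ne_ov (by omega)) (rv_ne_ov (by omega)) (ov_ne t (by decide))
    · exact ncard_three (rv_ne_ov (by omega)) (rv_ne_ov (by omega)) (ov_ne t (by decide))
    · exact ncard_three (ov_ne t (by decide)) (ov_ne t (by decide)) (ov_ne t (by decide))
    · exact ncard_three (ov_ne t (by decide)) (ov_ne t (by decide)) (ov_ne t (by decide))
    · exact ncard_three (ov_ne t (by decide)) (ov_ne t (by decide)) (ov_ne t (by decide))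
    · exact ncard_three (ov_ne t (by decide)) (ov_ne t (by decide)) (ov_ne t (by decide))
    · exact hb _ _
    · exact hb _ _
  · intro x
    simp only [nbS, vrec_inr]
    obtain ⟨a, b, c, h1, h2, h3, h⟩ := g.three x
    have hinj : Function.Injective (Sum.elim (fun i : Bool => ov t X (if i then 7 else 6)) Sum.inr :
        Bool ⊕ X → GtV t ⊕ X) := by
      rintro (i | i) (k | k) hik
      · cases i <;> cases k <;> simp [ov] at hik ⊢
      · exact absurd hik ov_ne_inr
      · exact absurd hik.symm ov_ne_inr
      · simpa using hik
    rw [← ncard_three h1 h2 h3, ← Set.ncard_image_of_injective _ hinj]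
    congr 1
    ext w
    have hE : ∀ w, w ∈ ({a, b, c} : Set (Bool ⊕ X)) ↔ g.E w x := by
      intro w
      rw [h w]
      simp
    simp only [Set.mem_image, hE, Set.mem_ofPred_eq]
    constructor
    · rintro (⟨rfl, h⟩ | ⟨rfl, h⟩ | ⟨y, rfl, h⟩)
      · exact ⟨Sum.inl false, h, rfl⟩
      · exact ⟨Sum.inl true, h, rfl⟩
      · exact ⟨Sum.inr y, h, rfl⟩
    · rintro ⟨(i | y), h, rfl⟩
      · cases i
        · exact Or.inl ⟨rfl, h⟩
        · exact Or.inr (Or.inl ⟨rfl, h⟩)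
      · exact Or.inr (Or.inr ⟨y, rfl, h⟩)

/-- Offset of a vertex of a diamond. -/
def off (a : Fin 4) : ℕ := ![0, 2, 1, 1] a

/-- The numbering witnessing 2-connectivity. -/
def stn : GtV t ⊕ X → ℕ :=
  vrec (fun j a => 1 + 3 * j + off a)
    ![6 * t + g.N + 20, 0, g.N + 8, 1, 2, g.N + 6, 3, g.N + 5] (fun x => 4 + g.σ x)

theorem stn_lo (ht : 0 < t) (x : GtV t ⊕ X) :
    x ≠ ov t X 1 → ∃ y, (hGraph t g).Adj x y ∧ stn t g y < stn t g x := by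
  refine v_cases (P := fun x => x ≠ ov t X 1 → ∃ y, (hGraph t g).Adj x y ∧ stn t g y < stn t g x)
    ?_ ?_ ?_ ?_ ?_ ?_ x
  · intro j hj _
    rcases Nat.eq_zero_or_pos j with rfl | h0
    · exact ⟨_, adj_of t g (Or.inr (HE.l2 ht)), by simp [stn, vrec_rv _ _ _ hj, vrec_ov]⟩
    · obtain ⟨k, rfl⟩ : ∃ k, j = k + 1 := ⟨j - 1, by omega⟩
      refine ⟨_, adj_of t g (Or.inr (HE.con k hj)), ?_⟩
      simp [stn, vrec_rv _ _ _ hj, vrec_rv _ _ _ (show k < 2 * t by omega), off]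
      omega
  · intro j hj _
    exact ⟨_, adj_of t g (Or.inl (HE.d12 j hj)), by simp [stn, vrec_rv _ _ _ hj, off]⟩
  · intro j hj _
    exact ⟨_, adj_of t g (Or.inr (HE.d02 j hj)), by simp [stn, vrec_rv _ _ _ hj, off]⟩
  · intro j hj _
    exact ⟨_, adj_of t g (Or.inr (HE.d03 j hj)), by simp [stn, vrec_rv _ _ _ hj, off]⟩
  · intro m hm
    fin_cases m
    · exact ⟨_, adj_of t g (Or.inl HE.o01), by simp [stn, vrec_ov]⟩
    · exact absurd rfl hm
    · exact ⟨_, adj_of t g (Or.inl HE.o24), by simp [stn, vrec_ov]⟩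
    · exact ⟨_, adj_of t g (Or.inr HE.o13), by simp [stn, vrec_ov]⟩
    · exact ⟨_, adj_of t g (Or.inl HE.o43), by simp [stn, vrec_ov]⟩
    · exact ⟨_, adj_of t g (Or.inl HE.o57), by simp [stn, vrec_ov]⟩
    · exact ⟨_, adj_of t g (Or.inr HE.o46), by simp [stn, vrec_ov]⟩
    · obtain ⟨a, b, hab, h⟩ := g.two true
      refine ⟨_, adj_of t g (Or.inl (HE.g2 a ((h a).2 (Or.inl rfl)))), ?_⟩
      have := g.σ_le a
      simp [stn, vrec_ov, vrec_inr]
      omega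
  · intro x _
    rcases g.σ_lo x with h | ⟨y, hy, h⟩
    · exact ⟨_, adj_of t g (Or.inr (HE.g1 x h)), by simp [stn, vrec_ov, vrec_inr]; omega⟩
    · exact ⟨_, adj_of t g (Or.inr (HE.gg y x hy)), by simp [stn, vrec_inr]; omega⟩

theorem stn_hi (x : GtV t ⊕ X) :
    x ≠ ov t X 0 → ∃ y, (hGraph t g).Adj x y ∧ stn t g x < stn t g y := by
  refine v_cases (P := fun x => x ≠ ov t X 0 → ∃ y, (hGraph t g).Adj x y ∧ stn t g x < stn t g y)
    ?_ ?_ ?_ ?_ ?_ ?_ x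
  · intro j hj _
    exact ⟨_, adj_of t g (Or.inl (HE.d02 j hj)), by simp [stn, vrec_rv _ _ _ hj, off]⟩
  · intro j hj _
    by_cases h0 : j + 1 = 2 * t
    · refine ⟨_, adj_of t g (Or.inl (HE.l1 j h0)), ?_⟩
      simp [stn, vrec_rv _ _ _ hj, vrec_ov, off]
      omega
    · refine ⟨_, adj_of t g (Or.inl (HE.con j (by omega))), ?_⟩
      simp [stn, vrec_rv _ _ _ hj, vrec_rv _ _ _ (show j + 1 < 2 * t by omega), off]
      omega
  · intro j hj _
    exact ⟨_, adj_of t g (Or.inr (HE.d12 j hj)), by simp [stn, vrec_rv _ _ _ hj, off]⟩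
  · intro j hj _
    exact ⟨_, adj_of t g (Or.inr (HE.d13 j hj)), by simp [stn, vrec_rv _ _ _ hj, off]⟩
  · intro m hm
    fin_cases m
    · exact absurd rfl hm
    · exact ⟨_, adj_of t g (Or.inl HE.o13), by simp [stn, vrec_ov]⟩
    · exact ⟨_, adj_of t g (Or.inr HE.o02), by simp [stn, vrec_ov]; omega⟩
    · exact ⟨_, adj_of t g (Or.inr HE.o43), by simp [stn, vrec_ov]⟩
    · exact ⟨_, adj_of t g (Or.inl HE.o46), by simp [stn, vrec_ov]⟩
    · exact ⟨_, adj_of t g (Or.inl HE.o52), by simp [stn, vrec_ov]⟩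
    · obtain ⟨a, b, hab, h⟩ := g.two false
      refine ⟨_, adj_of t g (Or.inl (HE.g1 a ((h a).2 (Or.inl rfl)))), ?_⟩
      simp [stn, vrec_ov, vrec_inr]
      omega
    · exact ⟨_, adj_of t g (Or.inr HE.o57), by simp [stn, vrec_ov]⟩
  · intro x _
    rcases g.σ_hi x with h | ⟨y, hy, h⟩
    · have := g.σ_le x
      exact ⟨_, adj_of t g (Or.inr (HE.g2 x h)), by simp [stn, vrec_ov, vrec_inr]; omega⟩
    · exact ⟨_, adj_of t g (Or.inr (HE.gg y x hy)), by simp [stn, vrec_inr]; omega⟩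

theorem stn_le (x : GtV t ⊕ X) : stn t g x ≤ 6 * t + g.N + 20 := by
  refine v_cases (P := fun x => stn t g x ≤ 6 * t + g.N + 20) ?_ ?_ ?_ ?_ ?_ ?_ x
  iterate 4
    intro j hj
    simp [stn, vrec_rv _ _ _ hj, off]
    omega
  · intro m
    fin_cases m <;> simp [stn, vrec_ov] <;> omega
  · intro x
    have := g.σ_le x
    simp [stn, vrec_inr]
    omega

theorem hGraph_conn (ht : 0 < t) : (hGraph t g).Connected :=
  st_connected' (stn t g) (ov t X 1) (stn_lo t g ht)

theorem hGraph_del (ht : 0 < t) (v : GtV t ⊕ X) : (deleteVertex (hGraph t g) v).Connected :=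
  st_connected (stn t g) (ov t X 1) (ov t X 0) (adj_of t g (Or.inr HE.o01)) _ (stn_le t g)
    (stn_lo t g ht) (stn_hi t g) v

theorem hGraph_two [Fintype X] (ht : 0 < t) : TwoConnected (hGraph t g) := by
  refine ⟨hGraph_conn t g ht, ?_, hGraph_del t g ht⟩
  simp
  omega

end structural

section distances
variable (t : ℕ) {X : Type} (g : Gadget X)

/-- Distance to `u₁`. -/
def fdist : GtV t ⊕ X → ℕ :=
  vrec (fun j a => if j < t then (3 * t - 1) - (3 * j + off a) else (3 * j + off a) - (3 * t - 1))
    ![3 * t + 1, 3 * t, 3 * t + 2, 3 * t + 1, 3 * t + 2, 3 * t + 2, 3 * t + 3, 3 * t + 3]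
    (fun x => 3 * t + 3 + g.δ x)

theorem fdist_lip (ht : 2 ≤ t) (x y : GtV t ⊕ X) (h : (hGraph t g).Adj x y) :
    fdist t g y ≤ fdist t g x + 1 := by
  refine (he_sym t g (P := fun x y => fdist t g y ≤ fdist t g x + 1 ∧
    fdist t g x ≤ fdist t g y + 1) (fun x y h => h.symm) ?_ x y h).1
  clear h x y
  intro x y h
  cases h with
  | d02 j hj | d03 j hj | d12 j hj | d13 j hj | d23 j hj =>
    simp only [fdist, vrec_rv _ _ _ hj, off]
    split_ifs <;> simp <;> omega
  | con j hj =>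
    simp only [fdist, vrec_rv _ _ _ hj, vrec_rv _ _ _ (show j < 2 * t by omega), off]
    split_ifs <;> simp <;> omega
  | l1 j hj =>
    simp only [fdist, vrec_rv _ _ _ (show j < 2 * t by omega), vrec_ov, off]
    split_ifs <;> simp <;> omega
  | l2 ht =>
    simp only [fdist, vrec_rv _ _ _ (show 0 < 2 * t by omega), vrec_ov, off]
    split_ifs <;> simp <;> omega
  | o01 | o02 | o13 | o24 | o43 | o35 | o52 | o46 | o57 =>
    simp [fdist, vrec_ov]
    try omega
  | g1 x h =>
    have := g.δ_one _ x h
    simp [fdist, vrec_ov, vrec_inr]; omega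
  | g2 x h =>
    have := g.δ_one _ x h
    simp [fdist, vrec_ov, vrec_inr]; omega
  | gg x y h =>
    have := g.δ_lip x y h
    have := g.δ_lip y x (g.symm x y h)
    simp [fdist, vrec_inr]; omega

theorem fdist_desc (ht : 2 ≤ t) (x : GtV t ⊕ X) : x ≠ rv t X (t - 1) 1 →
    ∃ y, (hGraph t g).Adj x y ∧ fdist t g y + 1 = fdist t g x := by
  refine v_cases (P := fun x => x ≠ rv t X (t - 1) 1 →
    ∃ y, (hGraph t g).Adj x y ∧ fdist t g y + 1 = fdist t g x) ?_ ?_ ?_ ?_ ?_ ?_ x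
  · intro j hj _
    by_cases h : j < t
    · refine ⟨_, adj_of t g (Or.inl (HE.d02 j hj)), ?_⟩
      simp [fdist, vrec_rv _ _ _ hj, off, h]
      omega
    · obtain ⟨k, rfl⟩ : ∃ k, j = k + 1 := ⟨j - 1, by omega⟩
      refine ⟨_, adj_of t g (Or.inr (HE.con k hj)), ?_⟩
      simp only [fdist, vrec_rv _ _ _ hj, vrec_rv _ _ _ (show k < 2 * t by omega), off]
      split_ifs <;> simp <;> omega
  · intro j hj hne
    by_cases h : j < t
    · have hjt : j + 1 < t := by
        rcases Nat.lt_or_ge (j + 1) t with h' | h'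
        · exact h'
        · exact absurd (by rw [show j = t - 1 by omega]) hne
      refine ⟨_, adj_of t g (Or.inl (HE.con j (by omega))), ?_⟩
      simp only [fdist, vrec_rv _ _ _ hj, vrec_rv _ _ _ (show j + 1 < 2 * t by omega), off]
      split_ifs
      simp
      omega
    · refine ⟨_, adj_of t g (Or.inl (HE.d12 j hj)), ?_⟩
      simp [fdist, vrec_rv _ _ _ hj, off, h]
      omega
  · intro j hj _
    by_cases h : j < t
    · refine ⟨_, adj_of t g (Or.inr (HE.d12 j hj)), ?_⟩
      simp [fdist, vrec_rv _ _ _ hj, off, h]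
      omega
    · refine ⟨_, adj_of t g (Or.inr (HE.d02 j hj)), ?_⟩
      simp [fdist, vrec_rv _ _ _ hj, off, h]
      omega
  · intro j hj _
    by_cases h : j < t
    · refine ⟨_, adj_of t g (Or.inr (HE.d13 j hj)), ?_⟩
      simp [fdist, vrec_rv _ _ _ hj, off, h]
      omega
    · refine ⟨_, adj_of t g (Or.inr (HE.d03 j hj)), ?_⟩
      simp [fdist, vrec_rv _ _ _ hj, off, h]
      omega
  · intro m _
    fin_cases m
    · exact ⟨_, adj_of t g (Or.inl HE.o01), by simp [fdist, vrec_ov]⟩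
    · refine ⟨_, adj_of t g (Or.inl (HE.l2 (by omega))), ?_⟩
      simp [fdist, vrec_ov, vrec_rv _ _ _ (show 0 < 2 * t by omega), off, show 0 < t by omega]
      omega
    · exact ⟨_, adj_of t g (Or.inr HE.o02), by simp [fdist, vrec_ov]⟩
    · exact ⟨_, adj_of t g (Or.inr HE.o13), by simp [fdist, vrec_ov]⟩
    · exact ⟨_, adj_of t g (Or.inl HE.o43), by simp [fdist, vrec_ov]⟩
    · exact ⟨_, adj_of t g (Or.inr HE.o35), by simp [fdist, vrec_ov]⟩
    · exact ⟨_, adj_of t g (Or.inr HE.o46), by simp [fdist, vrec_ov]⟩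
    · exact ⟨_, adj_of t g (Or.inr HE.o57), by simp [fdist, vrec_ov]⟩
  · intro x _
    rcases g.δ_desc x with ⟨h1, i, h⟩ | ⟨y, h, h'⟩
    · cases i
      · exact ⟨_, adj_of t g (Or.inr (HE.g1 x h)), by simp [fdist, vrec_ov, vrec_inr, h1]⟩
      · exact ⟨_, adj_of t g (Or.inr (HE.g2 x h)), by simp [fdist, vrec_ov, vrec_inr, h1]⟩
    · exact ⟨_, adj_of t g (Or.inr (HE.gg y x h)), by simp [fdist, vrec_inr]; omega⟩

theorem dist_u (ht : 2 ≤ t) (x : GtV t ⊕ X) :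
    (hGraph t g).dist (rv t X (t - 1) 1) x = fdist t g x := by
  refine dist_eq_descent (hGraph_conn t g (by omega)) _ _ ?_ (fdist_lip t g ht)
    (fdist_desc t g ht) x
  simp only [fdist, vrec_rv _ _ _ (show t - 1 < 2 * t by omega), off]
  split_ifs <;> simp <;> omega

/-- The folding of the right half of the ring onto the left half. -/
def foldL : GtV t ⊕ X → GtV t ⊕ X :=
  vrec (fun j a => if j < t then (if j = t - 1 ∧ a = 1 then rv t X (t - 1) 0 else rv t X j a)
      else if j + 1 < 2 * t then rv t X (2 * t - 2 - j) (sw4 a) else ov t X 1)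
    (fun m => ov t X m) Sum.inr

/-- The folding of the left half of the ring onto the right half. -/
def foldR : GtV t ⊕ X → GtV t ⊕ X :=
  vrec (fun j a => if j < t then ![if j = 0 then ov t X 0 else rv t X (2 * t - j) 0,
      rv t X (2 * t - 1 - j) 2, rv t X (2 * t - 1 - j) 1, rv t X (2 * t - 1 - j) 1] a
      else rv t X j a)
    (fun m => ov t X m) Sum.inr

theorem foldL_ne (ht : 2 ≤ t) (x : GtV t ⊕ X) : foldL t x ≠ rv t X (t - 1) 1 := by
  refine v_cases (P := fun x => foldL t x ≠ rv t X (t - 1) 1) ?_ ?_ ?_ ?_ ?_ ?_ x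
  iterate 4
    · intro j hj
      simp only [foldL, vrec_rv _ _ _ hj]
      split_ifs with h1 h2 h3
      all_goals first
        | exact (rv_ne_ov (by omega)).symm
        | exact rv_ne2 t (by omega) (by omega) (by decide)
        | exact rv_ne1 t (by omega) (by omega) (by omega)
        | exact rv_ne1 t (by omega) (by omega) (fun h => h2 ⟨h, trivial⟩)
  · intro m
    exact (rv_ne_ov (by omega)).symm
  · intro x
    exact rv_ne_inr.symm

theorem foldR_ne (ht : 2 ≤ t) (x : GtV t ⊕ X) : foldR t x ≠ rv t X (t - 1) 1 := by
  refine v_cases (P := fun x => foldR t x ≠ rv t X (t - 1) 1) ?_ ?_ ?_ ?_ ?_ ?_ x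
  · intro j hj
    simp only [foldR, vrec_rv _ _ _ hj]
    split_ifs with h1 h2
    · exact (rv_ne_ov (by omega)).symm
    · exact rv_ne1 t (by omega) (by omega) (by omega)
    · exact rv_ne1 t (by omega) (by omega) (by omega)
  iterate 3
    · intro j hj
      simp only [foldR, vrec_rv _ _ _ hj]
      split_ifs
      all_goals exact rv_ne1 t (by omega) (by omega) (by omega)
  · intro m
    exact (rv_ne_ov (by omega)).symm
  · intro x
    exact rv_ne_inr.symm

theorem foldL_adj (ht : 2 ≤ t) (x y : GtV t ⊕ X) (h : (hGraph t g).Adj x y) :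
    foldL t x = foldL t y ∨ (hGraph t g).Adj (foldL t x) (foldL t y) := by
  refine (he_sym t g (P := fun x y => foldL t x = foldL t y ∨
    (hGraph t g).Adj (foldL t x) (foldL t y)) (fun x y h => h.imp Eq.symm Adj.symm) ?_ x y h)
  clear h x y
  intro x y h
  have n0 : ¬ ((0 : Fin 4) = 1) := by decide
  have n2 : ¬ ((2 : Fin 4) = 1) := by decide
  have n3 : ¬ ((3 : Fin 4) = 1) := by decide
  cases h with
  | d02 j hj =>
    simp only [foldL, vrec_rv _ _ _ hj, n0, n2, and_false, if_false]
    split_ifs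
    · exact Or.inr (adj_of t g (Or.inl (HE.d02 j hj)))
    · exact Or.inr (adj_of t g (Or.inl (HE.d12 _ (by omega))))
    · exact Or.inl rfl
  | d03 j hj =>
    simp only [foldL, vrec_rv _ _ _ hj, n0, n3, and_false, if_false]
    split_ifs
    · exact Or.inr (adj_of t g (Or.inl (HE.d03 j hj)))
    · exact Or.inr (adj_of t g (Or.inl (HE.d13 _ (by omega))))
    · exact Or.inl rfl
  | d12 j hj =>
    simp only [foldL, vrec_rv _ _ _ hj, n2, and_false, if_false, and_true]
    split_ifs with h1 h2
    · subst h2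
      exact Or.inr (adj_of t g (Or.inl (HE.d02 _ hj)))
    · exact Or.inr (adj_of t g (Or.inl (HE.d12 j hj)))
    · exact Or.inr (adj_of t g (Or.inl (HE.d02 _ (by omega))))
    · exact Or.inl rfl
  | d13 j hj =>
    simp only [foldL, vrec_rv _ _ _ hj, n3, and_false, if_false, and_true]
    split_ifs with h1 h2
    · subst h2
      exact Or.inr (adj_of t g (Or.inl (HE.d03 _ hj)))
    · exact Or.inr (adj_of t g (Or.inl (HE.d13 j hj)))
    · exact Or.inr (adj_of t g (Or.inl (HE.d03 _ (by omega))))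
    · exact Or.inl rfl
  | d23 j hj =>
    simp only [foldL, vrec_rv _ _ _ hj, n2, n3, and_false, if_false]
    split_ifs
    · exact Or.inr (adj_of t g (Or.inl (HE.d23 j hj)))
    · exact Or.inr (adj_of t g (Or.inl (HE.d23 _ (by omega))))
    · exact Or.inl rfl
  | con j hj =>
    simp only [foldL, vrec_rv _ _ _ hj, vrec_rv _ _ _ (show j < 2 * t by omega), n0, and_false,
      if_false, and_true]
    split_ifs with h1 h2 h3 h4 h5 h6 h7 <;> try omega
    · have := HE.con (g := g) (t - 2) (show t - 2 + 1 < 2 * t by omega)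
      rw [show t - 2 + 1 = t - 1 by omega] at this
      rw [show 2 * t - 2 - (j + 1) = t - 2 by omega]
      exact Or.inr (adj_of t g (Or.inr this))
    · exact Or.inr (adj_of t g (Or.inl (HE.con j hj)))
    · have := HE.con (g := g) (2 * t - 2 - (j + 1))
        (show 2 * t - 2 - (j + 1) + 1 < 2 * t by omega)
      rw [show 2 * t - 2 - (j + 1) + 1 = 2 * t - 2 - j by omega] at this
      exact Or.inr (adj_of t g (Or.inr this))
    · rw [show 2 * t - 2 - j = 0 by omega]
      exact Or.inr (adj_of t g (Or.inr (HE.l2 (by omega))))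
  | l1 j hj =>
    simp only [foldL, vrec_rv _ _ _ (show j < 2 * t by omega), vrec_ov]
    rw [if_neg (by omega), if_neg (by omega)]
    exact Or.inr (adj_of t g (Or.inr HE.o01))
  | l2 ht =>
    simp only [foldL, vrec_rv _ _ _ (show 0 < 2 * t by omega), vrec_ov, n0, and_false, if_false]
    rw [if_pos (by omega)]
    exact Or.inr (adj_of t g (Or.inl (HE.l2 (by omega))))
  | o01 => exact Or.inr (adj_of t g (Or.inl HE.o01))
  | o02 => exact Or.inr (adj_of t g (Or.inl HE.o02))
  | o13 => exact Or.inr (adj_of t g (Or.inl HE.o13))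
  | o24 => exact Or.inr (adj_of t g (Or.inl HE.o24))
  | o43 => exact Or.inr (adj_of t g (Or.inl HE.o43))
  | o35 => exact Or.inr (adj_of t g (Or.inl HE.o35))
  | o52 => exact Or.inr (adj_of t g (Or.inl HE.o52))
  | o46 => exact Or.inr (adj_of t g (Or.inl HE.o46))
  | o57 => exact Or.inr (adj_of t g (Or.inl HE.o57))
  | g1 x h => exact Or.inr (adj_of t g (Or.inl (HE.g1 x h)))
  | g2 x h => exact Or.inr (adj_of t g (Or.inl (HE.g2 x h)))
  | gg x y h => exact Or.inr (adj_of t g (Or.inl (HE.gg x y h)))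

theorem foldR_adj (ht : 2 ≤ t) (x y : GtV t ⊕ X) (h : (hGraph t g).Adj x y) :
    foldR t x = foldR t y ∨ (hGraph t g).Adj (foldR t x) (foldR t y) := by
  refine (he_sym t g (P := fun x y => foldR t x = foldR t y ∨
    (hGraph t g).Adj (foldR t x) (foldR t y)) (fun x y h => h.imp Eq.symm Adj.symm) ?_ x y h)
  clear h x y
  intro x y h
  have hA : ∀ j, j < t → (hGraph t g).Adj (if j = 0 then ov t X 0 else rv t X (2 * t - j) 0)
      (rv t X (2 * t - 1 - j) 1) := by
    intro j hj
    split_ifs with h0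
    · exact adj_of t g (Or.inr (HE.l1 _ (by omega)))
    · have := HE.con (g := g) (2 * t - 1 - j) (show 2 * t - 1 - j + 1 < 2 * t by omega)
      rw [show 2 * t - 1 - j + 1 = 2 * t - j by omega] at this
      exact adj_of t g (Or.inr this)
  cases h with
  | d02 j hj =>
    simp only [foldR, vrec_rv _ _ _ hj]
    by_cases h : j < t
    · simp only [h, if_true]
      exact Or.inr (hA j h)
    · simp only [h, if_false]
      exact Or.inr (adj_of t g (Or.inl (HE.d02 j hj)))
  | d03 j hj =>
    simp only [foldR, vrec_rv _ _ _ hj]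
    by_cases h : j < t
    · simp only [h, if_true]
      exact Or.inr (hA j h)
    · simp only [h, if_false]
      exact Or.inr (adj_of t g (Or.inl (HE.d03 j hj)))
  | d12 j hj =>
    simp only [foldR, vrec_rv _ _ _ hj]
    by_cases h : j < t
    · simp only [h, if_true]
      exact Or.inr (adj_of t g (Or.inr (HE.d12 _ (by omega))))
    · simp only [h, if_false]
      exact Or.inr (adj_of t g (Or.inl (HE.d12 j hj)))
  | d13 j hj =>
    simp only [foldR, vrec_rv _ _ _ hj]
    by_cases h : j < t
    · simp only [h, if_true]
      exact Or.inr (adj_of t g (Or.inr (HE.d12 _ (by omega))))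
    · simp only [h, if_false]
      exact Or.inr (adj_of t g (Or.inl (HE.d13 j hj)))
  | d23 j hj =>
    simp only [foldR, vrec_rv _ _ _ hj]
    by_cases h : j < t
    · simp only [h, if_true]
      exact Or.inl rfl
    · simp only [h, if_false]
      exact Or.inr (adj_of t g (Or.inl (HE.d23 j hj)))
  | con j hj =>
    simp only [foldR, vrec_rv _ _ _ hj, vrec_rv _ _ _ (show j < 2 * t by omega)]
    by_cases h : j < t
    · by_cases h' : j + 1 < t
      · simp only [h, h', if_true]
        refine Or.inr (adj_of t g (Or.inr ?_))
        simp only [Matrix.cons_val_zero, Matrix.cons_val_one, Nat.add_eq_zero_iff, one_ne_zero,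
          and_false, if_false]
        rw [show 2 * t - (j + 1) = 2 * t - 1 - j by omega]
        exact HE.d02 _ (by omega)
      · simp only [h, h', if_true, if_false]
        refine Or.inr (adj_of t g (Or.inr ?_))
        simp only [Matrix.cons_val_one, Matrix.cons_val_zero]
        rw [show 2 * t - 1 - j = j + 1 by omega]
        exact HE.d02 _ (by omega)
    · simp only [h, show ¬ (j + 1 < t) by omega, if_false]
      exact Or.inr (adj_of t g (Or.inl (HE.con j hj)))
  | l1 j hj =>
    simp only [foldR, vrec_rv _ _ _ (show j < 2 * t by omega), vrec_ov]
    rw [if_neg (by omega)]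
    exact Or.inr (adj_of t g (Or.inl (HE.l1 _ hj)))
  | l2 ht =>
    simp only [foldR, vrec_rv _ _ _ (show 0 < 2 * t by omega), vrec_ov]
    rw [if_pos (by omega)]
    exact Or.inr (adj_of t g (Or.inr HE.o01))
  | o01 => exact Or.inr (adj_of t g (Or.inl HE.o01))
  | o02 => exact Or.inr (adj_of t g (Or.inl HE.o02))
  | o13 => exact Or.inr (adj_of t g (Or.inl HE.o13))
  | o24 => exact Or.inr (adj_of t g (Or.inl HE.o24))
  | o43 => exact Or.inr (adj_of t g (Or.inl HE.o43))
  | o35 => exact Or.inr (adj_of t g (Or.inl HE.o35))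
  | o52 => exact Or.inr (adj_of t g (Or.inl HE.o52))
  | o46 => exact Or.inr (adj_of t g (Or.inl HE.o46))
  | o57 => exact Or.inr (adj_of t g (Or.inl HE.o57))
  | g1 x h => exact Or.inr (adj_of t g (Or.inl (HE.g1 x h)))
  | g2 x h => exact Or.inr (adj_of t g (Or.inl (HE.g2 x h)))
  | gg x y h => exact Or.inr (adj_of t g (Or.inl (HE.gg x y h)))

theorem dist_le_del (ht : 0 < t) {u : GtV t ⊕ X} (x y : {v // v ≠ u}) :
    (hGraph t g).dist x.1 y.1 ≤ (deleteVertex (hGraph t g) u).dist x y :=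
  wh_dist_le (G := deleteVertex (hGraph t g) u) Subtype.val (hGraph_del t g ht u)
    (fun _ _ h => Or.inr h) x y

theorem dist_del_fold (ht : 0 < t) {u : GtV t ⊕ X} (φ : GtV t ⊕ X → GtV t ⊕ X)
    (h1 : ∀ x, φ x ≠ u)
    (h2 : ∀ x y, (hGraph t g).Adj x y → φ x = φ y ∨ (hGraph t g).Adj (φ x) (φ y))
    (x y : {v // v ≠ u}) (hx : φ x.1 = x.1) (hy : φ y.1 = y.1) :
    (deleteVertex (hGraph t g) u).dist x y = (hGraph t g).dist x.1 y.1 := by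
  apply le_antisymm _ (dist_le_del t g ht x y)
  have := wh_dist_le (G := hGraph t g) (H := deleteVertex (hGraph t g) u)
    (fun v => ⟨φ v, h1 v⟩) (hGraph_conn t g ht) (fun x y h => by
      rcases h2 x y h with h | h
      · exact Or.inl (Subtype.ext h)
      · exact Or.inr h) x.1 y.1
  rwa [show (⟨φ x.1, h1 x.1⟩ : {v // v ≠ u}) = x from Subtype.ext hx,
    show (⟨φ y.1, h1 y.1⟩ : {v // v ≠ u}) = y from Subtype.ext hy] at this

end distances

section cross
variable (t : ℕ) {X : Type} (g : Gadget X)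

/-- Position along the ring (with everything else folded onto `z₁`, `z₂`). -/
def rpos : GtV t ⊕ X → ℕ :=
  vrec (fun j a => 3 * j + off a)
    ![6 * t, 6 * t + 1, 6 * t, 6 * t + 1, 6 * t, 6 * t, 6 * t, 6 * t] (fun _ => 6 * t)

/-- The vertices of the ring, including `z₁`, `z₂`. -/
def spn : GtV t ⊕ X → Prop :=
  vrec (fun _ _ => True) (fun m => m = 0 ∨ m = 1) (fun _ => False)

theorem rpos_edge (ht : 2 ≤ t) (x y : GtV t ⊕ X) (h : (hGraph t g).Adj x y) :
    (rpos t y ≤ rpos t x + 1 ∧ rpos t x ≤ rpos t y + 1) ∨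
      (rpos t x = 0 ∧ rpos t y = 6 * t + 1) ∨ (rpos t y = 0 ∧ rpos t x = 6 * t + 1) := by
  refine (he_sym t g (P := fun x y => (rpos t y ≤ rpos t x + 1 ∧ rpos t x ≤ rpos t y + 1) ∨
      (rpos t x = 0 ∧ rpos t y = 6 * t + 1) ∨ (rpos t y = 0 ∧ rpos t x = 6 * t + 1))
      (fun x y h => by omega) ?_ x y h)
  clear h x y
  intro x y h
  cases h with
  | d02 j hj | d03 j hj | d12 j hj | d13 j hj | d23 j hj =>
    simp [rpos, vrec_rv _ _ _ hj, off]
    try omega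
  | con j hj =>
    simp [rpos, vrec_rv _ _ _ hj, vrec_rv _ _ _ (show j < 2 * t by omega), off]
    omega
  | l1 j hj =>
    simp [rpos, vrec_rv _ _ _ (show j < 2 * t by omega), vrec_ov, off]
    omega
  | l2 ht =>
    simp [rpos, vrec_rv _ _ _ (show 0 < 2 * t by omega), vrec_ov, off]
  | o01 | o02 | o13 | o24 | o43 | o35 | o52 | o46 | o57 =>
    simp [rpos, vrec_ov]
    try omega
  | g1 x h => simp [rpos, vrec_ov, vrec_inr]
  | g2 x h => simp [rpos, vrec_ov, vrec_inr]
  | gg x y h => simp [rpos, vrec_inr]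

theorem rpos_le (x : GtV t ⊕ X) : rpos t x ≤ 6 * t + 1 := by
  refine v_cases (P := fun x => rpos t x ≤ 6 * t + 1) ?_ ?_ ?_ ?_ ?_ ?_ x
  iterate 4
    · intro j hj
      simp [rpos, vrec_rv _ _ _ hj, off]
      omega
  · intro m
    fin_cases m <;> simp [rpos, vrec_ov]
  · intro x
    simp [rpos, vrec_inr]

theorem rpos_u (ht : 2 ≤ t) (x : GtV t ⊕ X) : rpos t x = 3 * t - 1 → x = rv t X (t - 1) 1 := by
  refine v_cases (P := fun x => rpos t x = 3 * t - 1 → x = rv t X (t - 1) 1) ?_ ?_ ?_ ?_ ?_ ?_ x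
  · intro j hj h
    simp [rpos, vrec_rv _ _ _ hj, off] at h
    omega
  · intro j hj h
    simp [rpos, vrec_rv _ _ _ hj, off] at h
    rw [show j = t - 1 by omega]
  · intro j hj h
    simp [rpos, vrec_rv _ _ _ hj, off] at h
    omega
  · intro j hj h
    simp [rpos, vrec_rv _ _ _ hj, off] at h
    omega
  · intro m
    fin_cases m <;> simp [rpos, vrec_ov] <;> omega
  · intro x h
    simp [rpos, vrec_inr] at h
    omega

theorem rpos_ex (n : ℕ) (hn : n ≤ 6 * t + 1) : ∃ v : GtV t ⊕ X, spn t v ∧ rpos t v = n := by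
  by_cases h1 : n = 6 * t
  · exact ⟨ov t X 0, by simp [spn, vrec_ov], by simp [rpos, vrec_ov, h1]⟩
  by_cases h2 : n = 6 * t + 1
  · exact ⟨ov t X 1, by simp [spn, vrec_ov], by simp [rpos, vrec_ov, h2]⟩
  have hj : n / 3 < 2 * t := by omega
  have : n % 3 = 0 ∨ n % 3 = 1 ∨ n % 3 = 2 := by omega
  rcases this with h | h | h
  · refine ⟨rv t X (n / 3) 0, by simp [spn, vrec_rv _ _ _ hj], ?_⟩
    simp [rpos, vrec_rv _ _ _ hj, off]
    omega
  · refine ⟨rv t X (n / 3) 2, by simp [spn, vrec_rv _ _ _ hj], ?_⟩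
    simp [rpos, vrec_rv _ _ _ hj, off]
    omega
  · refine ⟨rv t X (n / 3) 1, by simp [spn, vrec_rv _ _ _ hj], ?_⟩
    simp [rpos, vrec_rv _ _ _ hj, off]
    omega

theorem rpos_adj (ht : 2 ≤ t) (x y : GtV t ⊕ X) : spn t x → spn t y →
    (rpos t y = rpos t x + 1 ∨ (rpos t x = 6 * t + 1 ∧ rpos t y = 0)) →
    (hGraph t g).Adj x y := by
  have hov : ∀ m : Fin 8, spn t (ov t X m) → m = 0 ∨ m = 1 := fun m h => h
  have r0 : ∀ j, j < 2 * t → rpos t (rv t X j 0) = 3 * j := fun j hj => by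
    simp [rpos, vrec_rv _ _ _ hj, off]
  have r1 : ∀ j, j < 2 * t → rpos t (rv t X j 1) = 3 * j + 2 := fun j hj => by
    simp [rpos, vrec_rv _ _ _ hj, off]
  have r2 : ∀ j, j < 2 * t → rpos t (rv t X j 2) = 3 * j + 1 := fun j hj => by
    simp [rpos, vrec_rv _ _ _ hj, off]
  have r3 : ∀ j, j < 2 * t → rpos t (rv t X j 3) = 3 * j + 1 := fun j hj => by
    simp [rpos, vrec_rv _ _ _ hj, off]
  have z0 : rpos t (ov t X 0) = 6 * t := rfl
  have z1 : rpos t (ov t X 1) = 6 * t + 1 := rfl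
  refine v_cases (P := fun x => spn t x → spn t y →
    (rpos t y = rpos t x + 1 ∨ (rpos t x = 6 * t + 1 ∧ rpos t y = 0)) →
    (hGraph t g).Adj x y) ?_ ?_ ?_ ?_ ?_ ?_ x
  · intro j hj _
    refine v_cases (P := fun y => spn t y →
      (rpos t y = rpos t (rv t X j 0) + 1 ∨ (rpos t (rv t X j 0) = 6 * t + 1 ∧ rpos t y = 0)) →
      (hGraph t g).Adj (rv t X j 0) y) ?_ ?_ ?_ ?_ ?_ ?_ y
    · intro k hk _ h; rw [r0 j hj, r0 k hk] at h; omega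
    · intro k hk _ h; rw [r0 j hj, r1 k hk] at h; omega
    · intro k hk _ h
      rw [r0 j hj, r2 k hk] at h
      obtain rfl : k = j := by omega
      exact adj_of t g (Or.inl (HE.d02 _ hj))
    · intro k hk _ h
      rw [r0 j hj, r3 k hk] at h
      obtain rfl : k = j := by omega
      exact adj_of t g (Or.inl (HE.d03 _ hj))
    · intro m hm h
      rw [r0 j hj] at h
      rcases hov m hm with rfl | rfl
      · rw [z0] at h; omega
      · rw [z1] at h; omega
    · intro x hx
      exact hx.elim
  · intro j hj _
    refine v_cases (P := fun y => spn t y →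
      (rpos t y = rpos t (rv t X j 1) + 1 ∨ (rpos t (rv t X j 1) = 6 * t + 1 ∧ rpos t y = 0)) →
      (hGraph t g).Adj (rv t X j 1) y) ?_ ?_ ?_ ?_ ?_ ?_ y
    · intro k hk _ h
      rw [r1 j hj, r0 k hk] at h
      obtain rfl : k = j + 1 := by omega
      exact adj_of t g (Or.inl (HE.con _ hk))
    · intro k hk _ h; rw [r1 j hj, r1 k hk] at h; omega
    · intro k hk _ h; rw [r1 j hj, r2 k hk] at h; omega
    · intro k hk _ h; rw [r1 j hj, r3 k hk] at h; omega
    · intro m hm h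
      rw [r1 j hj] at h
      rcases hov m hm with rfl | rfl
      · rw [z0] at h
        exact adj_of t g (Or.inl (HE.l1 _ (by omega)))
      · rw [z1] at h; omega
    · intro x hx
      exact hx.elim
  · intro j hj _
    refine v_cases (P := fun y => spn t y →
      (rpos t y = rpos t (rv t X j 2) + 1 ∨ (rpos t (rv t X j 2) = 6 * t + 1 ∧ rpos t y = 0)) →
      (hGraph t g).Adj (rv t X j 2) y) ?_ ?_ ?_ ?_ ?_ ?_ y
    · intro k hk _ h; rw [r2 j hj, r0 k hk] at h; omega
    · intro k hk _ h
      rw [r2 j hj, r1 k hk] at h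
      obtain rfl : k = j := by omega
      exact adj_of t g (Or.inr (HE.d12 _ hj))
    · intro k hk _ h; rw [r2 j hj, r2 k hk] at h; omega
    · intro k hk _ h; rw [r2 j hj, r3 k hk] at h; omega
    · intro m hm h
      rw [r2 j hj] at h
      rcases hov m hm with rfl | rfl
      · rw [z0] at h; omega
      · rw [z1] at h; omega
    · intro x hx
      exact hx.elim
  · intro j hj _
    refine v_cases (P := fun y => spn t y →
      (rpos t y = rpos t (rv t X j 3) + 1 ∨ (rpos t (rv t X j 3) = 6 * t + 1 ∧ rpos t y = 0)) →
      (hGraph t g).Adj (rv t X j 3) y) ?_ ?_ ?_ ?_ ?_ ?_ y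
    · intro k hk _ h; rw [r3 j hj, r0 k hk] at h; omega
    · intro k hk _ h
      rw [r3 j hj, r1 k hk] at h
      obtain rfl : k = j := by omega
      exact adj_of t g (Or.inr (HE.d13 _ hj))
    · intro k hk _ h; rw [r3 j hj, r2 k hk] at h; omega
    · intro k hk _ h; rw [r3 j hj, r3 k hk] at h; omega
    · intro m hm h
      rw [r3 j hj] at h
      rcases hov m hm with rfl | rfl
      · rw [z0] at h; omega
      · rw [z1] at h; omega
    · intro x hx
      exact hx.elim
  · intro m hm
    refine v_cases (P := fun y => spn t y →
      (rpos t y = rpos t (ov t X m) + 1 ∨ (rpos t (ov t X m) = 6 * t + 1 ∧ rpos t y = 0)) →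
      (hGraph t g).Adj (ov t X m) y) ?_ ?_ ?_ ?_ ?_ ?_ y
    · intro k hk _ h
      rw [r0 k hk] at h
      rcases hov m hm with rfl | rfl
      · rw [z0] at h; omega
      · rw [z1] at h
        obtain rfl : k = 0 := by omega
        exact adj_of t g (Or.inl (HE.l2 (by omega)))
    · intro k hk _ h
      rw [r1 k hk] at h
      rcases hov m hm with rfl | rfl
      · rw [z0] at h; omega
      · rw [z1] at h; omega
    · intro k hk _ h
      rw [r2 k hk] at h
      rcases hov m hm with rfl | rfl
      · rw [z0] at h; omega
      · rw [z1] at h; omega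
    · intro k hk _ h
      rw [r3 k hk] at h
      rcases hov m hm with rfl | rfl
      · rw [z0] at h; omega
      · rw [z1] at h; omega
    · intro m' hm' h
      rcases hov m hm with rfl | rfl <;> rcases hov m' hm' with rfl | rfl
      · rw [z0] at h; omega
      · exact adj_of t g (Or.inl HE.o01)
      · rw [z0, z1] at h; omega
      · rw [z1] at h; omega
    · intro x hx
      exact hx.elim
  · intro x hx
    exact hx.elim

theorem dist_upper (ht : 2 ≤ t) (x y : GtV t ⊕ X) (hx : spn t x) (hy : spn t y)
    (h : rpos t x < rpos t y) : (hGraph t g).dist x y ≤ rpos t y - rpos t x := by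
  obtain ⟨n, hn⟩ : ∃ n, rpos t y = rpos t x + (n + 1) := ⟨rpos t y - rpos t x - 1, by omega⟩
  obtain ⟨q, hq⟩ := pos_dist_le (G := hGraph t g) (spn t) (rpos t) (6 * t + 1)
    (fun x y hx hy h => rpos_adj t g ht x y hx hy (Or.inl h))
    (fun x _ hb => rpos_ex t _ (by omega)) n x y hx hy hn (rpos_le t y)
  have := dist_le q
  omega

theorem dist_lower (ht : 2 ≤ t) (x y : GtV t ⊕ X) (h : rpos t x < rpos t y) :
    rpos t y - rpos t x ≤ (hGraph t g).dist x y ∨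
      6 * t + 2 ≤ (hGraph t g).dist x y + (rpos t y - rpos t x) := by
  have key := lip_le_dist (hGraph_conn t g (by omega))
    (fun w => min ((rpos t w - rpos t x) + (rpos t x - rpos t w))
      (6 * t + 2 - ((rpos t w - rpos t x) + (rpos t x - rpos t w)))) (by
      intro v w hvw
      have h1 := rpos_edge t g ht v w hvw
      have h2 := rpos_le t v
      have h3 := rpos_le t w
      have h4 := rpos_le t x
      omega) x y
  have := rpos_le t y
  omega

/-- Position along the path obtained by deleting `u₁`. -/
def cpos (v : GtV t ⊕ X) : ℕ := if rpos t v + 2 ≤ 3 * t then rpos t v + (6 * t + 2) else rpos t v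

theorem del_dist (ht : 2 ≤ t) (x y : {v : GtV t ⊕ X // v ≠ rv t X (t - 1) 1})
    (hx : spn t x.1) (hy : spn t y.1) (h1 : rpos t x.1 + 2 ≤ 3 * t) (h2 : 3 * t ≤ rpos t y.1) :
    (deleteVertex (hGraph t g) (rv t X (t - 1) 1)).dist x y
      = 6 * t + 2 - (rpos t y.1 - rpos t x.1) := by
  have hyl := rpos_le t y.1
  have hnu : ∀ v : {v : GtV t ⊕ X // v ≠ rv t X (t - 1) 1}, rpos t v.1 ≠ 3 * t - 1 :=
    fun v h => v.2 (rpos_u t ht v.1 h)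
  have ex : cpos t x.1 = rpos t x.1 + (6 * t + 2) := by simp [cpos, h1]
  have ey : cpos t y.1 = rpos t y.1 := by
    simp only [cpos]
    rw [if_neg (by omega)]
  apply le_antisymm
  · obtain ⟨n, hn⟩ : ∃ n, cpos t x.1 = cpos t y.1 + (n + 1) :=
      ⟨cpos t x.1 - cpos t y.1 - 1, by omega⟩
    obtain ⟨q, hq⟩ := pos_dist_le (G := deleteVertex (hGraph t g) (rv t X (t - 1) 1))
      (fun v => spn t v.1) (fun v => cpos t v.1) (9 * t)
      (fun v w hv hw h => by
        have hv' := hnu v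
        have hw' := hnu w
        have := rpos_le t v.1
        have := rpos_le t w.1
        change (hGraph t g).Adj v.1 w.1
        refine rpos_adj t g ht v.1 w.1 hv hw ?_
        simp only [cpos] at h
        split_ifs at h <;> omega)
      (fun v hv hb => by
        have hv' := hnu v
        have hvl := rpos_le t v.1
        simp only [cpos] at hb
        by_cases hz : rpos t v.1 = 6 * t + 1
        · obtain ⟨w, hw, hw'⟩ := rpos_ex (X := X) t 0 (by omega)
          refine ⟨⟨w, ?_⟩, hw, ?_⟩
          · rintro rfl
            simp [rpos, vrec_rv _ _ _ (show t - 1 < 2 * t by omega), off] at hw'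
          · simp only [cpos]
            split_ifs <;> omega
        · obtain ⟨w, hw, hw'⟩ := rpos_ex (X := X) t (rpos t v.1 + 1) (by omega)
          refine ⟨⟨w, ?_⟩, hw, ?_⟩
          · rintro rfl
            have hu : rpos t (rv t X (t - 1) 1) = 3 * t - 1 := by
              simp [rpos, vrec_rv _ _ _ (show t - 1 < 2 * t by omega), off]
              omega
            rw [hu] at hw'
            split_ifs at hb <;> omega
          · simp only [cpos]
            split_ifs at hb ⊢ <;> omega) n y x hy hx hn (by omega)
    rw [SimpleGraph.dist_comm]
    have := dist_le q
    omega
  · have key := lip_le_dist (hGraph_del t g (by omega) (rv t X (t - 1) 1))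
      (fun v => cpos t v.1) (by
        intro v w hvw
        have hv' := hnu v
        have hw' := hnu w
        have h1 := rpos_edge t g ht v.1 w.1 hvw
        have h2 := rpos_le t v.1
        have h3 := rpos_le t w.1
        simp only [cpos]
        split_ifs <;> omega) y x
    rw [SimpleGraph.dist_comm]
    omega

theorem cross_dist (ht : 2 ≤ t) (x y : {v : GtV t ⊕ X // v ≠ rv t X (t - 1) 1})
    (hx : spn t x.1) (hy : spn t y.1) (h1 : rpos t x.1 + 2 ≤ 3 * t) (h2 : 3 * t ≤ rpos t y.1) :
    (deleteVertex (hGraph t g) (rv t X (t - 1) 1)).dist x y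
      = (hGraph t g).dist x.1 y.1 + (6 * t + 2 - 2 * (rpos t y.1 - rpos t x.1)) := by
  have h3 := del_dist t g ht x y hx hy h1 h2
  have h4 := dist_le_del t g (by omega) x y
  have h5 := dist_upper t g ht x.1 y.1 hx hy (by omega)
  have h6 := dist_lower t g ht x.1 y.1 (by omega)
  omega

end cross

section counting
variable (t : ℕ) {X : Type} (g : Gadget X)

/-- Left half of the ring (1), right half (2), the rest (0). -/
def side : GtV t ⊕ X → ℕ :=
  vrec (fun j _ => if j < t then 1 else 2) (fun _ => 0) (fun _ => 0)

/-- Increase of the distance from the left half to the right half. -/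
def cinc (x y : GtV t ⊕ X) : ℕ :=
  if side t x = 1 ∧ side t y = 2 then 6 * t + 2 - 2 * (rpos t y - rpos t x) else 0

theorem side_foldL (x : GtV t ⊕ X) : x ≠ rv t X (t - 1) 1 → side t x ≠ 2 → foldL t x = x := by
  refine v_cases (P := fun x => x ≠ rv t X (t - 1) 1 → side t x ≠ 2 → foldL t x = x)
    ?_ ?_ ?_ ?_ ?_ ?_ x
  · intro j hj _ h
    simp [side, vrec_rv _ _ _ hj] at h
    simp [foldL, vrec_rv _ _ _ hj, h]
  · intro j hj hne h
    simp [side, vrec_rv _ _ _ hj] at h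
    simp only [foldL, vrec_rv _ _ _ hj, h, if_true]
    rw [if_neg]
    rintro ⟨rfl, -⟩
    exact hne rfl
  · intro j hj _ h
    simp [side, vrec_rv _ _ _ hj] at h
    simp [foldL, vrec_rv _ _ _ hj, h]
  · intro j hj _ h
    simp [side, vrec_rv _ _ _ hj] at h
    simp [foldL, vrec_rv _ _ _ hj, h]
  · intro m _ _
    rfl
  · intro x _ _
    rfl

theorem side_foldR (x : GtV t ⊕ X) : side t x ≠ 1 → foldR t x = x := by
  refine v_cases (P := fun x => side t x ≠ 1 → foldR t x = x) ?_ ?_ ?_ ?_ ?_ ?_ x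
  iterate 4
    · intro j hj h
      simp [side, vrec_rv _ _ _ hj] at h
      simp only [foldR, vrec_rv _ _ _ hj]
      rw [if_neg (by omega)]
  · intro m _
    rfl
  · intro x _
    rfl

theorem side_one (x : GtV t ⊕ X) : x ≠ rv t X (t - 1) 1 → side t x = 1 →
    spn t x ∧ rpos t x + 2 ≤ 3 * t := by
  refine v_cases (P := fun x => x ≠ rv t X (t - 1) 1 → side t x = 1 →
    spn t x ∧ rpos t x + 2 ≤ 3 * t) ?_ ?_ ?_ ?_ ?_ ?_ x
  · intro j hj _ h
    simp [side, vrec_rv _ _ _ hj] at h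
    simp [spn, rpos, off, vrec_rv _ _ _ hj]
    omega
  · intro j hj hne h
    simp [side, vrec_rv _ _ _ hj] at h
    have : j ≠ t - 1 := by
      rintro rfl
      exact hne rfl
    simp [spn, rpos, off, vrec_rv _ _ _ hj]
    omega
  · intro j hj _ h
    simp [side, vrec_rv _ _ _ hj] at h
    simp [spn, rpos, off, vrec_rv _ _ _ hj]
    omega
  · intro j hj _ h
    simp [side, vrec_rv _ _ _ hj] at h
    simp [spn, rpos, off, vrec_rv _ _ _ hj]
    omega
  · intro m _ h
    simp [side, vrec_ov] at h
  · intro x _ h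
    simp [side, vrec_inr] at h

theorem side_two (x : GtV t ⊕ X) : side t x = 2 → spn t x ∧ 3 * t ≤ rpos t x := by
  refine v_cases (P := fun x => side t x = 2 → spn t x ∧ 3 * t ≤ rpos t x) ?_ ?_ ?_ ?_ ?_ ?_ x
  iterate 4
    · intro j hj h
      have h' : ¬ j < t := fun h' => by simp [side, vrec_rv _ _ _ hj, h'] at h
      simp [spn, rpos, off, vrec_rv _ _ _ hj]
      try omega
  · intro m h
    simp [side, vrec_ov] at h
  · intro x h
    simp [side, vrec_inr] at h

theorem inc_correct (ht : 2 ≤ t) (x y : GtV t ⊕ X) (hx : x ≠ rv t X (t - 1) 1)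
    (hy : y ≠ rv t X (t - 1) 1) :
    (deleteVertex (hGraph t g) (rv t X (t - 1) 1)).dist ⟨x, hx⟩ ⟨y, hy⟩
      = (hGraph t g).dist x y + (cinc t x y + cinc t y x) := by
  by_cases h1 : side t x = 1 ∧ side t y = 2
  · have e1 : cinc t x y = 6 * t + 2 - 2 * (rpos t y - rpos t x) := by simp [cinc, h1]
    have e2 : cinc t y x = 0 := by simp [cinc, h1]
    obtain ⟨a, b⟩ := side_one t x hx h1.1
    obtain ⟨c, d⟩ := side_two t y h1.2
    rw [e1, e2]
    exact cross_dist t g ht ⟨x, hx⟩ ⟨y, hy⟩ a c b d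
  by_cases h2 : side t y = 1 ∧ side t x = 2
  · have e1 : cinc t y x = 6 * t + 2 - 2 * (rpos t x - rpos t y) := by simp [cinc, h2]
    have e2 : cinc t x y = 0 := by simp [cinc, h2]
    obtain ⟨a, b⟩ := side_one t y hy h2.1
    obtain ⟨c, d⟩ := side_two t x h2.2
    rw [e1, e2, SimpleGraph.dist_comm, SimpleGraph.dist_comm (u := x), zero_add]
    exact cross_dist t g ht ⟨y, hy⟩ ⟨x, hx⟩ a c b d
  have e1 : cinc t x y = 0 := by simp only [cinc, if_neg h1]
  have e2 : cinc t y x = 0 := by simp only [cinc, if_neg h2]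
  rw [e1, e2]
  by_cases h3 : side t x = 2 ∨ side t y = 2
  · refine dist_del_fold t g (by omega) (foldR t) (foldR_ne t ht) (foldR_adj t g ht) ⟨x, hx⟩ ⟨y, hy⟩
      (side_foldR t x ?_) (side_foldR t y ?_)
    · intro h
      rcases h3 with h3 | h3
      · omega
      · exact h1 ⟨h, h3⟩
    · intro h
      rcases h3 with h3 | h3
      · exact h2 ⟨h, h3⟩
      · omega
  · push Not at h3
    exact dist_del_fold t g (by omega) (foldL t) (foldL_ne t ht) (foldL_adj t g ht) ⟨x, hx⟩ ⟨y, hy⟩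
      (side_foldL t x hx h3.1) (side_foldL t y hy h3.2)

theorem sum_v [Fintype X] (F : GtV t ⊕ X → ℕ) :
    ∑ v, F v = (∑ j ∈ range t, ∑ a, F (rv t X j a)) + (∑ j ∈ range t, ∑ a, F (rv t X (t + j) a))
      + ∑ m, F (ov t X m) + ∑ x, F (Sum.inr x) := by
  rw [Fintype.sum_sum_type, Fintype.sum_sum_type, Fintype.sum_prod_type]
  congr 2
  rw [← Finset.sum_range_add (fun j => ∑ a, F (rv t X j a)), ← two_mul, Finset.sum_range]
  refine Finset.sum_congr rfl fun j _ => Finset.sum_congr rfl fun a _ => ?_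
  simp [rv]

theorem blk (ht : 2 ≤ t) (j k : ℕ) (hj : j < t) (hk : k < t) :
    ∑ a, ∑ b, cinc t (rv t X j a) (rv t X (t + k) b)
      = if k < j then 96 * (j - k) + 32 else if k = j then 34 else 0 := by
  have h : ∀ a b, cinc t (rv t X j a) (rv t X (t + k) b)
      = 6 * t + 2 - 2 * ((3 * (t + k) + off b) - (3 * j + off a)) := by
    intro a b
    simp [cinc, side, rpos, vrec_rv _ _ _ (show j < 2 * t by omega),
      vrec_rv _ _ _ (show t + k < 2 * t by omega), hj]
  simp only [h, Fin.sum_univ_four, off]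
  simp
  split_ifs <;> omega

theorem sum_aux (j n : ℕ) (h : n ≤ j) :
    (∑ k ∈ range n, (96 * (j - k) + 32)) + 48 * n ^ 2 = 96 * j * n + 80 * n := by
  induction n with
  | zero => simp
  | succ n ih =>
    rw [sum_range_succ]
    have := ih (by omega)
    obtain ⟨d, rfl⟩ : ∃ d, j = n + d := ⟨j - n, by omega⟩
    rw [Nat.add_sub_cancel_left]
    nlinarith

theorem sum_blk (j n : ℕ) (h : j < n) :
    ∑ k ∈ range n, (if k < j then 96 * (j - k) + 32 else if k = j then 34 else 0)
      = 48 * j ^ 2 + 80 * j + 34 := by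
  induction n, h using Nat.le_induction with
  | base =>
    rw [sum_range_succ]
    have : ∑ k ∈ range j, (if k < j then 96 * (j - k) + 32 else if k = j then 34 else 0)
        = ∑ k ∈ range j, (96 * (j - k) + 32) := by
      refine sum_congr rfl fun k hk => ?_
      rw [if_pos (mem_range.1 hk)]
    rw [this]
    have := sum_aux j j le_rfl
    simp
    nlinarith
  | succ n hn ih =>
    rw [sum_range_succ, ih, if_neg (by omega), if_neg (by omega)]

theorem sum_tot (n : ℕ) :
    ∑ j ∈ range n, (48 * j ^ 2 + 80 * j + 34) = 16 * n ^ 3 + 16 * n ^ 2 + 2 * n := by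
  induction n with
  | zero => simp
  | succ n ih =>
    rw [sum_range_succ, ih]
    ring

theorem cinc_total [Fintype X] (ht : 2 ≤ t) :
    ∑ x : GtV t ⊕ X, ∑ y, cinc t x y = 16 * t ^ 3 + 16 * t ^ 2 + 2 * t := by
  have hs1 : ∀ j a, j < t → side t (rv t X j a) = 1 := fun j a hj => by
    simp [side, vrec_rv _ _ _ (show j < 2 * t by omega), hj]
  have hs2 : ∀ j a, j < t → side t (rv t X (t + j) a) = 2 := fun j a hj => by
    simp [side, vrec_rv _ _ _ (show t + j < 2 * t by omega)]
  have hso : ∀ m, side t (ov t X m) = 0 := fun m => rfl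
  have hsx : ∀ x : X, side t (Sum.inr x) = 0 := fun m => rfl
  have z1 : ∀ x y : GtV t ⊕ X, side t x ≠ 1 → cinc t x y = 0 := fun x y h => by simp [cinc, h]
  have z2 : ∀ x y : GtV t ⊕ X, side t y ≠ 2 → cinc t x y = 0 := fun x y h => by simp [cinc, h]
  have inner : ∀ x : GtV t ⊕ X, ∑ y, cinc t x y
      = ∑ k ∈ range t, ∑ b, cinc t x (rv t X (t + k) b) := by
    intro x
    rw [sum_v]
    rw [Finset.sum_eq_zero (s := range t) (f := fun j => ∑ a, cinc t x (rv t X j a))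
      (fun j hj => Finset.sum_eq_zero fun a _ => z2 _ _ (by rw [hs1 j a (mem_range.1 hj)]; decide))]
    rw [Finset.sum_eq_zero (f := fun m => cinc t x (ov t X m))
      (fun m _ => z2 _ _ (by rw [hso]; decide))]
    rw [Finset.sum_eq_zero (f := fun m => cinc t x (Sum.inr m))
      (fun m _ => z2 _ _ (by rw [hsx]; decide))]
    simp
  rw [sum_v]
  rw [Finset.sum_eq_zero (s := range t) (f := fun j => ∑ a, ∑ y, cinc t (rv t X (t + j) a) y)
    (fun j hj => Finset.sum_eq_zero fun a _ => Finset.sum_eq_zero fun y _ =>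
      z1 _ _ (by rw [hs2 j a (mem_range.1 hj)]; decide))]
  rw [Finset.sum_eq_zero (f := fun m => ∑ y, cinc t (ov t X m) y)
      (fun m _ => Finset.sum_eq_zero fun y _ => z1 _ _ (by rw [hso]; decide))]
  rw [Finset.sum_eq_zero (f := fun m => ∑ y, cinc t (Sum.inr m) y)
      (fun m _ => Finset.sum_eq_zero fun y _ => z1 _ _ (by rw [hsx]; decide))]
  simp only [add_zero]
  rw [← sum_tot]
  refine sum_congr rfl fun j hj => ?_
  rw [← sum_blk j t (mem_range.1 hj)]
  simp only [inner]
  rw [sum_comm]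
  exact sum_congr rfl fun k hk => blk t ht j k (mem_range.1 hj) (mem_range.1 hk)

theorem sum_lin1 (n m : ℕ) (h : n ≤ m) :
    (∑ k ∈ range n, (24 * (m - k) - 8)) + 12 * n ^ 2 = 24 * m * n + 4 * n := by
  induction n with
  | zero => simp
  | succ n ih =>
    rw [sum_range_succ]
    have := ih (by omega)
    obtain ⟨d, rfl⟩ : ∃ d, m = n + 1 + d := ⟨m - n - 1, by omega⟩
    rw [show 24 * (n + 1 + d - n) - 8 = 24 * d + 16 by omega]
    nlinarith

theorem cinc_row [Fintype X] (ht : 2 ≤ t) :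
    ∑ y : GtV t ⊕ X, cinc t (rv t X (t - 1) 1) y = 12 * t ^ 2 + 4 * t := by
  have e1 : ∀ j a, j < t → cinc t (rv t X (t - 1) 1) (rv t X j a) = 0 := fun j a hj => by
    simp [cinc, side, vrec_rv _ _ _ (show j < 2 * t by omega), hj]
  have e2 : ∀ j a, j < t → cinc t (rv t X (t - 1) 1) (rv t X (t + j) a)
      = 6 * (t - j) - 2 * off a := fun j a hj => by
    simp [cinc, side, rpos, off, vrec_rv _ _ _ (show t + j < 2 * t by omega),
      vrec_rv _ _ _ (show t - 1 < 2 * t by omega), show 0 < t by omega]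
    omega
  rw [sum_v]
  rw [Finset.sum_eq_zero (s := range t) (f := fun j => ∑ a, cinc t (rv t X (t - 1) 1) (rv t X j a))
      (fun j hj => Finset.sum_eq_zero fun a _ => e1 j a (mem_range.1 hj))]
  rw [Finset.sum_eq_zero (f := fun m => cinc t (rv t X (t - 1) 1) (ov t X m))
      (fun m _ => by simp [cinc, side, vrec_ov])]
  rw [Finset.sum_eq_zero (f := fun m => cinc t (rv t X (t - 1) 1) (Sum.inr m))
      (fun m _ => by simp [cinc, side, vrec_inr])]
  have : ∑ j ∈ range t, ∑ a, cinc t (rv t X (t - 1) 1) (rv t X (t + j) a)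
      = ∑ j ∈ range t, (24 * (t - j) - 8) := by
    refine sum_congr rfl fun j hj => ?_
    have hj' := mem_range.1 hj
    simp only [e2 j _ hj', Fin.sum_univ_four, off]
    simp
    omega
  rw [this]
  have := sum_lin1 t t le_rfl
  nlinarith

theorem sum_lin2 (n m : ℕ) (h : n ≤ m) :
    (∑ k ∈ range n, (12 * (m - k) - 8)) + 6 * n ^ 2 + 2 * n = 12 * m * n := by
  induction n with
  | zero => simp
  | succ n ih =>
    rw [sum_range_succ]
    have := ih (by omega)
    obtain ⟨d, rfl⟩ : ∃ d, m = n + 1 + d := ⟨m - n - 1, by omega⟩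
    rw [show 12 * (n + 1 + d - n) - 8 = 12 * d + 4 by omega]
    nlinarith

theorem sum_lin3 (n : ℕ) : ∑ k ∈ range n, (12 * k + 8) = 6 * n ^ 2 + 2 * n := by
  induction n with
  | zero => simp
  | succ n ih =>
    rw [sum_range_succ, ih]
    ring

theorem fdist_total [Fintype X] (ht : 2 ≤ t) :
    ∑ y, fdist t g y = 12 * t ^ 2 + 24 * t + 14 + ∑ x, (3 * t + 3 + g.δ x) := by
  rw [sum_v]
  have h1 : ∑ j ∈ range t, ∑ a, fdist t g (rv t X j a) = ∑ j ∈ range t, (12 * (t - j) - 8) := by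
    refine sum_congr rfl fun j hj => ?_
    have hj' := mem_range.1 hj
    simp only [fdist, vrec_rv _ _ _ (show j < 2 * t by omega), Fin.sum_univ_four, off, hj', if_true]
    simp
    omega
  have h2 : ∑ j ∈ range t, ∑ a, fdist t g (rv t X (t + j) a) = ∑ j ∈ range t, (12 * j + 8) := by
    refine sum_congr rfl fun j hj => ?_
    have hj' := mem_range.1 hj
    simp only [fdist, vrec_rv _ _ _ (show t + j < 2 * t by omega), Fin.sum_univ_four, off,
      show ¬ (t + j < t) by omega, if_false]
    simp
    omega
  have h3 : ∑ m, fdist t g (ov t X m) = 24 * t + 14 := by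
    simp only [fdist, vrec_ov, Fin.sum_univ_eight]
    simp
    ring
  have h4 : ∑ x, fdist t g (Sum.inr x) = ∑ x, (3 * t + 3 + g.δ x) := rfl
  rw [h1, h2, h3, h4, sum_lin3]
  have := sum_lin2 t t le_rfl
  nlinarith

theorem soltes_u1 [Fintype X] (ht : 2 ≤ t)
    (hs : (∑ x, (3 * t + 3 + g.δ x)) + 8 * t ^ 2 + 26 * t + 14 = 16 * t ^ 3) :
    IsSoltes (hGraph t g) (rv t X (t - 1) 1) := by
  classical
  refine soltes_of_inc _ _ (hGraph_del t g (by omega) _) (fun x y => cinc t x y + cinc t y x)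
    (inc_correct t g ht) ?_
  simp only [dist_u t g ht]
  rw [fdist_total t g ht]
  set u := rv t X (t - 1) 1 with hu
  have hcu : ∀ x, cinc t x u = 0 := fun x => by
    simp [cinc, side, hu, vrec_rv _ _ _ (show t - 1 < 2 * t by omega), show 0 < t by omega]
  have key : (∑ x : GtV t ⊕ X, ∑ y, if x ≠ u ∧ y ≠ u then cinc t x y + cinc t y x else 0)
      + (∑ x : GtV t ⊕ X, ∑ y, if x = u then cinc t x y else 0)
      + (∑ x : GtV t ⊕ X, ∑ y, if y = u then cinc t y x else 0)
      = (∑ x : GtV t ⊕ X, ∑ y, cinc t x y) + ∑ x : GtV t ⊕ X, ∑ y, cinc t y x := by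
    simp only [← sum_add_distrib]
    refine sum_congr rfl fun x _ => sum_congr rfl fun y _ => ?_
    by_cases h1 : x = u
    · by_cases h2 : y = u
      · subst h1; subst h2; simp
      · subst h1; simp [h2, hcu]
    · by_cases h2 : y = u
      · subst h2; simp [h1, hcu]
      · simp [h1, h2]
  have k1 : (∑ x, ∑ y, if x = u then cinc t x y else 0) = ∑ y, cinc t u y := by
    rw [sum_comm]
    simp
  have k2 : (∑ x, ∑ y, if y = u then cinc t y x else 0) = ∑ y, cinc t u y := by
    simp
  have k3 : (∑ x : GtV t ⊕ X, ∑ y, cinc t y x) = ∑ x : GtV t ⊕ X, ∑ y, cinc t x y := sum_comm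
  rw [k1, k2, k3, cinc_total t ht, cinc_row t ht] at key
  nlinarith

theorem soltes_u2 [Fintype X] (ht : 2 ≤ t)
    (hs : (∑ x, (3 * t + 3 + g.δ x)) + 8 * t ^ 2 + 26 * t + 14 = 16 * t ^ 3) :
    IsSoltes (hGraph t g) (rv t X t 0) := by
  have := iso_soltes (reflIso t g) (soltes_u1 t g ht hs)
  have e : reflIso t g (rv t X (t - 1) 1) = rv t X t 0 := by
    change refl0 t (rv t X (t - 1) 1) = _
    rw [refl0, vrec_rv _ _ _ (by omega), show 2 * t - 1 - (t - 1) = t by omega]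
    rfl
  rwa [e] at this

end counting

/-! ### The gadget for `t = 3` -/

/-- Chords of the sporadic gadget; `18` and `19` stand for `v₁` and `v₂`. -/
def chord : Fin 18 → ℕ := ![19, 5, 8, 18, 17, 1, 13, 9, 2, 7, 14, 16, 15, 6, 10, 12, 11, 4]

/-- Adjacency of the sporadic gadget. -/
def e3 : Bool ⊕ Fin 18 → Fin 18 → Bool
  | Sum.inl false, y => y = 0 || y = 3
  | Sum.inl true, y => y = 0 || y = 17
  | Sum.inr x, y => (x : ℕ) + 1 = y || (y : ℕ) + 1 = x || chord x = y

/-- Previous vertex on the Hamiltonian path. -/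
def prev3 (y : Fin 18) : Bool ⊕ Fin 18 := if y = 0 then Sum.inl false else Sum.inr (y - 1)

/-- Next vertex on the Hamiltonian path. -/
def next3 (y : Fin 18) : Bool ⊕ Fin 18 := if y = 17 then Sum.inl true else Sum.inr (y + 1)

/-- Chord neighbour. -/
def cho3 (y : Fin 18) : Bool ⊕ Fin 18 :=
  if y = 0 then Sum.inl true else if y = 3 then Sum.inl false else
    Sum.inr (Fin.ofNat 18 (chord y))

/-- The sporadic gadget. -/
def gad3 : Gadget (Fin 18) where
  E w y := e3 w y = true
  symm := by decide
  irrefl := by decide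
  two := by
    rintro (_ | _)
    · exact ⟨0, 3, by decide, by decide⟩
    · exact ⟨0, 17, by decide, by decide⟩
  three y := by
    have h : ∀ y, prev3 y ≠ next3 y ∧ prev3 y ≠ cho3 y ∧ next3 y ≠ cho3 y ∧
        ∀ w, e3 w y = true ↔ w = prev3 y ∨ w = next3 y ∨ w = cho3 y := by decide +kernel
    exact ⟨_, _, _, h y⟩
  δ := ![1, 2, 2, 1, 2, 3, 4, 4, 3, 4, 4, 3, 4, 5, 4, 3, 2, 1]
  δ_one := by decide +kernel
  δ_lip := by decide +kernel
  δ_desc := by decide +kernel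
  σ y := y
  N := 18
  σ_le y := by omega
  σ_lo := by decide +kernel
  σ_hi := by decide +kernel

/-! ### The ladder gadget -/

/-- Vertices of the ladder gadget. -/
abbrev LX (m : ℕ) : Type := (Fin m × Bool) ⊕ (Bool × Bool)

/-- Row of the rung subdivided by `(e, h)`. -/
def lrow (A B : ℕ) (e h : Bool) : ℕ := cond e B A + cond h 1 0

/-- Adjacency between ladder vertices. -/
def lpp (m A B : ℕ) (i : ℕ) (s : Bool) (j : ℕ) (s' : Bool) : Prop :=
  (s = s' ∧ ((j = i + 1 ∧ j + 2 ≤ m) ∨ (i = j + 1 ∧ i + 2 ≤ m))) ∨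
  ((i + 2 = m ∧ j + 1 = m) ∨ (j + 2 = m ∧ i + 1 = m)) ∨
  (i = j ∧ s ≠ s' ∧ ((1 ≤ i ∧ i + 3 ≤ m) ∨ i + 1 = m) ∧
    i ≠ A ∧ i ≠ A + 1 ∧ i ≠ B ∧ i ≠ B + 1)

/-- Adjacency of the ladder gadget. -/
def lE (m A B : ℕ) : Bool ⊕ LX m → LX m → Prop
  | Sum.inl _, Sum.inl (i, _) => (i : ℕ) = 0
  | Sum.inl _, Sum.inr _ => False
  | Sum.inr (Sum.inl (i, s)), Sum.inl (j, s') => lpp m A B i s j s'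
  | Sum.inr (Sum.inl (i, _)), Sum.inr (e, h) => (i : ℕ) = lrow A B e h
  | Sum.inr (Sum.inr (e, h)), Sum.inl (i, _) => (i : ℕ) = lrow A B e h
  | Sum.inr (Sum.inr (e, h)), Sum.inr (e', h') => e = e' ∧ h ≠ h'

/-- Distance to the attachment vertices. -/
def lδ (m A B : ℕ) : LX m → ℕ
  | Sum.inl (i, _) => i + 1
  | Sum.inr (e, h) => lrow A B e h + 2

/-- A numbering for 2-connectedness. -/
def lσ (m : ℕ) : LX m → ℕ
  | Sum.inl (i, false) => i
  | Sum.inl (i, true) => 2 * m - i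
  | Sum.inr _ => m

section ladder
variable (m A B : ℕ)

theorem l_three (hA : 1 ≤ A) (hAB : A + 2 ≤ B) (hB : B + 4 ≤ m) (y : LX m) :
    ∃ a b c, a ≠ b ∧ a ≠ c ∧ b ≠ c ∧ ∀ w, lE m A B w y ↔ w = a ∨ w = b ∨ w = c := by
  rcases y with ⟨⟨i, hi⟩, s⟩ | ⟨e, h⟩
  · by_cases h0 : i = 0
    · refine ⟨Sum.inl false, Sum.inl true, Sum.inr (Sum.inl (⟨1, by omega⟩, s)), by simp, by simp,
        by simp, ?_⟩
      rintro (b | ⟨⟨j, hj⟩, s'⟩ | ⟨e, h⟩)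
      · cases b <;> simp [lE, h0]
      · cases s <;> cases s' <;> simp [lE, lpp] <;> omega
      · cases e <;> cases h <;> simp [lE, lrow] <;> omega
    by_cases h1 : i + 1 = m
    · refine ⟨Sum.inr (Sum.inl (⟨m - 2, by omega⟩, false)),
        Sum.inr (Sum.inl (⟨m - 2, by omega⟩, true)), Sum.inr (Sum.inl (⟨i, hi⟩, !s)), by simp,
        by simp; omega, by simp; omega, ?_⟩
      rintro (b | ⟨⟨j, hj⟩, s'⟩ | ⟨e, h⟩)
      · cases b <;> simp [lE, h0]
      · cases s <;> cases s' <;> simp [lE, lpp] <;> omega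
      · cases e <;> cases h <;> simp [lE, lrow] <;> omega
    by_cases h2 : i + 2 = m
    · refine ⟨Sum.inr (Sum.inl (⟨m - 1, by omega⟩, false)),
        Sum.inr (Sum.inl (⟨m - 1, by omega⟩, true)),
        Sum.inr (Sum.inl (⟨i - 1, by omega⟩, s)), by simp,
        by simp; omega, by simp; omega, ?_⟩
      rintro (b | ⟨⟨j, hj⟩, s'⟩ | ⟨e, h⟩)
      · cases b <;> simp [lE, h0]
      · cases s <;> cases s' <;> simp [lE, lpp] <;> omega
      · cases e <;> cases h <;> simp [lE, lrow] <;> omega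
    by_cases h3 : ∃ e h, i = lrow A B e h
    · obtain ⟨e, h, h3⟩ := h3
      refine ⟨Sum.inr (Sum.inl (⟨i - 1, by omega⟩, s)),
        Sum.inr (Sum.inl (⟨i + 1, by omega⟩, s)),
        Sum.inr (Sum.inr (e, h)), by simp,
        by simp, by simp, ?_⟩
      rintro (b | ⟨⟨j, hj⟩, s'⟩ | ⟨e', h'⟩)
      · cases b <;> simp [lE, h0]
      · cases e <;> cases h <;> simp [lrow] at h3 <;>
          cases s <;> cases s' <;> simp [lE, lpp] <;> omega
      · cases e <;> cases h <;> simp [lrow] at h3 <;>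
          cases e' <;> cases h' <;> simp [lE, lrow] <;> omega
    · have n1 : i ≠ A := fun h => h3 ⟨false, false, by simp [lrow, h]⟩
      have n2 : i ≠ A + 1 := fun h => h3 ⟨false, true, by simp [lrow, h]⟩
      have n3 : i ≠ B := fun h => h3 ⟨true, false, by simp [lrow, h]⟩
      have n4 : i ≠ B + 1 := fun h => h3 ⟨true, true, by simp [lrow, h]⟩
      refine ⟨Sum.inr (Sum.inl (⟨i - 1, by omega⟩, s)),
        Sum.inr (Sum.inl (⟨i + 1, by omega⟩, s)),
        Sum.inr (Sum.inl (⟨i, hi⟩, !s)), by simp,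
        by simp, by simp, ?_⟩
      rintro (b | ⟨⟨j, hj⟩, s'⟩ | ⟨e', h'⟩)
      · cases b <;> simp [lE, h0]
      · cases s <;> cases s' <;> simp [lE, lpp] <;> omega
      · cases e' <;> cases h' <;> simp [lE, lrow] <;> omega
  · have hr : lrow A B e h < m := by
      cases e <;> cases h <;> simp [lrow] <;> omega
    refine ⟨Sum.inr (Sum.inl (⟨lrow A B e h, hr⟩, false)),
      Sum.inr (Sum.inl (⟨lrow A B e h, hr⟩, true)), Sum.inr (Sum.inr (e, !h)), by simp,
      by simp, by simp, ?_⟩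
    rintro (b | ⟨⟨j, hj⟩, s'⟩ | ⟨e', h'⟩)
    · cases b <;> simp [lE]
    · cases s' <;> simp [lE]
    · cases e <;> cases h <;> cases e' <;> cases h' <;> simp [lE]

/-- The ladder gadget. -/
def ladder (hA : 1 ≤ A) (hAB : A + 2 ≤ B) (hB : B + 4 ≤ m) : Gadget (LX m) where
  E := lE m A B
  symm := by
    rintro (⟨⟨i, hi⟩, s⟩ | ⟨e, h⟩) (⟨⟨j, hj⟩, s'⟩ | ⟨e', h'⟩)
    · cases s <;> cases s' <;> simp [lE, lpp] <;> omega
    · simp [lE]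
    · simp [lE]
    · cases e <;> cases h <;> cases e' <;> cases h' <;> simp [lE]
  irrefl := by
    rintro (⟨⟨i, hi⟩, s⟩ | ⟨e, h⟩)
    · cases s <;> simp [lE, lpp] <;> omega
    · simp [lE]
  two := by
    intro b
    refine ⟨Sum.inl (⟨0, by omega⟩, false), Sum.inl (⟨0, by omega⟩, true), by simp, ?_⟩
    rintro (⟨⟨j, hj⟩, s⟩ | ⟨e, h⟩)
    · cases s <;> simp [lE]
    · simp [lE]
  three := l_three m A B hA hAB hB
  δ := lδ m A B
  δ_one := by
    rintro b (⟨⟨j, hj⟩, s⟩ | ⟨e, h⟩)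
    · simp [lE, lδ]
    · simp [lE]
  δ_lip := by
    rintro (⟨⟨i, hi⟩, s⟩ | ⟨e, h⟩) (⟨⟨j, hj⟩, s'⟩ | ⟨e', h'⟩)
    · cases s <;> cases s' <;> simp [lE, lpp, lδ] <;> omega
    · simp [lE, lδ]
      omega
    · simp [lE, lδ]
      omega
    · cases e <;> cases h <;> cases e' <;> cases h' <;> simp [lE, lδ, lrow]
  δ_desc := by
    rintro (⟨⟨j, hj⟩, s⟩ | ⟨e, h⟩)
    · by_cases h0 : j = 0
      · exact Or.inl ⟨by simp [lδ, h0], false, h0⟩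
      · refine Or.inr ⟨Sum.inl (⟨j - 1, by omega⟩, s), ?_, by simp [lδ]; omega⟩
        simp [lE, lpp]
        omega
    · have hr : lrow A B e h < m := by
        cases e <;> cases h <;> simp [lrow] <;> omega
      exact Or.inr ⟨Sum.inl (⟨_, hr⟩, false), by simp [lE], by simp [lδ]⟩
  σ := lσ m
  N := 2 * m
  σ_le := by
    rintro (⟨⟨j, hj⟩, s⟩ | ⟨e, h⟩)
    · cases s <;> simp [lσ]
      omega
    · simp [lσ]
      omega
  σ_lo := by
    rintro (⟨⟨j, hj⟩, s⟩ | ⟨e, h⟩)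
    · cases s
      · by_cases h0 : j = 0
        · exact Or.inl h0
        · refine Or.inr ⟨Sum.inl (⟨j - 1, by omega⟩, false), ?_, by simp [lσ]; omega⟩
          simp [lE, lpp]
          omega
      · by_cases h1 : j + 1 = m
        · refine Or.inr ⟨Sum.inl (⟨j, by omega⟩, false), ?_, by simp [lσ]; omega⟩
          simp [lE, lpp]
          omega
        · refine Or.inr ⟨Sum.inl (⟨j + 1, by omega⟩, true), ?_, by simp [lσ]; omega⟩
          simp [lE, lpp]
          omega
    · have hr : lrow A B e h < m := by
        cases e <;> cases h <;> simp [lrow] <;> omega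
      exact Or.inr ⟨Sum.inl (⟨_, hr⟩, false), by simp [lE], by simpa [lσ] using hr⟩
  σ_hi := by
    rintro (⟨⟨j, hj⟩, s⟩ | ⟨e, h⟩)
    · cases s
      · by_cases h1 : j + 1 = m
        · refine Or.inr ⟨Sum.inl (⟨j, by omega⟩, true), ?_, by simp [lσ]; omega⟩
          simp [lE, lpp]
          omega
        · refine Or.inr ⟨Sum.inl (⟨j + 1, by omega⟩, false), ?_, by simp [lσ]⟩
          simp [lE, lpp]
          omega
      · by_cases h0 : j = 0
        · exact Or.inl h0
        · refine Or.inr ⟨Sum.inl (⟨j - 1, by omega⟩, true), ?_, by simp [lσ]; omega⟩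
          simp [lE, lpp]
          omega
    · have hr : lrow A B e h < m := by
        cases e <;> cases h <;> simp [lrow] <;> omega
      exact Or.inr ⟨Sum.inl (⟨_, hr⟩, true), by simp [lE], by simp [lσ]; omega⟩

theorem sum_lad (K n : ℕ) : ∑ i ∈ range n, 2 * (K + (i + 1)) = 2 * n * K + n * (n + 1) := by
  induction n with
  | zero => simp
  | succ n ih =>
    rw [sum_range_succ, ih]
    ring

theorem ladder_sum (hA : 1 ≤ A) (hAB : A + 2 ≤ B) (hB : B + 4 ≤ m) (K : ℕ) :
    ∑ x, (K + (ladder m A B hA hAB hB).δ x)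
      = 2 * m * K + m * (m + 1) + 4 * K + 2 * A + 2 * B + 10 := by
  change ∑ x, (K + lδ m A B x) = _
  rw [Fintype.sum_sum_type, Fintype.sum_prod_type, Fintype.sum_prod_type]
  have : ∑ i : Fin m, ∑ s : Bool, (K + lδ m A B (Sum.inl (i, s)))
      = ∑ i ∈ range m, 2 * (K + (i + 1)) := by
    rw [Finset.sum_range]
    refine sum_congr rfl fun i _ => ?_
    simp [lδ]
  rw [this, sum_lad]
  simp [lδ, lrow]
  ring

end ladder

/-- Choice of the parameters of the ladder. -/
theorem params_ex (t : ℕ) (ht : 4 ≤ t) : ∃ m A B : ℕ, 1 ≤ A ∧ A + 2 ≤ B ∧ B + 4 ≤ m ∧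
    (2 * m * (3 * t + 3) + m * (m + 1) + 4 * (3 * t + 3) + 2 * A + 2 * B + 10)
      + 8 * t ^ 2 + 26 * t + 14 = 16 * t ^ 3 := by
  by_cases h4 : t = 4
  · subst h4
    exact ⟨15, 2, 7, by norm_num⟩
  by_cases h5 : t = 5
  · subst h5
    exact ⟨25, 1, 11, by norm_num⟩
  obtain ⟨d, rfl⟩ : ∃ d, t = d + 6 := ⟨t - 6, by omega⟩
  -- the left hand side without `A` and `B`
  let f : ℕ → ℕ := fun m => (2 * m * (3 * (d + 6) + 3) + m * (m + 1) + 4 * (3 * (d + 6) + 3) + 10)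
    + 8 * (d + 6) ^ 2 + 26 * (d + 6) + 14
  have hstep : ∀ m, f (m + 1) = f m + 2 * (3 * (d + 6) + 4 + m) := fun m => by
    simp only [f]
    ring
  have hlow : f (3 * (d + 6) + 17) + 8 ≤ 16 * (d + 6) ^ 3 := by
    simp only [f]
    ring_nf
    nlinarith [Nat.zero_le (d ^ 2), Nat.zero_le (d ^ 3)]
  have hex : ∃ m, 3 * (d + 6) + 17 ≤ m ∧ f m + 8 ≤ 16 * (d + 6) ^ 3 ∧
      16 * (d + 6) ^ 3 < f (m + 1) + 8 := by
    by_contra hcon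
    push Not at hcon
    have hall : ∀ n, f (3 * (d + 6) + 17 + n) + 8 ≤ 16 * (d + 6) ^ 3 := by
      intro n
      induction n with
      | zero => exact hlow
      | succ n ih => exact hcon (3 * (d + 6) + 17 + n) (by omega) ih
    have hge : ∀ n, n ≤ f n := fun n => by
      simp only [f]
      nlinarith [Nat.zero_le (n * n), Nat.zero_le (n * d)]
    have h1 := hall (16 * (d + 6) ^ 3)
    have h2 := hge (3 * (d + 6) + 17 + 16 * (d + 6) ^ 3)
    omega
  obtain ⟨m, hm, h1, h2⟩ := hex
  rw [hstep] at h2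
  have heven : ∃ k, 16 * (d + 6) ^ 3 = f m + 2 * k := by
    have e1 : f m % 2 = 0 := by
      have : m * (m + 1) % 2 = 0 := Nat.even_iff.1 (Nat.even_mul_succ_self m)
      have h' : f m = m * (m + 1) + 2 * (m * (3 * (d + 6) + 3) + 2 * (3 * (d + 6) + 3) + 5
        + 4 * (d + 6) ^ 2 + 13 * (d + 6) + 7) := by
        simp only [f]
        ring
      omega
    exact ⟨(16 * (d + 6) ^ 3 - f m) / 2, by omega⟩
  obtain ⟨k, hk⟩ := heven
  have hk1 : 4 ≤ k := by omega
  have hk2 : k + 10 ≤ 2 * m := by omega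
  have fin : ∀ A B, A + B = k → (2 * m * (3 * (d + 6) + 3) + m * (m + 1) + 4 * (3 * (d + 6) + 3)
      + 2 * A + 2 * B + 10) + 8 * (d + 6) ^ 2 + 26 * (d + 6) + 14 = 16 * (d + 6) ^ 3 := by
    intro A B hAB
    rw [hk, ← hAB]
    simp only [f]
    ring
  by_cases hc : k ≤ m - 3
  · exact ⟨m, 1, k - 1, by omega, by omega, by omega, fin _ _ (by omega)⟩
  · exact ⟨m, k - (m - 4), m - 4, by omega, by omega, by omega, fin _ _ (by omega)⟩

theorem gadget_ex (t : ℕ) (ht : 3 ≤ t) : ∃ (X : Type) (_ : Fintype X) (g : Gadget X),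
    (∑ x, (3 * t + 3 + g.δ x)) + 8 * t ^ 2 + 26 * t + 14 = 16 * t ^ 3 := by
  by_cases h3 : t = 3
  · subst h3
    exact ⟨Fin 18, inferInstance, gad3, by decide +kernel⟩
  · obtain ⟨m, A, B, hA, hAB, hB, h⟩ := params_ex t (by omega)
    refine ⟨LX m, inferInstance, ladder m A B hA hAB hB, ?_⟩
    rw [ladder_sum]
    exact h

/-- For every `t ≥ 3` there exists a cubic 2-connected graph `H`
containing `G_t` as an induced subgraph (via an injection `f`), every edge of `H`
from `G_t` to the outside being incident to `v₁` or `v₂`, in which both `u₁` and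
`u₂` are Šoltés vertices. -/
theorem gt_extends_to_cubic_twoConnected_with_soltes_u1_u2 (t : ℕ) (ht : 3 ≤ t) :
    ∃ (n : ℕ) (H : SimpleGraph (Fin n)) (f : GtV t → Fin n),
      Function.Injective f ∧
      (∀ x y : GtV t, H.Adj (f x) (f y) ↔ (GtGraph t).Adj x y) ∧
      (∀ (x : GtV t) (w : Fin n), w ∉ Set.range f → H.Adj (f x) w →
        x = gtv1 t ∨ x = gtv2 t) ∧
      IsCubic H ∧ TwoConnected H ∧
      IsSoltes H (f (gtu1 t (by omega))) ∧ IsSoltes H (f (gtu2 t (by omega))) := by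
  obtain ⟨X, _, g, hs⟩ := gadget_ex t ht
  let e := Fintype.equivFin (GtV t ⊕ X)
  let H : SimpleGraph (Fin (Fintype.card (GtV t ⊕ X))) := (hGraph t g).comap e.symm
  have hH : ∀ x y, H.Adj (e x) (e y) ↔ (hGraph t g).Adj x y := fun x y => by
    simp [H]
  let φ : hGraph t g ≃g H := ⟨e, fun {x y} => hH x y⟩
  have hu1 : rv t X (t - 1) 1 = Sum.inl (gtu1 t (by omega)) := by
    simp [rv, gtu1, show t - 1 < 2 * t by omega]
  have hu2 : rv t X t 0 = Sum.inl (gtu2 t (by omega)) := by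
    simp [rv, gtu2, show 0 < t by omega]
  have s1 := iso_soltes φ (soltes_u1 t g (by omega) hs)
  have s2 := iso_soltes φ (soltes_u2 t g (by omega) hs)
  rw [hu1] at s1
  rw [hu2] at s2
  refine ⟨_, H, fun x => e (Sum.inl x), ?_, ?_, ?_, ?_, ?_, s1, s2⟩
  · exact e.injective.comp Sum.inl_injective
  · exact fun x y => hH _ _
  · intro x w hw hadj
    obtain ⟨v, rfl⟩ := e.surjective w
    rcases v with v | y
    · exact absurd ⟨v, rfl⟩ hw
    · rcases (hH _ _).1 hadj with h | h
      · exact Or.inl h.1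
      · exact Or.inr h.1
  · exact iso_cubic φ (hGraph_cubic t g (by omega))
  · exact iso_twoConnected φ (hGraph_two t g (by omega))
end

section
/- For every integer t ≥ 1, the graph G_t − u_1 is connected and W(G_t − u_1) − W(G_t) = 16t³ − 8t² − 26t − 14. -/
open SimpleGraph Finset

theorem dist_of_fun {V : Type*} [Nonempty V] (G : SimpleGraph V) (f : V → V → ℕ)
    (h0 : ∀ u, f u u = 0)
    (hl : ∀ u v w, G.Adj v w → f u w ≤ f u v + 1)
    (hd : ∀ u v, u ≠ v → ∃ w, G.Adj v w ∧ f u w + 1 ≤ f u v) :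
    G.Connected ∧ ∀ u v, G.dist u v = f u v := by
  have hw : ∀ n u v, f u v ≤ n → ∃ p : G.Walk v u, p.length ≤ f u v := by
    intro n
    induction n with
    | zero =>
      intro u v h
      by_cases huv : u = v
      · subst huv; exact ⟨Walk.nil, by simp⟩
      · obtain ⟨w, -, h2⟩ := hd u v huv
        omega
    | succ n ih =>
      intro u v h
      by_cases huv : u = v
      · subst huv; exact ⟨Walk.nil, by simp⟩
      · obtain ⟨w, h1, h2⟩ := hd u v huv
        obtain ⟨p, hp⟩ := ih u w (by omega)
        exact ⟨Walk.cons h1 p, by simp; omega⟩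
  have hc : G.Connected := by
    refine ⟨fun u v => ?_⟩
    obtain ⟨p, -⟩ := hw _ v u le_rfl
    exact ⟨p⟩
  have hlow : ∀ (u v w : V) (p : G.Walk v w), f u w ≤ f u v + p.length := by
    intro u v w p
    induction p with
    | nil => simp
    | cons h p ih =>
      have := hl u _ _ h
      simp only [Walk.length_cons]; omega
  refine ⟨hc, fun u v => le_antisymm ?_ ?_⟩
  · obtain ⟨p, hp⟩ := hw _ u v le_rfl
    rw [SimpleGraph.dist_comm]
    exact (SimpleGraph.dist_le p).trans hp
  · obtain ⟨p, hp⟩ := hc.exists_walk_length_eq_dist u v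
    have := hlow u _ _ p
    rw [h0] at this; omega

theorem even_sum_dist {V : Type*} [Fintype V] (G : SimpleGraph V) :
    2 ∣ ∑ u : V, ∑ v : V, G.dist u v := by
  classical
  rw [← ZMod.natCast_eq_zero_iff, ← Fintype.sum_prod_type', Nat.cast_sum]
  refine Finset.sum_involution (fun p _ => (p.2, p.1)) ?_ ?_ ?_ ?_
  · intro p _
    simp only
    rw [SimpleGraph.dist_comm (u := p.2)]
    exact CharTwo.add_self_eq_zero _
  · intro p _ hp he
    apply hp
    have : p.2 = p.1 := congrArg Prod.fst he
    simp [this]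
  · simp
  · simp

/-- Position of a diamond vertex along the ring. -/
def ringP (j a : ℕ) : ℕ := 3 * j + (if a = 0 then 0 else if a = 1 then 2 else 1)

/-- Distances in the gadget. -/
def gadD : Fin 8 → Fin 8 → ℕ :=
  ![![0, 1, 1, 2, 2, 2, 3, 3], ![1, 0, 2, 1, 2, 2, 3, 3], ![1, 2, 0, 2, 1, 1, 2, 2],
    ![2, 1, 2, 0, 1, 1, 2, 2], ![2, 2, 1, 1, 0, 2, 1, 3], ![2, 2, 1, 1, 2, 0, 3, 1],
    ![3, 3, 2, 2, 1, 3, 0, 4], ![3, 3, 2, 2, 3, 1, 4, 0]]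

/-- Cyclic or path distance, between positions. -/
def cycD (t : ℕ) (pr : Bool) (j k p q : ℕ) : ℕ :=
  if pr then
    (if (j < t ↔ k < t) then (p - q) + (q - p) else 6 * t + 2 - ((p - q) + (q - p)))
  else min ((p - q) + (q - p)) (6 * t + 2 - ((p - q) + (q - p)))

/-- Distance between diamond vertices. -/
def ringD (t : ℕ) (pr : Bool) (j a k b : ℕ) : ℕ :=
  if j = k ∧ 2 ≤ a ∧ 2 ≤ b ∧ a ≠ b then 1 else cycD t pr j k (ringP j a) (ringP k b)

/-- Distance between a diamond vertex and a gadget vertex. -/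
def mixD (t : ℕ) (j a : ℕ) (m : Fin 8) : ℕ :=
  if j < t then ringP j a + 1 + gadD 1 m else 6 * t - ringP j a + gadD 0 m

/-- The distance function of the graph (`pr = false`) or vertex-deleted graph (`pr = true`). -/
def gtD (t : ℕ) (pr : Bool) : GtV t → GtV t → ℕ
  | Sum.inl (j, a), Sum.inl (k, b) => ringD t pr j a k b
  | Sum.inl (j, a), Sum.inr m => mixD t j a m
  | Sum.inr m, Sum.inl (j, a) => mixD t j a m
  | Sum.inr m, Sum.inr m' => gadD m m'

theorem gtD_self (t : ℕ) (pr : Bool) (u : GtV t) : gtD t pr u u = 0 := by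
  rcases u with ⟨j, a⟩ | m
  · cases pr <;> simp [gtD, ringD, cycD]
  · fin_cases m <;> rfl

set_option maxHeartbeats 4000000 in
theorem gtD_lip_rel (t : ℕ) (ht : 1 ≤ t) (pr : Bool) (u v w : GtV t)
    (hv : pr = true → v ≠ gtu1 t ht) (hw : pr = true → w ≠ gtu1 t ht) (h : gtRel t v w) :
    gtD t pr u w ≤ gtD t pr u v + 1 ∧ gtD t pr u v ≤ gtD t pr u w + 1 := by
  rcases v with ⟨⟨k, hk⟩, b, hb⟩ | m <;> rcases w with ⟨⟨l, hl⟩, c, hc⟩ | m'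
  · have hv' : pr = true → ¬ (k = t - 1 ∧ b = 1) := by simpa [gtu1, Fin.ext_iff] using hv
    have hw' : pr = true → ¬ (l = t - 1 ∧ c = 1) := by simpa [gtu1, Fin.ext_iff] using hw
    clear hv hw
    simp only [gtRel, diamondRel, Fin.mk.injEq] at h
    rcases u with ⟨⟨j, hj⟩, a, ha⟩ | n
    · simp only [gtD]
      rcases h with ⟨rfl, h⟩ | ⟨rfl, rfl, rfl⟩
      · rcases h with ⟨rfl, rfl⟩ | ⟨rfl, rfl⟩ | ⟨rfl, rfl⟩ | ⟨rfl, rfl⟩ | ⟨rfl, rfl⟩ <;>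
        interval_cases a <;> cases pr <;> simp [ringD, cycD, ringP] at hv' hw' ⊢ <;> (try split_ifs) <;> omega
      · interval_cases a <;> cases pr <;> simp [ringD, cycD, ringP] at hv' hw' ⊢ <;> (try split_ifs) <;> omega
    · have h1 : gadD 0 n ≤ gadD 1 n + 1 ∧ gadD 1 n ≤ gadD 0 n + 1 := by
        revert n; decide
      simp only [gtD]
      rcases h with ⟨rfl, h⟩ | ⟨rfl, rfl, rfl⟩
      · rcases h with ⟨rfl, rfl⟩ | ⟨rfl, rfl⟩ | ⟨rfl, rfl⟩ | ⟨rfl, rfl⟩ | ⟨rfl, rfl⟩ <;>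
        cases pr <;> simp [mixD, ringP] at hv' hw' ⊢ <;> (try split_ifs) <;> omega
      · cases pr <;> simp [mixD, ringP] at hv' hw' ⊢ <;> (try split_ifs) <;> omega
  · simp only [gtRel] at h
    obtain ⟨rfl, rfl, h⟩ := h
    obtain rfl : m' = 0 := Fin.ext h
    rcases u with ⟨⟨j, hj⟩, a, ha⟩ | n
    · simp only [gtD]
      interval_cases a <;> cases pr <;> simp [ringD, cycD, ringP, mixD, gadD] <;> (try split_ifs) <;> omega
    · simp only [gtD]
      have h1 : gadD 0 n = gadD n 0 := by revert n; decide
      simp [mixD, ringP, h1]; (try split_ifs) <;> omega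
  · simp only [gtRel] at h
    obtain ⟨h, rfl, rfl⟩ := h
    obtain rfl : m = 1 := Fin.ext h
    rcases u with ⟨⟨j, hj⟩, a, ha⟩ | n
    · simp only [gtD]
      interval_cases a <;> cases pr <;> simp [ringD, cycD, ringP, mixD, gadD] <;> (try split_ifs) <;> omega
    · simp only [gtD]
      have h1 : gadD 1 n = gadD n 1 := by revert n; decide
      simp [mixD, ringP, h1]; (try split_ifs) <;> omega
  · have key : ∀ m m' : Fin 8, gtRel t (Sum.inr m) (Sum.inr m') → ∀ n,
        gadD n m' ≤ gadD n m + 1 ∧ gadD n m ≤ gadD n m' + 1 := by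
      simp only [gtRel]; decide
    rcases u with ⟨⟨j, hj⟩, a, ha⟩ | n
    · have h0 := key m m' h 0
      have h1 := key m m' h 1
      simp only [gtD, mixD]
      split_ifs <;> omega
    · exact key m m' h n

theorem gtD_lip (t : ℕ) (ht : 1 ≤ t) (pr : Bool) (u v w : GtV t)
    (hv : pr = true → v ≠ gtu1 t ht) (hw : pr = true → w ≠ gtu1 t ht)
    (h : (GtGraph t).Adj v w) :
    gtD t pr u w ≤ gtD t pr u v + 1 := by
  rw [GtGraph, SimpleGraph.fromRel_adj] at h
  rcases h.2 with h | h
  · exact (gtD_lip_rel t ht pr u v w hv hw h).1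
  · exact (gtD_lip_rel t ht pr u w v hw hv h).2

theorem gt_adj {t : ℕ} {v w : GtV t} (hne : v ≠ w) (h : gtRel t v w) :
    (GtGraph t).Adj v w ∧ (GtGraph t).Adj w v := by
  have : (GtGraph t).Adj v w := by
    rw [GtGraph, SimpleGraph.fromRel_adj]; exact ⟨hne, Or.inl h⟩
  exact ⟨this, this.symm⟩

theorem gt_adj_in {t : ℕ} (k : Fin (2 * t)) (b c : Fin 4) (h : diamondRel b c ∨ diamondRel c b) :
    (GtGraph t).Adj (Sum.inl (k, b)) (Sum.inl (k, c)) := by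
  have hne : b ≠ c := by
    rintro rfl
    simp only [diamondRel] at h; omega
  rw [GtGraph, SimpleGraph.fromRel_adj]
  refine ⟨by simpa using hne, ?_⟩
  rcases h with h | h
  · exact Or.inl (Or.inl ⟨rfl, h⟩)
  · exact Or.inr (Or.inl ⟨rfl, h⟩)

set_option maxHeartbeats 4000000 in
theorem gtD_desc_inl (t : ℕ) (ht : 1 ≤ t) (pr : Bool) (u : GtV t) (k : Fin (2 * t)) (b : Fin 4)
    (huv : u ≠ Sum.inl (k, b))
    (hu : pr = true → u ≠ gtu1 t ht) (hv : pr = true → Sum.inl (k, b) ≠ gtu1 t ht) :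
    ∃ w, (pr = true → w ≠ gtu1 t ht) ∧ (GtGraph t).Adj (Sum.inl (k, b)) w ∧
      gtD t pr u w + 1 ≤ gtD t pr u (Sum.inl (k, b)) := by
  by_contra! hcon
  have hin : ∀ c : Fin 4, (pr = true → ¬ ((k : ℕ) = t - 1 ∧ (c : ℕ) = 1)) →
      (diamondRel b c ∨ diamondRel c b) →
      gtD t pr u (Sum.inl (k, b)) < gtD t pr u (Sum.inl (k, c)) + 1 := by
    intro c hc h
    refine hcon _ ?_ (gt_adj_in k b c h)
    simpa [gtu1, Fin.ext_iff] using hc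
  have hv' : pr = true → ¬ ((k : ℕ) = t - 1 ∧ (b : ℕ) = 1) := by
    simpa [gtu1, Fin.ext_iff] using hv
  have hnext : ∀ l : Fin (2 * t), (l : ℕ) = k + 1 → (b : ℕ) = 1 →
      gtD t pr u (Sum.inl (k, b)) < gtD t pr u (Sum.inl (l, 0)) + 1 := by
    intro l hl hb
    refine hcon _ ?_ (gt_adj ?_ ?_).1
    · simp [gtu1]
    · simp only [ne_eq, Sum.inl.injEq, Prod.mk.injEq, Fin.ext_iff]; omega
    · simp [gtRel, hl, hb]
  have hprev : ∀ l : Fin (2 * t), (k : ℕ) = l + 1 → (b : ℕ) = 0 → (pr = true → (l : ℕ) ≠ t - 1) →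
      gtD t pr u (Sum.inl (k, b)) < gtD t pr u (Sum.inl (l, 1)) + 1 := by
    intro l hl hb hh
    refine hcon _ ?_ (gt_adj ?_ ?_).2
    · simpa [gtu1, Fin.ext_iff] using hh
    · simp only [ne_eq, Sum.inl.injEq, Prod.mk.injEq, Fin.ext_iff]; omega
    · simp [gtRel, hl, hb]
  have hz1 : (k : ℕ) = 2 * t - 1 → (b : ℕ) = 1 →
      gtD t pr u (Sum.inl (k, b)) < gtD t pr u (Sum.inr 0) + 1 := by
    intro hl hb
    refine hcon _ ?_ (gt_adj ?_ ?_).1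
    · simp [gtu1]
    · simp
    · simp [gtRel, hl, hb]
  have hz2 : (k : ℕ) = 0 → (b : ℕ) = 0 →
      gtD t pr u (Sum.inl (k, b)) < gtD t pr u (Sum.inr 1) + 1 := by
    intro hl hb
    refine hcon _ ?_ (gt_adj ?_ ?_).2
    · simp [gtu1]
    · simp
    · simp [gtRel, hl, hb]
  clear hcon hv
  have e0 := hin 0
  have e1 := hin 1
  have e2 := hin 2
  have e3 := hin 3
  clear hin
  obtain ⟨k, hk⟩ := k
  have f1 : ∀ hl : k + 1 < 2 * t, _ := fun hl => hnext ⟨k + 1, hl⟩ rfl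
  have f2 : ∀ hl : 0 < k, _ := fun hl => hprev ⟨k - 1, by omega⟩ (by simp; omega)
  clear hnext hprev
  rcases u with ⟨⟨j, hj⟩, a⟩ | n
  · have hu' : pr = true → ¬ (j = t - 1 ∧ (a : ℕ) = 1) := by
      simpa [gtu1, Fin.ext_iff] using hu
    clear hu
    obtain ⟨a, ha⟩ := a
    obtain ⟨b, hb⟩ := b
    have huv' : j = k → a ≠ (b : ℕ) := by
      intro h1 h2
      exact huv (by subst h1; simp only [Fin.ext_iff, Sum.inl.injEq, Prod.mk.injEq]; simp [h2])
    clear huv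
    have hp1 : 3 * j ≤ ringP j a := by unfold ringP; omega
    have hp2 : ringP j a ≤ 3 * j + 2 := by unfold ringP; split_ifs <;> omega
    have hp3 : a = 1 ∨ ringP j a ≤ 3 * j + 1 := by unfold ringP; split_ifs <;> omega
    have hp4 : ringP j a ≠ 3 * j + 2 ∨ a = 1 := by omega
    have hp5 : ringP j a ≠ 3 * j ∨ a = 0 := by unfold ringP; split_ifs <;> omega
    have hp6 : ringP j a ≠ 3 * j + 1 ∨ 2 ≤ a := by unfold ringP; split_ifs <;> omega
    have hnt : ∀ k' c, (j = k' → a ≤ 1 ∨ c ≤ 1 ∨ a = c) →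
        ringD t pr j a k' c = cycD t pr j k' (ringP j a) (ringP k' c) := by
      intro k' c h
      unfold ringD
      rw [if_neg (by omega)]
    have q0 : ∀ l, ringP l 0 = 3 * l := fun l => by simp [ringP]
    have q1 : ∀ l, ringP l 1 = 3 * l + 2 := fun l => by simp [ringP]
    have q2 : ∀ l, ringP l 2 = 3 * l + 1 := fun l => by simp [ringP]
    have q3 : ∀ l, ringP l 3 = 3 * l + 1 := fun l => by simp [ringP]
    have v0 : ((0 : Fin 4) : ℕ) = 0 := rfl
    have v1 : ((1 : Fin 4) : ℕ) = 1 := rfl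
    have v2 : ((2 : Fin 4) : ℕ) = 2 := rfl
    have v3 : ((3 : Fin 4) : ℕ) = 3 := rfl
    have g0 : gadD 0 0 = 0 ∧ gadD 0 1 = 1 ∧ gadD 1 0 = 1 ∧ gadD 1 1 = 0 := by decide
    obtain ⟨g00, g01, g10, g11⟩ := g0
    simp only [gtD, diamondRel, v0, v1, v2, v3, mixD, g00, g01, g10, g11, true_and, and_true] at *
    have hC : (b : ℕ) ≤ 1 → cycD t pr j k (ringP j a) (ringP k b) <
        cycD t pr j k (ringP j a) (3 * k + 1) + 1 := by
      intro hb
      rw [← hnt k b (by omega)]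
      by_cases ha3 : a = 3
      · have := e3 (by intro _; omega) (by omega)
        rwa [hnt k 3 (by omega), q3] at this
      · have := e2 (by intro _; omega) (by omega)
        rwa [hnt k 2 (by omega), q2] at this
    by_cases hb2 : 2 ≤ b
    · clear f1 f2 hz1 hz2 hC
      have e0 := e0 (by intro _; omega) (by omega)
      have e1 := fun h => e1 h (by omega)
      have qb : ringP k b = 3 * k + 1 := by unfold ringP; split_ifs <;> omega
      by_cases htw : j = k ∧ 2 ≤ a
      · obtain ⟨rfl, ha2⟩ := htw
        have hab := huv' rfl
        have hd1 : ringD t pr j a j b = 1 := by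
          unfold ringD; rw [if_pos (by omega)]
        have hd0 : ringD t pr j a j a = 0 := by
          simp [ringD, cycD]
        obtain ha2 | ha3 : a = 2 ∨ a = 3 := by omega
        · subst ha2
          have := e2 (by intro _; omega) (by omega)
          omega
        · subst ha3
          have := e3 (by intro _; omega) (by omega)
          omega
      · clear e2 e3
        rw [hnt k b (by omega), hnt k 0 (by omega), q0, qb] at e0
        rw [hnt k b (by omega), hnt k 1 (by omega), q1, qb] at e1
        generalize ringP j a = p at *
        have hpq : p ≠ 3 * k + 1 := by omega
        clear hnt q0 q1 q2 q3
        unfold cycD at e0 e1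
        cases pr
        · simp only [Bool.false_eq_true, if_false, false_imp_iff, forall_const] at e0 e1
          clear * - hpq hp1 hp2 ht hj hk e0 e1
          rcases lt_or_gt_of_ne hpq with h | h <;>
            rcases le_or_gt (3 * k + 1) (p + 3 * t + 1) with h2 | h2 <;>
            rcases le_or_gt p (3 * k + 1 + 3 * t + 1) with h3 | h3 <;> omega
        · simp only [if_true, forall_const] at e0 e1 hu' hv'
          by_cases hjt : j < t ↔ k < t
          · simp only [if_pos hjt] at e0 e1
            clear * - hpq hp1 hp2 hp3 ht hj hk e0 e1 hjt hu' hv'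
            rcases lt_or_gt_of_ne hpq with h | h <;>
              rcases le_or_gt (3 * k + 1) (p + 3 * t + 1) with h2 | h2 <;>
              rcases le_or_gt p (3 * k + 1 + 3 * t + 1) with h3 | h3 <;> omega
          · simp only [if_neg hjt] at e0 e1
            clear * - hpq hp1 hp2 hp3 ht hj hk e0 e1 hjt hu' hv'
            rcases lt_or_gt_of_ne hpq with h | h <;>
              rcases le_or_gt (3 * k + 1) (p + 3 * t + 1) with h2 | h2 <;>
              rcases le_or_gt p (3 * k + 1 + 3 * t + 1) with h3 | h3 <;> omega
    · clear e0 e1 e2 e3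
      have hC := hC (by omega)
      obtain hb0 | hb1 : b = 0 ∨ b = 1 := by omega
      · subst hb0
        clear f1 hz1
        simp only [forall_const] at f2 hz2 hC huv'
        have hc0 := hnt k 0 (by omega)
        rw [hc0, q0] at f2 hz2
        rw [q0] at hC
        have f2 := fun h => f2 h
        simp only [hnt (k - 1) 1 (by omega), q1] at f2
        generalize ringP j a = p at *
        have hpq : p ≠ 3 * k := by omega
        clear hnt q0 q1 q2 q3 hc0
        unfold cycD at f2 hz2 hC
        cases pr
        · simp only [Bool.false_eq_true, if_false, false_imp_iff, forall_const] at f2 hz2 hC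
          by_cases hjt : j < t
          · simp only [if_pos hjt] at hz2
            clear * - hpq hp1 hp2 ht hj hk f2 hz2 hC hjt
            rcases lt_or_gt_of_ne hpq with h | h <;>
              rcases le_or_gt (3 * k) (p + 3 * t + 1) with h2 | h2 <;>
              rcases le_or_gt p (3 * k + 3 * t + 1) with h3 | h3 <;> omega
          · simp only [if_neg hjt] at hz2
            clear * - hpq hp1 hp2 ht hj hk f2 hz2 hC hjt
            rcases lt_or_gt_of_ne hpq with h | h <;>
              rcases le_or_gt (3 * k) (p + 3 * t + 1) with h2 | h2 <;>
              rcases le_or_gt p (3 * k + 3 * t + 1) with h3 | h3 <;> omega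
        · simp only [if_true, forall_const] at f2 hz2 hC hu' hv'
          by_cases hjt : j < t <;> by_cases hkt : k < t <;> by_cases hkt1 : k - 1 < t <;>
            simp only [hjt, hkt, hkt1, if_true, if_false, iff_self, iff_true, iff_false,
              not_true, not_false_iff] at f2 hz2 hC <;>
            (clear hp3 hp4 hp5 hp6; omega)
      · subst hb1
        clear f2 hz2
        simp only [forall_const] at f1 hz1 hC huv'
        have hc0 := hnt k 1 (by omega)
        rw [hc0, q1] at f1 hz1
        rw [q1] at hC
        simp only [hnt (k + 1) 0 (by omega), q0] at f1
        generalize ringP j a = p at *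
        have hpq : p ≠ 3 * k + 2 := by omega
        clear hnt q0 q1 q2 q3 hc0
        unfold cycD at f1 hz1 hC
        cases pr
        · simp only [Bool.false_eq_true, if_false, false_imp_iff, forall_const] at f1 hz1 hC
          by_cases hjt : j < t
          · simp only [if_pos hjt] at hz1
            clear * - hpq hp1 hp2 ht hj hk f1 hz1 hC hjt
            rcases lt_or_gt_of_ne hpq with h | h <;>
              rcases le_or_gt (3 * k + 2) (p + 3 * t + 1) with h2 | h2 <;>
              rcases le_or_gt p (3 * k + 2 + 3 * t + 1) with h3 | h3 <;> omega
          · simp only [if_neg hjt] at hz1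
            clear * - hpq hp1 hp2 ht hj hk f1 hz1 hC hjt
            rcases lt_or_gt_of_ne hpq with h | h <;>
              rcases le_or_gt (3 * k + 2) (p + 3 * t + 1) with h2 | h2 <;>
              rcases le_or_gt p (3 * k + 2 + 3 * t + 1) with h3 | h3 <;> omega
        · simp only [if_true, forall_const] at f1 hz1 hC hu' hv'
          by_cases hjt : j < t <;> by_cases hkt : k < t <;> by_cases hkt1 : k + 1 < t <;>
            simp only [hjt, hkt, hkt1, if_true, if_false, iff_self, iff_true, iff_false,
              not_true, not_false_iff] at f1 hz1 hC <;>
            (clear hp3 hp4 hp5 hp6; omega)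
  · have h1 : gadD 0 n ≤ gadD 1 n + 1 ∧ gadD 1 n ≤ gadD 0 n + 1 ∧ gadD 0 n = gadD n 0 ∧
        gadD 1 n = gadD n 1 := by
      clear e0 e1 e2 e3 f1 f2 hz1 hz2 hu huv
      revert n; decide
    obtain ⟨h1, h2, h3, h4⟩ := h1
    clear hu
    simp only [gtD, diamondRel] at *
    fin_cases b <;> cases pr <;>
      simp [ringP, mixD] at * <;> grind

set_option synthInstance.maxSize 100000 in
set_option synthInstance.maxHeartbeats 400000 in
theorem gtD_desc_inr (t : ℕ) (ht : 1 ≤ t) (pr : Bool) (u : GtV t) (m : Fin 8)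
    (huv : u ≠ Sum.inr m) (hu : pr = true → u ≠ gtu1 t ht) :
    ∃ w, (pr = true → w ≠ gtu1 t ht) ∧ (GtGraph t).Adj (Sum.inr m) w ∧
      gtD t pr u w + 1 ≤ gtD t pr u (Sum.inr m) := by
  have hgad : ∀ n m : Fin 8, n ≠ m → ∃ m' : Fin 8, m ≠ m' ∧
      (gtRel t (Sum.inr m) (Sum.inr m') ∨ gtRel t (Sum.inr m') (Sum.inr m)) ∧
      gadD n m' + 1 ≤ gadD n m := by
    simp only [gtRel]; decide
  rcases u with ⟨⟨j, hj⟩, a⟩ | n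
  · by_cases hjt : j < t
    · by_cases hm : m = 1
      · subst hm
        · refine ⟨Sum.inl (⟨0, by omega⟩, 0), by simp [gtu1], (gt_adj (by simp) (by simp [gtRel])).1, ?_⟩
          fin_cases a <;> cases pr <;> simp [gtD, ringD, cycD, ringP, mixD, gadD] <;> grind
      · obtain ⟨m', h1, h2, h3⟩ := hgad 1 m (Ne.symm hm)
        refine ⟨Sum.inr m', by simp [gtu1], ?_, ?_⟩
        · rw [GtGraph, SimpleGraph.fromRel_adj]; exact ⟨by simpa using h1, h2⟩
        · simp [gtD, mixD, hjt]; omega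
    · by_cases hm : m = 0
      · subst hm
        refine ⟨Sum.inl (⟨2 * t - 1, by omega⟩, 1), ?_, (gt_adj (by simp) (by simp [gtRel])).2, ?_⟩
        · simp [gtu1]; omega
        · fin_cases a <;> cases pr <;> simp [gtD, ringD, cycD, ringP, mixD, gadD] <;> grind
      · obtain ⟨m', h1, h2, h3⟩ := hgad 0 m (Ne.symm hm)
        refine ⟨Sum.inr m', by simp [gtu1], ?_, ?_⟩
        · rw [GtGraph, SimpleGraph.fromRel_adj]; exact ⟨by simpa using h1, h2⟩
        · simp [gtD, mixD, hjt]; omega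
  · obtain ⟨m', h1, h2, h3⟩ := hgad n m (by simpa using huv)
    refine ⟨Sum.inr m', by simp [gtu1], ?_, h3⟩
    rw [GtGraph, SimpleGraph.fromRel_adj]; exact ⟨by simpa using h1, h2⟩

theorem gtD_desc (t : ℕ) (ht : 1 ≤ t) (pr : Bool) (u v : GtV t) (huv : u ≠ v)
    (hu : pr = true → u ≠ gtu1 t ht) (hv : pr = true → v ≠ gtu1 t ht) :
    ∃ w, (pr = true → w ≠ gtu1 t ht) ∧ (GtGraph t).Adj v w ∧
      gtD t pr u w + 1 ≤ gtD t pr u v := by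
  rcases v with ⟨k, b⟩ | m
  · exact gtD_desc_inl t ht pr u k b huv hu hv
  · exact gtD_desc_inr t ht pr u m huv hu

theorem gt_dist (t : ℕ) (ht : 1 ≤ t) (u v : GtV t) :
    (GtGraph t).dist u v = gtD t false u v := by
  refine (dist_of_fun _ _ (gtD_self t false) ?_ ?_).2 u v
  · intro u v w h
    exact gtD_lip t ht false u v w (by simp) (by simp) h
  · intro u v h
    obtain ⟨w, -, h1, h2⟩ := gtD_desc t ht false u v h (by simp) (by simp)
    exact ⟨w, h1, h2⟩

theorem gt_del_dist (t : ℕ) (ht : 1 ≤ t) :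
    (deleteVertex (GtGraph t) (gtu1 t ht)).Connected ∧ ∀ u v : {u : GtV t // u ≠ gtu1 t ht},
    (deleteVertex (GtGraph t) (gtu1 t ht)).dist u v = gtD t true u.1 v.1 := by
  have : Nonempty {u : GtV t // u ≠ gtu1 t ht} := ⟨⟨Sum.inr 0, by simp [gtu1]⟩⟩
  refine dist_of_fun _ (fun u v : {u : GtV t // u ≠ gtu1 t ht} => gtD t true u.1 v.1) (fun u => gtD_self t true u.1) ?_ ?_
  · intro u v w h
    exact gtD_lip t ht true u.1 v.1 w.1 (fun _ => v.2) (fun _ => w.2) h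
  · intro u v h
    obtain ⟨w, h0, h1, h2⟩ := gtD_desc t ht true u.1 v.1 (fun e => h (Subtype.ext e))
      (fun _ => u.2) (fun _ => v.2)
    exact ⟨⟨w, h0 rfl⟩, h1, h2⟩

theorem ringD_symm (t : ℕ) (pr : Bool) (j a k b : ℕ) :
    ringD t pr j a k b = ringD t pr k b j a := by
  have h1 : (j = k ∧ 2 ≤ a ∧ 2 ≤ b ∧ a ≠ b) ↔ (k = j ∧ 2 ≤ b ∧ 2 ≤ a ∧ b ≠ a) := by
    constructor <;> (rintro ⟨h1, h2, h3, h4⟩; exact ⟨h1.symm, h3, h2, h4.symm⟩)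
  have h2 : (j < t ↔ k < t) ↔ (k < t ↔ j < t) := iff_comm
  unfold ringD cycD
  simp only [h1, h2, add_comm (ringP j a - ringP k b)]

theorem gadD_symm (m n : Fin 8) : gadD m n = gadD n m := by
  revert m n; decide

theorem gtD_symm (t : ℕ) (pr : Bool) (u v : GtV t) : gtD t pr u v = gtD t pr v u := by
  rcases u with ⟨j, a⟩ | m <;> rcases v with ⟨k, b⟩ | n
  · exact ringD_symm ..
  · rfl
  · rfl
  · exact gadD_symm ..

/-- Sum of all entries, split off one vertex. -/
theorem sum_split {V : Type*} [Fintype V] (f : V → V → ℕ) (a : V)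
    (h0 : f a a = 0) (hs : ∀ u v, f u v = f v u) :
    ∑ u : V, ∑ v : V, f u v =
      (∑ u : {u : V // u ≠ a}, ∑ v : {u : V // u ≠ a}, f u.1 v.1) + 2 * ∑ v : V, f a v := by
  classical
  have key : ∀ g : V → ℕ, ∑ u : V, g u = g a + ∑ u : {u : V // u ≠ a}, g u.1 := by
    intro g
    rw [Fintype.sum_eq_add_sum_subtype_ne g a]
    congr 1
    apply Finset.sum_congr _ (fun _ _ => rfl)
    ext; simp
  rw [key]
  have h1 : ∀ u : {u : V // u ≠ a}, ∑ v : V, f u.1 v = f a u.1 + ∑ v : {u : V // u ≠ a}, f u.1 v.1 := by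
    intro u
    rw [key, hs]
  simp only [h1, Finset.sum_add_distrib]
  have h2 := key (fun v => f a v)
  simp only [h0] at h2
  omega

theorem sum_fin_two_mul (t : ℕ) (g : ℕ → ℤ) :
    ∑ j : Fin (2 * t), g j = ∑ j ∈ range t, g j + ∑ i ∈ range t, g (t + i) := by
  rw [Fin.sum_univ_eq_sum_range g, two_mul, Finset.sum_range_add]

theorem sum_lin (n : ℕ) (a b : ℤ) :
    2 * ∑ i ∈ range n, (a + b * (i : ℤ)) = 2 * n * a + b * n * (n - 1) := by
  induction n with
  | zero => simp
  | succ n ih => rw [Finset.sum_range_succ, mul_add, ih]; push_cast; ring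

theorem sum_quad (n : ℕ) :
    ∑ j ∈ range n, (34 + 80 * (j : ℤ) + 48 * (j : ℤ) ^ 2) = 16 * (n : ℤ) ^ 3 + 16 * (n : ℤ) ^ 2 + 2 * (n : ℤ) := by
  induction n with
  | zero => simp
  | succ n ih => rw [Finset.sum_range_succ, ih]; push_cast; ring

/-- Sum of the distances from `u₁`. -/
theorem gtD_u1_sum (t : ℕ) (ht : 1 ≤ t) :
    ((∑ v : GtV t, gtD t true (gtu1 t ht) v : ℕ) : ℤ) = 24 * t ^ 2 + 28 * t + 14 := by
  rw [Fintype.sum_sum_type, Fintype.sum_prod_type]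
  simp only [gtu1, gtD]
  push_cast
  have h1 : ∑ x : Fin 8, (mixD t (t - 1) 1 x : ℤ) = 24 * t + 14 := by
    have : t - 1 < t := by omega
    simp [Fin.sum_univ_eight, mixD, ringP, gadD, this]
    omega
  have h2 := sum_fin_two_mul t (fun j => ∑ b : Fin 4, (ringD t true (t - 1) 1 j b : ℤ))
  have h3 : ∀ j ∈ range t, ∑ b : Fin 4, (ringD t true (t - 1) 1 j b : ℤ) =
      (12 * t - 8) + (-12) * (j : ℤ) := by
    intro j hj
    have hj := Finset.mem_range.1 hj
    have : t - 1 < t := by omega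
    simp [Fin.sum_univ_four, ringD, cycD, ringP, hj, this]
    omega
  have h4 : ∀ j ∈ range t, ∑ b : Fin 4, (ringD t true (t - 1) 1 ((t + j : ℕ)) b : ℤ) =
      (24 * t) + (-12) * (j : ℤ) := by
    intro j hj
    have hj := Finset.mem_range.1 hj
    have : t - 1 < t := by omega
    simp [Fin.sum_univ_four, ringD, cycD, ringP, this]
    omega
  rw [Finset.sum_congr rfl h3, Finset.sum_congr rfl h4] at h2
  have h5 := sum_lin t (12 * t - 8) (-12)
  have h6 := sum_lin t (24 * t) (-12)
  have e1 : (((1 : Fin 4) : ℕ)) = 1 := rfl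
  simp only [e1]
  rw [h1, h2]
  linarith

/-- Excess of the path distance over the cyclic distance. -/
theorem ringD_diff (t j k a b : ℕ) (hj : j < t) (hk : t ≤ k) (hk2 : k < 2 * t) :
    (ringD t true j a k b : ℤ) - ringD t false j a k b =
      max 0 (6 * t + 2 - 2 * ((ringP k b : ℤ) - ringP j a)) := by
  have hne : ¬ (j = k ∧ 2 ≤ a ∧ 2 ≤ b ∧ a ≠ b) := by omega
  have hne2 : ¬ (j < t ↔ k < t) := by omega
  have hp : ringP j a ≤ 3 * j + 2 := by unfold ringP; split_ifs <;> omega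
  have hq : ringP k b ≤ 3 * k + 2 := by unfold ringP; split_ifs <;> omega
  have hq2 : 3 * k ≤ ringP k b := by unfold ringP; omega
  simp only [ringD, cycD, if_neg hne, if_neg hne2, if_true, Bool.false_eq_true, if_false]
  omega

theorem ringD_diff_same (t j k a b : ℕ) (h : j < t ↔ k < t) (hj : j < 2 * t) (hk : k < 2 * t) :
    (ringD t true j a k b : ℤ) - ringD t false j a k b = 0 := by
  have hp : ringP j a ≤ 3 * j + 2 := by unfold ringP; split_ifs <;> omega
  have hp2 : 3 * j ≤ ringP j a := by unfold ringP; omega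
  have hq : ringP k b ≤ 3 * k + 2 := by unfold ringP; split_ifs <;> omega
  have hq2 : 3 * k ≤ ringP k b := by unfold ringP; omega
  simp only [ringD, cycD, if_pos h, if_true, Bool.false_eq_true, if_false]
  split_ifs <;> omega

/-- Total excess between two diamonds. -/
def blockD (t j k : ℕ) : ℤ :=
  ∑ a : Fin 4, ∑ b : Fin 4, ((ringD t true j a k b : ℤ) - ringD t false j a k b)

theorem blockD_symm (t j k : ℕ) : blockD t j k = blockD t k j := by
  unfold blockD
  rw [Finset.sum_comm]
  simp only [ringD_symm t _ j _ k _]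

theorem blockD_same (t j k : ℕ) (h : j < t ↔ k < t) (hj : j < 2 * t) (hk : k < 2 * t) :
    blockD t j k = 0 := by
  unfold blockD
  simp only [ringD_diff_same t j k _ _ h hj hk, Finset.sum_const_zero]

theorem blockD_cross (t j i : ℕ) (hj : j < t) (hi : i < t) :
    blockD t j (t + i) =
      if i < j then 32 + 96 * ((j : ℤ) - i) else if i = j then 34 else 0 := by
  unfold blockD
  simp only [ringD_diff t j (t + i) _ _ hj (by omega) (by omega)]
  simp [Fin.sum_univ_four, ringP]
  split_ifs <;> omega

theorem blockD_row (t j : ℕ) (hj : j < t) :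
    ∑ i ∈ range t, blockD t j (t + i) = 34 + 80 * (j : ℤ) + 48 * (j : ℤ) ^ 2 := by
  rw [Finset.sum_congr rfl (fun i hi => blockD_cross t j i hj (Finset.mem_range.1 hi))]
  obtain ⟨s, rfl⟩ : ∃ s, t = j + 1 + s := ⟨t - (j + 1), by omega⟩
  rw [Finset.sum_range_add, Finset.sum_range_succ]
  have h1 : ∀ i ∈ range j, (if i < j then 32 + 96 * ((j : ℤ) - i) else if i = j then 34 else 0) =
      (32 + 96 * (j : ℤ)) + (-96) * (i : ℤ) := by
    intro i hi
    rw [if_pos (Finset.mem_range.1 hi)]; ring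
  have h2 : ∀ i ∈ range s, (if j + 1 + i < j then 32 + 96 * ((j : ℤ) - ((j + 1 + i : ℕ) : ℤ))
      else if j + 1 + i = j then 34 else 0) = (0 : ℤ) := by
    intro i hi
    rw [if_neg (by omega), if_neg (by omega)]
  rw [Finset.sum_congr rfl h1, Finset.sum_congr rfl h2]
  have h5 := sum_lin j (32 + 96 * (j : ℤ)) (-96)
  simp only [lt_irrefl, if_false, if_true, Finset.sum_const_zero]
  linarith

theorem blockD_total (t : ℕ) :
    ∑ j : Fin (2 * t), ∑ k : Fin (2 * t), blockD t j k = 2 * (16 * t ^ 3 + 16 * t ^ 2 + 2 * t) := by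
  rw [sum_fin_two_mul t (fun j => ∑ k : Fin (2 * t), blockD t j k)]
  have hrow : ∀ j : ℕ, ∑ k : Fin (2 * t), blockD t j k =
      ∑ k ∈ range t, blockD t j k + ∑ i ∈ range t, blockD t j (t + i) :=
    fun j => sum_fin_two_mul t (fun k => blockD t j k)
  simp only [hrow, Finset.sum_add_distrib]
  have z1 : ∑ j ∈ range t, ∑ k ∈ range t, blockD t j k = 0 := by
    refine Finset.sum_eq_zero fun j hj => Finset.sum_eq_zero fun k hk => ?_
    rw [Finset.mem_range] at hj hk
    exact blockD_same t j k (by omega) (by omega) (by omega)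
  have z2 : ∑ j ∈ range t, ∑ k ∈ range t, blockD t (t + j) (t + k) = 0 := by
    refine Finset.sum_eq_zero fun j hj => Finset.sum_eq_zero fun k hk => ?_
    rw [Finset.mem_range] at hj hk
    exact blockD_same t _ _ (by omega) (by omega) (by omega)
  have x1 : ∑ j ∈ range t, ∑ i ∈ range t, blockD t j (t + i) = 16 * t ^ 3 + 16 * t ^ 2 + 2 * t := by
    rw [← sum_quad]
    exact Finset.sum_congr rfl fun j hj => blockD_row t j (Finset.mem_range.1 hj)
  have x2 : ∑ j ∈ range t, ∑ i ∈ range t, blockD t (t + j) i = 16 * t ^ 3 + 16 * t ^ 2 + 2 * t := by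
    rw [← x1, Finset.sum_comm]
    simp only [blockD_symm t (t + _) _]
  rw [z1, z2, x1, x2]; ring

theorem gtD_total (t : ℕ) :
    ((∑ u : GtV t, ∑ v : GtV t, gtD t true u v : ℕ) : ℤ) -
      ((∑ u : GtV t, ∑ v : GtV t, gtD t false u v : ℕ) : ℤ) =
      2 * (16 * t ^ 3 + 16 * t ^ 2 + 2 * t) := by
  rw [← blockD_total]
  push_cast
  simp only [← Finset.sum_sub_distrib, Fintype.sum_sum_type, gtD, sub_self, Finset.sum_const_zero,
    add_zero, Finset.sum_add_distrib, Fintype.sum_prod_type, blockD]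
  simp only [add_sub_add_right_eq_sub, ← Finset.sum_sub_distrib]
  refine Finset.sum_congr rfl fun j _ => ?_
  rw [Finset.sum_comm]

/-- For every `t ≥ 1`, the graph `G_t − u₁` is connected and
`W(G_t − u₁) − W(G_t) = 16t³ − 8t² − 26t − 14`. -/
theorem gt_deleteVertex_u1_wiener (t : ℕ) (ht : 1 ≤ t) :
    (deleteVertex (GtGraph t) (gtu1 t ht)).Connected ∧
    (wiener (deleteVertex (GtGraph t) (gtu1 t ht)) : ℤ) - (wiener (GtGraph t) : ℤ)
      = 16 * (t : ℤ) ^ 3 - 8 * (t : ℤ) ^ 2 - 26 * (t : ℤ) - 14 := by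

  obtain ⟨hc, hd⟩ := gt_del_dist t ht
  refine ⟨hc, ?_⟩
  have e1 := even_sum_dist (deleteVertex (GtGraph t) (gtu1 t ht))
  have e2 := even_sum_dist (GtGraph t)
  unfold wiener
  simp only [hd, gt_dist t ht] at e1 e2 ⊢
  have h1 := sum_split (gtD t true) (gtu1 t ht) (gtD_self _ _ _) (gtD_symm _ _)
  have h2 := gtD_u1_sum t ht
  have h3 := gtD_total t
  rw [h1] at h3
  push_cast [Int.natCast_div] at *
  omega
end

section
/- Fix an integer r ≥ 1. Then W(G_{t,r} − u_1) − W(G_{t,r}) tends to infinity as t → ∞; that is, for every integer M there exists t_0 such that for all t ≥ t_0, the graph G_{t,r} − u_1 is connected and W(G_{t,r} − u_1) − W(G_{t,r}) ≥ M. -/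
open SimpleGraph Finset

/-! ### The graph `G_{t,r}`

`G_{t,r}` consists of `2^(r-1)` chains of `2t` diamonds, two complete binary trees
`B, B'` of depth `r − 1` whose leaves are identified with the endpoints of the chains,
and the 8-vertex graph `F` (two adjacent vertices `z₁, z₂`, a 4-cycle `p₁ p₂ p₃ p₄`
with opposite vertices `p₁, p₃` joined to `z₁, z₂`, and leaves `w₁, w₂` attached to
`p₂, p₄`), with the roots of `B, B'` joined to `z₁, z₂` respectively.

Encoding: a chain vertex is `Sum.inl (k, j, a)` where `k` is the chain, `j` the
diamond, and `a ∈ Fin 4` names `A_j, B_j, C_j, D_j` (with `A_j, B_j` of degree 2 in the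
diamond); the leaf `a_k` of `B` is identified with `A_0` of chain `k`, and the leaf
`a'_k` of `B'` with `B_{2t−1}` of chain `k`.  The *internal* (non-leaf) vertices of `B`
and `B'` are `Sum.inr (Sum.inl (Sum.inl i))` and `Sum.inr (Sum.inl (Sum.inr i))`,
`i : Fin (2^(r-1) − 1)`, representing the node with heap index `i + 1` of a complete
binary tree whose leaves have heap indices `2^(r-1), …, 2^r − 1` (leaf `a_k` having
heap index `k + 2^(r-1)`).  The vertices `z₁ z₂ p₁ p₂ p₃ p₄ w₁ w₂` of `F` are
`Sum.inr (Sum.inr m)` for `m = 0, …, 7`.  When `r = 1` the trees have no internal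
vertices and their roots are the leaves `a_1, a'_1` themselves, so `z₁, z₂` are joined
directly to the endpoints of the single chain. -/

/-- The vertex type of `G_{t,r}`. -/
abbrev GtrV (t r : ℕ) : Type :=
  (Fin (2 ^ (r - 1)) × Fin (2 * t) × Fin 4) ⊕
    ((Fin (2 ^ (r - 1) - 1) ⊕ Fin (2 ^ (r - 1) - 1)) ⊕ Fin 8)

/-- The base edge relation of `G_{t,r}` (symmetrized by `SimpleGraph.fromRel`). -/
def gtrRel (t r : ℕ) : GtrV t r → GtrV t r → Prop
  | Sum.inl (k, j, a), Sum.inl (k', j', b) =>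
      -- edges within chain `k`: diamond edges and connecting edges `B_j A_{j+1}`
      k = k' ∧ ((j = j' ∧ diamondRel a b) ∨
        ((j' : ℕ) = (j : ℕ) + 1 ∧ (a : ℕ) = 1 ∧ (b : ℕ) = 0))
  | Sum.inr (Sum.inl (Sum.inl i)), Sum.inr (Sum.inl (Sum.inl i')) =>
      -- internal edges of `B`: heap node `i+1` to its children `2(i+1)`, `2(i+1)+1`
      (i' : ℕ) + 1 = 2 * ((i : ℕ) + 1) ∨ (i' : ℕ) + 1 = 2 * ((i : ℕ) + 1) + 1
  | Sum.inr (Sum.inl (Sum.inr i)), Sum.inr (Sum.inl (Sum.inr i')) =>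
      -- internal edges of `B'`
      (i' : ℕ) + 1 = 2 * ((i : ℕ) + 1) ∨ (i' : ℕ) + 1 = 2 * ((i : ℕ) + 1) + 1
  | Sum.inr (Sum.inl (Sum.inl i)), Sum.inl (k, j, a) =>
      -- edges of `B` to its leaves: leaf `a_k = A_0` of chain `k` has heap index
      -- `k + 2^(r-1)`
      ((k : ℕ) + 2 ^ (r - 1) = 2 * ((i : ℕ) + 1) ∨
        (k : ℕ) + 2 ^ (r - 1) = 2 * ((i : ℕ) + 1) + 1) ∧ (j : ℕ) = 0 ∧ (a : ℕ) = 0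
  | Sum.inr (Sum.inl (Sum.inr i)), Sum.inl (k, j, a) =>
      -- edges of `B'` to its leaves: leaf `a'_k = B_{2t−1}` of chain `k`
      ((k : ℕ) + 2 ^ (r - 1) = 2 * ((i : ℕ) + 1) ∨
        (k : ℕ) + 2 ^ (r - 1) = 2 * ((i : ℕ) + 1) + 1) ∧
        (j : ℕ) = 2 * t - 1 ∧ (a : ℕ) = 1
  | Sum.inr (Sum.inr m), Sum.inr (Sum.inl (Sum.inl i)) =>
      -- the edge from `z₁` to the root of `B` (when the root is internal, i.e. `r ≥ 2`)
      (m : ℕ) = 0 ∧ (i : ℕ) = 0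
  | Sum.inr (Sum.inr m), Sum.inr (Sum.inl (Sum.inr i)) =>
      -- the edge from `z₂` to the root of `B'` (when `r ≥ 2`)
      (m : ℕ) = 1 ∧ (i : ℕ) = 0
  | Sum.inr (Sum.inr m), Sum.inl (k, j, a) =>
      -- when `r = 1`, the roots of `B, B'` are the leaves `a_1, a'_1`, so `z₁, z₂`
      -- are joined directly to the endpoints of the unique chain
      (2 ^ (r - 1) = 1 ∧ (k : ℕ) = 0) ∧
        (((m : ℕ) = 0 ∧ (j : ℕ) = 0 ∧ (a : ℕ) = 0) ∨
          ((m : ℕ) = 1 ∧ (j : ℕ) = 2 * t - 1 ∧ (a : ℕ) = 1))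
  | Sum.inr (Sum.inr m), Sum.inr (Sum.inr m') =>
      -- the edges of `F`: `z₁z₂, z₁p₁, z₂p₃, p₁p₂, p₂p₃, p₃p₄, p₄p₁, p₂w₁, p₄w₂`
      ((m : ℕ) = 0 ∧ (m' : ℕ) = 1) ∨ ((m : ℕ) = 0 ∧ (m' : ℕ) = 2) ∨
      ((m : ℕ) = 1 ∧ (m' : ℕ) = 4) ∨ ((m : ℕ) = 2 ∧ (m' : ℕ) = 3) ∨
      ((m : ℕ) = 3 ∧ (m' : ℕ) = 4) ∨ ((m : ℕ) = 4 ∧ (m' : ℕ) = 5) ∨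
      ((m : ℕ) = 5 ∧ (m' : ℕ) = 2) ∨ ((m : ℕ) = 3 ∧ (m' : ℕ) = 6) ∨
      ((m : ℕ) = 5 ∧ (m' : ℕ) = 7)
  | _, _ => False

/-- The graph `G_{t,r}`. -/
def GtrGraph (t r : ℕ) : SimpleGraph (GtrV t r) := SimpleGraph.fromRel (gtrRel t r)

/-- The central vertex `u₁ = B_{t−1}` of the first chain of `G_{t,r}`: an endpoint of
the edge joining the `t`-th and `(t+1)`-st diamond of that chain. -/
def gtru1 (t r : ℕ) (ht : 1 ≤ t) : GtrV t r :=
  Sum.inl (⟨0, by positivity⟩, ⟨t - 1, by omega⟩, 1)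

namespace GtrAux

lemma dist_le_card {V : Type*} [Fintype V] (G : SimpleGraph V) (u v : V) :
    G.dist u v ≤ Fintype.card V := by
  by_cases h : G.Reachable u v
  · obtain ⟨p, hp, hl⟩ := h.exists_path_of_dist
    rw [← hl]
    exact hp.length_lt.le
  · rw [SimpleGraph.dist_eq_zero_of_not_reachable h]
    exact Nat.zero_le _

lemma lipschitz_walk {V : Type*} (G : SimpleGraph V) (f : V → ℤ)
    (hf : ∀ a b, G.Adj a b → f b - f a ≤ 1) {u v : V} (p : G.Walk u v) :
    f v - f u ≤ p.length := by
  induction p with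
  | nil => simp
  | cons h p ih =>
    have := hf _ _ h
    rw [SimpleGraph.Walk.length_cons]
    push_cast
    linarith

lemma lipschitz_dist {V : Type*} (G : SimpleGraph V) (hG : G.Connected) (f : V → ℤ)
    (hf : ∀ a b, G.Adj a b → f b - f a ≤ 1) (u v : V) :
    f v - f u ≤ G.dist u v := by
  obtain ⟨p, hp⟩ := hG.exists_walk_length_eq_dist u v
  rw [← hp]
  exact lipschitz_walk G f hf p

lemma dist_le_delete {V : Type*} (G : SimpleGraph V) (v : V)
    (hG : (deleteVertex G v).Connected) (a b : {u : V // u ≠ v}) :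
    G.dist a b ≤ (deleteVertex G v).dist a b := by
  obtain ⟨p, hp⟩ := hG.exists_walk_length_eq_dist a b
  rw [← hp]
  let φ : deleteVertex G v →g G := ⟨fun x => x.1, fun {x y} h => h⟩
  have := SimpleGraph.dist_le (p.map φ)
  rw [SimpleGraph.Walk.length_map] at this
  exact this

lemma wiener_gain {V : Type*} [Fintype V] (G : SimpleGraph V) (v : V)
    (hG : (deleteVertex G v).Connected) (s T : ℕ)
    (x y : Fin s → {u : V // u ≠ v}) (hx : Function.Injective x) (hy : Function.Injective y)
    (h : ∀ i j, G.dist (x i) (y j) + T ≤ (deleteVertex G v).dist (x i) (y j)) :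
    (∑ a : V, ∑ b : V, G.dist a b) + s * s * T ≤
      (∑ a : {u : V // u ≠ v}, ∑ b : {u : V // u ≠ v}, (deleteVertex G v).dist a b)
        + 2 * (Fintype.card V * Fintype.card V) := by
  classical
  set H := deleteVertex G v with hH
  have split : ∀ f : V → ℕ, ∑ a, f a = f v + ∑ a : {u : V // u ≠ v}, f a := by
    intro f
    rw [Fintype.sum_eq_add_sum_subtype_ne f v]
    congr 1
    exact Finset.sum_congr (by ext; simp) (fun _ _ => rfl)
  have e1 : ∀ a, ∑ b, G.dist a b ≤ Fintype.card V * Fintype.card V := by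
    intro a
    calc ∑ b, G.dist a b ≤ ∑ b : V, Fintype.card V :=
          Finset.sum_le_sum (fun b _ => dist_le_card G a b)
      _ = _ := by simp
  have e2 : ∑ a : {u : V // u ≠ v}, G.dist a v ≤ Fintype.card V * Fintype.card V := by
    have h1 := split (fun a => G.dist a v)
    have h2 := e1 v
    simp only [SimpleGraph.dist_comm (u := v)] at h2
    omega
  have e3 : (∑ a : {u : V // u ≠ v}, ∑ b : {u : V // u ≠ v}, G.dist a b) + s * s * T ≤
      ∑ a : {u : V // u ≠ v}, ∑ b : {u : V // u ≠ v}, H.dist a b := by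
    rw [← Fintype.sum_prod_type', ← Fintype.sum_prod_type']
    let g : Fin s × Fin s → {u : V // u ≠ v} × {u : V // u ≠ v} := Prod.map x y
    have hg : Function.Injective g := hx.prodMap hy
    let I := Finset.univ.image g
    have hI : s * s * T = ∑ p : {u : V // u ≠ v} × {u : V // u ≠ v}, if p ∈ I then T else 0 := by
      rw [Finset.sum_ite_mem, Finset.univ_inter, Finset.sum_const, Finset.card_image_of_injective _ hg]
      simp
    rw [hI, ← Finset.sum_add_distrib]
    apply Finset.sum_le_sum
    intro p _
    split_ifs with hp
    · obtain ⟨q, _, rfl⟩ := Finset.mem_image.1 hp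
      exact h q.1 q.2
    · exact dist_le_delete G v hG p.1 p.2
  have e4 : ∑ a, ∑ b, G.dist a b = ∑ b, G.dist v b + (∑ a : {u : V // u ≠ v}, G.dist a v +
      ∑ a : {u : V // u ≠ v}, ∑ b : {u : V // u ≠ v}, G.dist a b) := by
    rw [split, ← Finset.sum_add_distrib]
    congr 1
    apply Finset.sum_congr rfl
    intro a _
    exact split _
  have := e1 v
  omega

variable {t r : ℕ}

/-- Chain vertex. -/
abbrev cv (k : Fin (2 ^ (r - 1))) (j : Fin (2 * t)) (a : Fin 4) : GtrV t r := Sum.inl (k, j, a)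
/-- Vertex of `B`. -/
abbrev bv (i : Fin (2 ^ (r - 1) - 1)) : GtrV t r := Sum.inr (Sum.inl (Sum.inl i))
/-- Vertex of the second tree. -/
abbrev bw (i : Fin (2 ^ (r - 1) - 1)) : GtrV t r := Sum.inr (Sum.inl (Sum.inr i))
/-- Vertex of `F`. -/
abbrev fv (m : Fin 8) : GtrV t r := Sum.inr (Sum.inr m)

lemma adj_of (u v : GtrV t r) (hne : u ≠ v) (h : gtrRel t r u v) : (GtrGraph t r).Adj u v := by
  rw [GtrGraph, SimpleGraph.fromRel_adj]
  exact ⟨hne, Or.inl h⟩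

lemma adj_diamond (k : Fin (2 ^ (r - 1))) (j : Fin (2 * t)) (a b : Fin 4)
    (h : diamondRel a b) : (GtrGraph t r).Adj (cv k j a) (cv k j b) := by
  apply adj_of
  · intro e
    simp only [Sum.inl.injEq, Prod.mk.injEq, true_and] at e
    subst e
    unfold diamondRel at h
    omega
  · exact ⟨rfl, Or.inl ⟨rfl, h⟩⟩

lemma adj_link (k : Fin (2 ^ (r - 1))) (j j' : Fin (2 * t)) (h : (j' : ℕ) = j + 1) :
    (GtrGraph t r).Adj (cv k j 1) (cv k j' 0) := by
  apply adj_of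
  · simp
  · exact ⟨rfl, Or.inr ⟨h, rfl, rfl⟩⟩

/-- Walk along a chain. -/
lemma chain_walk (k : Fin (2 ^ (r - 1))) (n : ℕ) : ∀ (j j' : Fin (2 * t)), (j' : ℕ) = j + n →
    ∃ p : (GtrGraph t r).Walk (cv k j 0) (cv k j' 0), p.length = 3 * n := by
  induction n with
  | zero =>
    intro j j' h
    have : j' = j := Fin.ext (by simpa using h)
    subst this
    exact ⟨SimpleGraph.Walk.nil, rfl⟩
  | succ n ih =>
    intro j j' h
    have hj : (j : ℕ) + 1 < 2 * t := by omega
    obtain ⟨p, hp⟩ := ih ⟨j + 1, hj⟩ j' (by simp only; omega)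
    refine ⟨SimpleGraph.Walk.cons (adj_diamond k j 0 2 (by simp [diamondRel]))
      (SimpleGraph.Walk.cons (adj_diamond k j 1 2 (by simp [diamondRel])).symm
        (SimpleGraph.Walk.cons (adj_link k j ⟨j + 1, hj⟩ rfl) p)), ?_⟩
    simp only [SimpleGraph.Walk.length_cons, hp]
    ring

/-- The potential function. -/
def pot (t r : ℕ) : GtrV t r → ℤ
  | Sum.inl (k, j, _) =>
      if (k : ℕ) = 0 then (if (j : ℕ) < t then -(j : ℤ) else 2 * t - 1 - j) else 0
  | Sum.inr _ => 0

lemma pot_rel (ht : 1 ≤ t) (u v : GtrV t r) (hu : u ≠ gtru1 t r ht) 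
    (h : gtrRel t r u v) : |pot t r u - pot t r v| ≤ 1 := by
  rcases u with ⟨k, j, a⟩ | ((i | i) | m) <;> rcases v with ⟨k', j', a'⟩ | ((i' | i') | m') <;>
    simp only [gtrRel, pot] at h ⊢ <;> try (simp; done)
  · obtain ⟨rfl, ⟨rfl, _⟩ | ⟨h1, h2, h3⟩⟩ := h
    · simp
    · have hne : ¬ ((k : ℕ) = 0 ∧ (j : ℕ) = t - 1) := by
        rintro ⟨e1, e2⟩
        apply hu
        simp only [gtru1]
        congr 1
        refine Prod.ext (Fin.ext e1) (Prod.ext (Fin.ext e2) (Fin.ext h2))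
      rw [abs_le]
      split_ifs <;> omega
  · obtain ⟨_, h1, _⟩ := h
    rw [abs_le]; split_ifs <;> omega
  · obtain ⟨_, h1, _⟩ := h
    rw [abs_le]; split_ifs <;> omega
  · obtain ⟨_, ⟨_, h1, _⟩ | ⟨_, h1, _⟩⟩ := h <;>
    · rw [abs_le]; split_ifs <;> omega

lemma pot_adj (ht : 1 ≤ t) (a b : {u : GtrV t r // u ≠ gtru1 t r ht})
    (h : (deleteVertex (GtrGraph t r) (gtru1 t r ht)).Adj a b) :
    pot t r b.1 - pot t r a.1 ≤ 1 := by
  have h' : (GtrGraph t r).Adj a.1 b.1 := h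
  rw [GtrGraph, SimpleGraph.fromRel_adj] at h'
  rcases h'.2 with h1 | h1
  · have := abs_le.1 (pot_rel ht _ _ a.2 h1)
    linarith
  · have := abs_le.1 (pot_rel ht _ _ b.2 h1)
    linarith

/-- Reachable from `z₁` after deletion. -/
def Rch (ht : 1 ≤ t) (v : GtrV t r) : Prop :=
  ∃ h : v ≠ gtru1 t r ht,
    (deleteVertex (GtrGraph t r) (gtru1 t r ht)).Reachable ⟨v, h⟩ ⟨fv 0, by simp [gtru1]⟩

lemma Rch.step {ht : 1 ≤ t} {v w : GtrV t r} (hv : Rch ht v) (h : (GtrGraph t r).Adj v w)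
    (hw : w ≠ gtru1 t r ht) : Rch ht w := by
  obtain ⟨h1, h2⟩ := hv
  refine ⟨hw, SimpleGraph.Reachable.trans (SimpleGraph.Adj.reachable ?_) h2⟩
  exact h.symm

lemma rch_f (ht : 1 ≤ t) (m : Fin 8) : Rch (r := r) ht (fv m) := by
  have ne : ∀ m : Fin 8, (fv m : GtrV t r) ≠ gtru1 t r ht := by intro m; simp [gtru1]
  have r0 : Rch (r := r) ht (fv 0) := ⟨ne 0, SimpleGraph.Reachable.refl _⟩
  have st : ∀ m m' : Fin 8, Rch (r := r) ht (fv m) → m ≠ m' →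
      (gtrRel t r (fv m) (fv m') ∨ gtrRel t r (fv m') (fv m)) → Rch (r := r) ht (fv m') := by
    intro m m' h hne h2
    refine h.step ?_ (ne _)
    rw [GtrGraph, SimpleGraph.fromRel_adj]
    exact ⟨by simpa using hne, h2⟩
  have r1 := st 0 1 r0 (by decide) (by simp [gtrRel])
  have r2 := st 0 2 r0 (by decide) (by simp [gtrRel])
  have r3 := st 2 3 r2 (by decide) (by simp [gtrRel])
  have r4 := st 3 4 r3 (by decide) (by simp [gtrRel])
  have r5 := st 4 5 r4 (by decide) (by simp [gtrRel])
  have r6 := st 3 6 r3 (by decide) (by simp [gtrRel])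
  have r7 := st 5 7 r5 (by decide) (by simp [gtrRel])
  fin_cases m <;> assumption

lemma rch_b (ht : 1 ≤ t) (n : ℕ) : ∀ (h : n < 2 ^ (r - 1) - 1),
    Rch (r := r) ht (bv ⟨n, h⟩) ∧ Rch (r := r) ht (bw ⟨n, h⟩) := by
  induction n using Nat.strong_induction_on with
  | _ n ih =>
    intro h
    rcases Nat.eq_zero_or_pos n with rfl | hn
    · constructor
      · exact (rch_f ht 0).step (adj_of _ _ (by simp) (by simp [gtrRel])) (by simp [gtru1])
      · exact (rch_f ht 1).step (adj_of _ _ (by simp) (by simp [gtrRel])) (by simp [gtru1])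
    · have hlt : (n + 1) / 2 - 1 < n := by omega
      obtain ⟨h1, h2⟩ := ih ((n + 1) / 2 - 1) hlt (by omega)
      constructor
      · refine h1.step (adj_of _ _ ?_ ?_) (by simp [gtru1])
        · simp; omega
        · simp only [gtrRel]; omega
      · refine h2.step (adj_of _ _ ?_ ?_) (by simp [gtru1])
        · simp; omega
        · simp only [gtrRel]; omega

lemma cv_ne (ht : 1 ≤ t) (k : Fin (2 ^ (r - 1))) (j : Fin (2 * t)) (a : Fin 4)
    (h : ¬ ((k : ℕ) = 0 ∧ (j : ℕ) = t - 1 ∧ a = 1)) : (cv k j a : GtrV t r) ≠ gtru1 t r ht := by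
  intro e
  simp only [gtru1, Sum.inl.injEq, Prod.mk.injEq] at e
  exact h ⟨by rw [e.1], by rw [e.2.1], e.2.2⟩

lemma rch_ends (ht : 1 ≤ t) (k : Fin (2 ^ (r - 1))) :
    Rch ht (cv k ⟨0, by omega⟩ 0) ∧ Rch ht (cv k ⟨2 * t - 1, by omega⟩ 1) := by
  have n1 : (cv k ⟨0, by omega⟩ 0 : GtrV t r) ≠ gtru1 t r ht := cv_ne ht _ _ _ (by simp)
  have n2 : (cv k ⟨2 * t - 1, by omega⟩ 1 : GtrV t r) ≠ gtru1 t r ht :=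
    cv_ne ht _ _ _ (by simp only; omega)
  have hk := k.2
  by_cases h1 : 2 ^ (r - 1) = 1
  · have hk0 : (k : ℕ) = 0 := by omega
    constructor
    · refine (rch_f ht 0).step (adj_of _ _ (by simp) ?_) n1
      exact ⟨⟨h1, hk0⟩, Or.inl ⟨rfl, rfl, rfl⟩⟩
    · refine (rch_f ht 1).step (adj_of _ _ (by simp) ?_) n2
      exact ⟨⟨h1, hk0⟩, Or.inr ⟨rfl, rfl, rfl⟩⟩
  · have hpos : 0 < 2 ^ (r - 1) := by positivity
    obtain ⟨a1, a2⟩ := rch_b (r := r) ht ((k + 2 ^ (r - 1)) / 2 - 1) (by omega)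
    constructor
    · refine a1.step (adj_of _ _ (by simp) ?_) n1
      refine ⟨?_, rfl, rfl⟩
      simp only; omega
    · refine a2.step (adj_of _ _ (by simp) ?_) n2
      refine ⟨?_, rfl, rfl⟩
      simp only; omega

lemma diamond_fwd (ht : 1 ≤ t) (k : Fin (2 ^ (r - 1))) (j : Fin (2 * t))
    (h : Rch ht (cv k j 0)) (a : Fin 4) (ha : (cv k j a : GtrV t r) ≠ gtru1 t r ht) :
    Rch ht (cv k j a) := by
  have c : Rch ht (cv k j 2) := h.step (adj_diamond k j 0 2 (by simp [diamondRel]))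
    (cv_ne ht _ _ _ (by simp))
  have d : Rch ht (cv k j 3) := h.step (adj_diamond k j 0 3 (by simp [diamondRel]))
    (cv_ne ht _ _ _ (by simp))
  fin_cases a
  · exact h
  · exact c.step (adj_diamond k j 1 2 (by simp [diamondRel])).symm ha
  · exact c
  · exact d

lemma diamond_bwd (ht : 1 ≤ t) (k : Fin (2 ^ (r - 1))) (j : Fin (2 * t))
    (h : Rch ht (cv k j 1)) (a : Fin 4) :
    Rch ht (cv k j a) := by
  have c : Rch ht (cv k j 2) := h.step (adj_diamond k j 1 2 (by simp [diamondRel]))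
    (cv_ne ht _ _ _ (by simp))
  have d : Rch ht (cv k j 3) := h.step (adj_diamond k j 1 3 (by simp [diamondRel]))
    (cv_ne ht _ _ _ (by simp))
  fin_cases a
  · exact c.step (adj_diamond k j 0 2 (by simp [diamondRel])).symm (cv_ne ht _ _ _ (by simp))
  · exact h
  · exact c
  · exact d

lemma chain_fwd (ht : 1 ≤ t) (k : Fin (2 ^ (r - 1))) (n : ℕ) : ∀ (hn : n < 2 * t),
    ((k : ℕ) = 0 → n < t) → Rch ht (cv k ⟨n, hn⟩ 0) := by
  induction n with
  | zero => intro hn _; exact (rch_ends ht k).1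
  | succ n ih =>
    intro hn hk
    have h0 := ih (by omega) (by omega)
    have h1 := diamond_fwd ht k _ h0 1 (cv_ne ht _ _ _ (by simp only; omega))
    exact h1.step (adj_link k _ _ rfl) (cv_ne ht _ _ _ (by simp))

lemma chain_bwd (ht : 1 ≤ t) (k : Fin (2 ^ (r - 1))) (n : ℕ) : ∀ (j : Fin (2 * t)),
    (j : ℕ) + n = 2 * t - 1 → t ≤ j → Rch ht (cv k j 1) := by
  induction n with
  | zero =>
    intro j hj _
    have : j = ⟨2 * t - 1, by omega⟩ := Fin.ext (by simpa using hj)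
    rw [this]
    exact (rch_ends ht k).2
  | succ n ih =>
    intro j hj hk
    have h0 := ih ⟨j + 1, by omega⟩ (by simp only; omega) (by simp only; omega)
    have h1 := diamond_bwd ht k _ h0 0
    exact h1.step (adj_link k _ _ rfl).symm (cv_ne ht _ _ _ (by omega))

lemma rch_all (ht : 1 ≤ t) (v : GtrV t r) (hv : v ≠ gtru1 t r ht) : Rch ht v := by
  rcases v with ⟨k, j, a⟩ | ((i | i) | m)
  · by_cases h : (k : ℕ) = 0 ∧ t ≤ (j : ℕ)
    · exact diamond_bwd ht k j (chain_bwd ht k (2 * t - 1 - j) j (by omega) h.2) a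
    · exact diamond_fwd ht k j (chain_fwd ht k j j.2 (by omega)) a hv
  · exact (rch_b ht i i.2).1
  · exact (rch_b ht i i.2).2
  · exact rch_f ht m

lemma connected (ht : 1 ≤ t) : (deleteVertex (GtrGraph t r) (gtru1 t r ht)).Connected := by
  rw [SimpleGraph.connected_iff_exists_forall_reachable]
  refine ⟨⟨fv 0, by simp [gtru1]⟩, fun w => ?_⟩
  obtain ⟨_, h⟩ := rch_all ht w.1 w.2
  exact h.symm

lemma main_gain (ht : 1 ≤ t) (s : ℕ) (hs : 8 * s ≤ t) :
    (∑ a : GtrV t r, ∑ b : GtrV t r, (GtrGraph t r).dist a b) + s * s * t ≤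
      (∑ a : {u : GtrV t r // u ≠ gtru1 t r ht}, ∑ b : {u : GtrV t r // u ≠ gtru1 t r ht},
        (deleteVertex (GtrGraph t r) (gtru1 t r ht)).dist a b)
        + 2 * (Fintype.card (GtrV t r) * Fintype.card (GtrV t r)) := by
  let k : Fin (2 ^ (r - 1)) := ⟨0, by positivity⟩
  have hb : ∀ i : Fin s, (i : ℕ) < s := fun i => i.2
  refine wiener_gain _ _ (connected ht) s t
    (fun i => ⟨cv k ⟨t - 1 - i, by omega⟩ 0, cv_ne ht _ _ _ (by simp)⟩)
    (fun i => ⟨cv k ⟨t + i, by have := hb i; omega⟩ 0, cv_ne ht _ _ _ (by simp)⟩) ?_ ?_ ?_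
  · intro i j h
    have := hb i
    have := hb j
    simp only [Subtype.mk.injEq, Sum.inl.injEq, Prod.mk.injEq, Fin.mk.injEq] at h
    apply Fin.ext
    omega
  · intro i j h
    simp only [Subtype.mk.injEq, Sum.inl.injEq, Prod.mk.injEq, Fin.mk.injEq] at h
    apply Fin.ext
    omega
  · intro i j
    have hi := hb i
    have hj := hb j
    obtain ⟨p, hp⟩ := chain_walk (t := t) (r := r) k (i + j + 1) ⟨t - 1 - i, by omega⟩
      ⟨t + j, by omega⟩ (by simp only; omega)
    have h1 := SimpleGraph.dist_le p
    have h2 := lipschitz_dist _ (connected (r := r) ht) (fun v => pot t r v.1) (pot_adj ht)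
      ⟨cv k ⟨t - 1 - i, by omega⟩ 0, cv_ne ht _ _ _ (by simp)⟩
      ⟨cv k ⟨t + j, by omega⟩ 0, cv_ne ht _ _ _ (by simp)⟩
    have c1 : t - 1 - (i : ℕ) < t := by omega
    have c2 : ¬ (t + (j : ℕ) < t) := by omega
    have hk : (k : ℕ) = 0 := rfl
    simp only [pot, hk, if_true, c1, c2, if_false] at h2
    simp only
    omega

end GtrAux

/-- Fix `r ≥ 1`.  Then `W(G_{t,r} − u₁) − W(G_{t,r}) → ∞` as
`t → ∞`: for every integer `M` there is `t₀ ≥ 1` such that for all `t ≥ t₀` the graph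
`G_{t,r} − u₁` is connected and `W(G_{t,r} − u₁) − W(G_{t,r}) ≥ M`. -/
theorem gtr_wiener_difference_tendsto_atTop (r : ℕ) (hr : 1 ≤ r) (M : ℤ) :
    ∃ t₀ : ℕ, 1 ≤ t₀ ∧ ∀ t : ℕ, t₀ ≤ t → ∀ ht : 1 ≤ t,
      (deleteVertex (GtrGraph t r) (gtru1 t r ht)).Connected ∧
      M ≤ (wiener (deleteVertex (GtrGraph t r) (gtru1 t r ht)) : ℤ)
            - (wiener (GtrGraph t r) : ℤ) := by
  set N := 2 ^ (r - 1) with hN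
  set K := 8 * N + 2 * N + 8 with hK
  refine ⟨8 + 2 * (225 * K ^ 2) + 2 * M.natAbs + 2, by omega, fun t h0 ht => ?_⟩
  refine ⟨GtrAux.connected ht, ?_⟩
  have hg := GtrAux.main_gain (r := r) ht (t / 8) (by omega)
  have hc : Fintype.card (GtrV t r) ≤ K * t := by
    simp only [GtrV, Fintype.card_sum, Fintype.card_prod, Fintype.card_fin]
    rw [← hN, hK]
    have : N ≤ N * t := Nat.le_mul_of_pos_right _ ht
    have e : (8 * N + 2 * N + 8) * t = 8 * (N * t) + 2 * (N * t) + 8 * t := by ring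
    have e' : N * (2 * t * 4) = 8 * (N * t) := by ring
    rw [e, e']
    omega
  set s := t / 8 with hs
  have hs1 : 1 ≤ s := by omega
  have hts : t ≤ 15 * s := by omega
  have hcs : Fintype.card (GtrV t r) ≤ K * (15 * s) := hc.trans (Nat.mul_le_mul_left _ hts)
  have hcc : Fintype.card (GtrV t r) * Fintype.card (GtrV t r) ≤ (225 * K ^ 2) * (s * s) := by
    calc _ ≤ (K * (15 * s)) * (K * (15 * s)) := Nat.mul_le_mul hcs hcs
      _ = _ := by ring
  have hss : 1 ≤ s * s := Nat.mul_pos hs1 hs1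
  have hfin : 2 * ((225 * K ^ 2) * (s * s)) + (2 * M.natAbs + 2) ≤ s * s * t := by
    calc _ ≤ 2 * ((225 * K ^ 2) * (s * s)) + (s * s) * (2 * M.natAbs + 2) := by
          gcongr
          exact Nat.le_mul_of_pos_left _ hss
      _ = s * s * (2 * (225 * K ^ 2) + 2 * M.natAbs + 2) := by ring
      _ ≤ s * s * t := Nat.mul_le_mul_left _ (by omega)
  unfold wiener
  have hM : M ≤ M.natAbs := Int.le_natAbs
  omega
end
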